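/- For every integer m ≥ 0 and every real t > 0, the Markov chain (P_n)_{n≥0} started from P₀ = p satisfies lim_{p→∞} ℙ_p(T_m > t·p) = (1 + μ·t)^{−4/3}, where T_m = inf{n ≥ 0 : P_n ≤ m} and μ = 1/(4√7). -/

import Mathlib

noncomputable def nuc : ℝ := 1 + 2 * Real.sqrt 7

noncomputable def tc : ℝ := Real.sqrt 10 / (8 * (7 + Real.sqrt 7) ^ ((3:ℝ)/2))

noncomputable def uc : ℝ := (6/5) * (7 + Real.sqrt 7) * tc

/-- The rational parametrization `û` of the `u`-variable. -/
noncomputable def uhat (H : ℂ) : ℂ :=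
  ((uc : ℂ) / 3) * H * (10 - 12 * H + 6 * H ^ 2 - H ^ 3)

/-- The rational parametrization `Ẑ₀`. -/
noncomputable def Z0hat (H : ℂ) : ℂ :=
  (1/10) * (1 - (1 - (Real.sqrt 7 : ℂ)) * H + 3 * H ^ 2 - H ^ 3)
    * (10 - 12 * H + 6 * H ^ 2 - H ^ 3)

/-- The rational parametrization `Ẑ₁`. -/
noncomputable def Z1hat (H : ℂ) : ℂ :=
  (3 / (10 * (uc : ℂ))) *
    ((Real.sqrt 7 : ℂ) - 1 + H - 3 * (4 - 3 * H + H ^ 2) / (10 - 12 * H + 6 * H ^ 2 - H ^ 3))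

/-- The rational parametrization `Â`. -/
noncomputable def Ahat (H : ℂ) : ℂ :=
  (1/10) * ((((3:ℝ)/2) ^ ((7:ℝ)/3) : ℝ) : ℂ) * (9 - 8 * H + 3 * H ^ 2) / (3 - 3 * H + H ^ 2) ^ 2

/-!
Away from the states `0` and `1`, the chain is the Doob transform, by `h p = a_p * u_c ^ p`, of a
random walk on `ℤ` with steps at most `2`. The row, column and moment sums of `z` at `u_c` follow
from the limits `u → 0` and `v → 0` of the functional equation; they show that the steps of the walk
form a probability distribution with mean `μ = 1 / (4√7)`.

The sequence `h` and its increments vary regularly, with `h p ~ b * p ^ (-4/3)`. This comes from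
Cauchy's formula: `û - u_c` has a triple zero at `H = 1`, which becomes a double one in the
coordinate `ζ` with `H = 1 - (1 - ζ) ^ (2/3)`, and on the circle `|ζ| = 1` the modulus of `û` is
smallest at `ζ = 1`, so Laplace's method applies.

Hence, as long as the chain stays above `ε * p`, its survival probability up to time `t * p` is the
expectation of `h (p + S_n) / h p` over the walks `S` that do the same, and the law of large numbers
`S_n ≈ μ * n` yields the limit `(1 + μ * t) ^ (-4/3)`. What happens below `ε * p` is negligible: the
transformed walk has negative drift `-μ / 3`, so a linear Lyapunov function shows that the chain
dies out within `O (ε * p)` further steps.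
-/

open Filter MeasureTheory ProbabilityTheory Topology
open scoped ComplexConjugate ENNReal Real

section KilledSemigroup

variable {E : Type*} {κ : E → E → ℝ≥0∞} {S T : Set E} {f : E → ℝ≥0∞} {n : ℕ} {p : E}

/-- The semigroup of a chain with transition matrix `κ` killed on leaving `S`: the expectation of
`f` at time `n` on the event that the chain started from `p` stays in `S` up to time `n`. -/
noncomputable def killedSemigroup (κ : E → E → ℝ≥0∞) (S : Set E) (f : E → ℝ≥0∞) : ℕ → E → ℝ≥0∞
  | 0 => S.indicator f
  | n + 1 => S.indicator fun p => ∑' q, κ p q * killedSemigroup κ S f n q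

/-- The probability that the chain with transition matrix `κ` started from `p` stays in `S` up to
time `n`. -/
noncomputable def survival (κ : E → E → ℝ≥0∞) (S : Set E) (n : ℕ) (p : E) : ℝ≥0∞ :=
  killedSemigroup κ S 1 n p

lemma killedSemigroup_of_notMem (hp : p ∉ S) : killedSemigroup κ S f n p = 0 := by
  cases n <;> exact Set.indicator_of_notMem hp _

lemma killedSemigroup_succ_of_mem (hp : p ∈ S) :
    killedSemigroup κ S f (n + 1) p = ∑' q, κ p q * killedSemigroup κ S f n q :=
  Set.indicator_of_mem hp _

lemma survival_of_notMem (hp : p ∉ S) : survival κ S n p = 0 := killedSemigroup_of_notMem hp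

lemma survival_zero_of_mem (hp : p ∈ S) : survival κ S 0 p = 1 := Set.indicator_of_mem hp _

lemma survival_succ_of_mem (hp : p ∈ S) :
    survival κ S (n + 1) p = ∑' q, κ p q * survival κ S n q :=
  killedSemigroup_succ_of_mem hp

/-- Doob's `h`-transform. -/
lemma survival_mul_eq_killedSemigroup {κ₂ : E → E → ℝ≥0∞} {h : E → ℝ≥0∞}
    (hh : ∀ p ∈ S, ∀ q ∈ S, κ p q * h p = κ₂ p q * h q) (n : ℕ) (p : E) :
    survival κ S n p * h p = killedSemigroup κ₂ S h n p := by
  induction n generalizing p with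
  | zero => by_cases hp : p ∈ S <;> simp [survival, killedSemigroup, hp]
  | succ n ih =>
    by_cases hp : p ∈ S
    · rw [survival_succ_of_mem hp, killedSemigroup_succ_of_mem hp, ← ENNReal.tsum_mul_right]
      refine tsum_congr fun q => ?_
      by_cases hq : q ∈ S
      · rw [mul_right_comm, hh p hp q hq, mul_right_comm, mul_assoc, ih]
      · simp only [survival_of_notMem hq, killedSemigroup_of_notMem hq, mul_zero, zero_mul]
    · rw [survival_of_notMem hp, killedSemigroup_of_notMem hp, zero_mul]

lemma killedSemigroup_comp_of_injective {F : Type*} {e : F → E} (he : e.Injective)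
    (hS : S ⊆ Set.range e) (n : ℕ) (p : F) :
    killedSemigroup (fun x y => κ (e x) (e y)) (e ⁻¹' S) (f ∘ e) n p
      = killedSemigroup κ S f n (e p) := by
  induction n generalizing p with
  | zero => rfl
  | succ n ih =>
    by_cases hp : e p ∈ S
    · rw [killedSemigroup_succ_of_mem hp, killedSemigroup_succ_of_mem (Set.mem_preimage.2 hp),
        ← he.tsum_eq]
      · simp only [ih]
      · refine Function.support_subset_iff'.2 fun q hq => ?_
        rw [killedSemigroup_of_notMem fun h => hq (hS h), mul_zero]
    · rw [killedSemigroup_of_notMem hp, killedSemigroup_of_notMem (by simpa using hp)]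

lemma survival_mono_set (h : S ⊆ T) (n : ℕ) (p : E) : survival κ S n p ≤ survival κ T n p := by
  induction n generalizing p with
  | zero => exact Set.indicator_le_indicator_of_subset h (fun _ => zero_le) p
  | succ n ih =>
    by_cases hp : p ∈ S
    · rw [survival_succ_of_mem hp, survival_succ_of_mem (h hp)]
      gcongr
      exact ih _
    · rw [survival_of_notMem hp]
      exact zero_le

lemma sum_survival_le_of_lyapunov {V : E → ℝ≥0∞} (hV : ∀ p ∈ S, ∑' q, κ p q * V q + 1 ≤ V p)
    (k : ℕ) (p : E) : ∑ i ∈ Finset.range k, survival κ S i p ≤ V p := by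
  induction k generalizing p with
  | zero => simp
  | succ k ih =>
    by_cases hp : p ∈ S
    · rw [Finset.sum_range_succ', survival_zero_of_mem hp]
      refine le_trans ?_ (hV p hp)
      simp only [survival_succ_of_mem hp]
      rw [← Summable.tsum_finsetSum fun i _ => ENNReal.summable]
      gcongr with q
      rw [← Finset.mul_sum]
      gcongr
      exact ih q
    · simp only [survival_of_notMem hp, Finset.sum_const_zero, zero_le]

section Stochastic

variable (hκ : ∀ p, ∑' q, κ p q = 1)
include hκ

lemma survival_le_one (S : Set E) (n : ℕ) (p : E) : survival κ S n p ≤ 1 := by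
  by_cases hp : p ∈ S
  · induction n generalizing p with
    | zero => rw [survival_zero_of_mem hp]
    | succ n ih =>
      rw [survival_succ_of_mem hp, ← hκ p]
      refine ENNReal.tsum_le_tsum fun q => mul_le_of_le_one_right' ?_
      by_cases hq : q ∈ S
      · exact ih q hq
      · simp only [survival_of_notMem hq, zero_le]
  · simp only [survival_of_notMem hp, zero_le]

lemma survival_ne_top (S : Set E) (n : ℕ) (p : E) : survival κ S n p ≠ ⊤ :=
  ne_top_of_le_ne_top ENNReal.one_ne_top (survival_le_one hκ S n p)

lemma antitone_survival (S : Set E) (p : E) : Antitone fun n => survival κ S n p := by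
  refine antitone_nat_of_succ_le fun n => ?_
  by_cases hp : p ∈ S
  · induction n generalizing p with
    | zero => rw [survival_zero_of_mem hp]; exact survival_le_one hκ S _ p
    | succ n ih =>
      rw [survival_succ_of_mem hp, survival_succ_of_mem hp]
      refine ENNReal.tsum_le_tsum fun q => mul_le_mul_right ?_ _
      by_cases hq : q ∈ S
      · exact ih q hq
      · simp only [survival_of_notMem hq, le_refl]
  · simp only [survival_of_notMem hp, le_refl]

lemma survival_add_le {k : ℕ} {c : ℝ≥0∞} (hST : S ⊆ T) (hc : ∀ q ∉ S, survival κ T k q ≤ c)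
    (n : ℕ) (p : E) : survival κ T (n + k) p ≤ survival κ S n p + c := by
  induction n generalizing p with
  | zero =>
    by_cases hp : p ∈ S
    · rw [survival_zero_of_mem hp]
      exact (survival_le_one hκ T _ p).trans le_self_add
    · rw [zero_add]
      exact (hc p hp).trans le_add_self
  | succ n ih =>
    by_cases hp : p ∈ S
    · rw [Nat.add_right_comm, survival_succ_of_mem (hST hp), survival_succ_of_mem hp]
      calc ∑' q, κ p q * survival κ T (n + k) q
          ≤ ∑' q, (κ p q * survival κ S n q + κ p q * c) :=
            ENNReal.tsum_le_tsum fun q => by rw [← mul_add]; gcongr; exact ih q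
        _ = ∑' q, κ p q * survival κ S n q + c := by
            rw [ENNReal.tsum_add, ENNReal.tsum_mul_right, hκ, one_mul]
    · exact ((antitone_survival hκ T p (by omega : k ≤ n + 1 + k)).trans (hc p hp)).trans
        le_add_self

lemma survival_succ_lt_one {q : E} (hpq : κ p q ≠ 0) (hq : survival κ S n q < 1) :
    survival κ S (n + 1) p < 1 := by
  by_cases hp : p ∈ S
  · have hκ_ne_top : κ p q ≠ ⊤ := ENNReal.ne_top_of_tsum_ne_top (by simp [hκ p]) q
    have hle : ∀ j, κ p j * survival κ S n j ≤ κ p j := fun j =>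
      mul_le_of_le_one_right' (survival_le_one hκ S n j)
    rw [survival_succ_of_mem hp, ← hκ p]
    refine ENNReal.tsum_lt_tsum
      (ne_top_of_le_ne_top (by simp [hκ p]) (ENNReal.tsum_le_tsum hle)) hle (i := q) ?_
    simpa only [mul_one] using ENNReal.mul_lt_mul_right hpq hκ_ne_top hq
  · simp only [survival_of_notMem hp, zero_lt_one]

lemma mul_survival_le_of_lyapunov {V : E → ℝ≥0∞} (hV : ∀ p ∈ S, ∑' q, κ p q * V q + 1 ≤ V p)
    (k : ℕ) (p : E) : k * survival κ S k p ≤ V p :=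
  calc (k : ℝ≥0∞) * survival κ S k p = ∑ _i ∈ Finset.range k, survival κ S k p := by simp
    _ ≤ ∑ i ∈ Finset.range k, survival κ S i p := Finset.sum_le_sum fun _ hi =>
        antitone_survival hκ S p (Finset.mem_range.1 hi).le
    _ ≤ V p := sum_survival_le_of_lyapunov hV k p

end Stochastic

end KilledSemigroup

section ChainLaw

variable {E : Type*} [DecidableEq E]

/-- `P` is the law of the Markov chain with transition matrix `κ` started from `p`, described by its
cylinder probabilities. -/
def IsChainLaw [MeasurableSpace E] (κ : E → E → ℝ≥0∞) (p : E) (P : Measure (ℕ → E)) : Prop :=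
  ∀ (n : ℕ) (s : ℕ → E), P {ω | ∀ i ≤ n, ω i = s i}
    = if s 0 = p then ∏ i ∈ Finset.range n, κ (s i) (s (i + 1)) else 0

open Classical in
lemma tsum_path_eq_killedSemigroup (κ : E → E → ℝ≥0∞) (S : Set E) (f : E → ℝ≥0∞) (n : ℕ) (p : E) :
    ∑' s : Fin (n + 1) → E, (if ∀ i, s i ∈ S then f (s (Fin.last n)) else 0)
        * (if s 0 = p then ∏ i : Fin n, κ (s i.castSucc) (s i.succ) else 0)
      = killedSemigroup κ S f n p := by
  induction n generalizing p with
  | zero =>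
    rw [← (Equiv.funUnique (Fin 1) E).symm.tsum_eq, tsum_eq_single p fun q hq => by simp [hq]]
    simp [killedSemigroup, Set.indicator_apply]
  | succ n ih =>
    by_cases hp : p ∈ S
    · rw [killedSemigroup_succ_of_mem hp, ← (Fin.consEquiv fun _ => E).tsum_eq, ENNReal.tsum_prod',
        tsum_eq_single p fun q hq => by simp [hq]]
      simp_rw [← ih, ← ENNReal.tsum_mul_left]
      rw [ENNReal.tsum_comm]
      refine tsum_congr fun s => ?_
      rw [tsum_eq_single (s 0) fun q hq => by simp [hq.symm]]
      simp only [Fin.consEquiv_apply, Fin.forall_fin_succ (n := n + 1), Fin.cons_zero,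
        Fin.cons_succ, hp, true_and, ← Fin.succ_last, Fin.prod_univ_succ (n := n),
        Fin.castSucc_zero, ← Fin.succ_castSucc, if_true]
      ring
    · rw [killedSemigroup_of_notMem hp, ENNReal.tsum_eq_zero]
      intro s
      by_cases hs : s 0 = p
      · rw [if_neg fun h => hp (hs ▸ h 0), zero_mul]
      · rw [if_neg hs, mul_zero]

variable [MeasurableSpace E] [MeasurableSingletonClass E]
  {κ : E → E → ℝ≥0∞} {p : E} {P : Measure (ℕ → E)}

namespace IsChainLaw

lemma map_path_singleton (h : IsChainLaw κ p P) (n : ℕ) (s : Fin (n + 1) → E) :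
    P.map (fun (ω : ℕ → E) (i : Fin (n + 1)) => ω i) {s}
      = if s 0 = p then ∏ i : Fin n, κ (s i.castSucc) (s i.succ) else 0 := by
  have hpath : (fun (ω : ℕ → E) (i : Fin (n + 1)) => ω i) ⁻¹' {s}
      = {ω | ∀ i ≤ n, ω i = s (Fin.ofNat (n + 1) i)} := by
    ext ω
    simp only [Set.mem_preimage, Set.mem_singleton_iff, funext_iff, Fin.forall_iff,
      Set.mem_ofPred_eq, Nat.lt_succ_iff]
    refine forall₂_congr fun i hi => ?_
    rw [show Fin.ofNat (n + 1) i = ⟨i, Nat.lt_succ_of_le hi⟩ from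
      Fin.ext (Nat.mod_eq_of_lt (Nat.lt_succ_of_le hi))]
  rw [Measure.map_apply (by fun_prop) (measurableSet_singleton s), hpath,
    h n fun i => s (Fin.ofNat (n + 1) i), Finset.prod_range]
  refine if_congr Iff.rfl (Finset.prod_congr rfl fun i _ => ?_) rfl
  congr 2 <;> ext <;> simp [Nat.mod_eq_of_lt]

variable [Countable E]

open Classical in
lemma lintegral_eq_killedSemigroup (h : IsChainLaw κ p P) (S : Set E) (f : E → ℝ≥0∞) (n : ℕ) :
    ∫⁻ ω, (if ∀ i ≤ n, ω i ∈ S then f (ω n) else 0) ∂P = killedSemigroup κ S f n p := by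
  let F : (Fin (n + 1) → E) → ℝ≥0∞ := fun s => if ∀ i, s i ∈ S then f (s (Fin.last n)) else 0
  calc ∫⁻ ω, (if ∀ i ≤ n, ω i ∈ S then f (ω n) else 0) ∂P
      = ∫⁻ ω, F (fun i => ω i) ∂P := by
        simp only [F, Fin.forall_iff, Nat.lt_succ_iff, Fin.val_last]
    _ = ∫⁻ s, F s ∂(P.map fun (ω : ℕ → E) (i : Fin (n + 1)) => ω i) :=
        (lintegral_map (measurable_of_countable F) (by fun_prop)).symm
    _ = killedSemigroup κ S f n p := by
        rw [lintegral_countable', ← tsum_path_eq_killedSemigroup]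
        simp only [h.map_path_singleton, F]

lemma measure_forall_mem_eq_survival (h : IsChainLaw κ p P) (S : Set E) (n : ℕ) :
    P {ω | ∀ i ≤ n, ω i ∈ S} = survival κ S n p := by
  classical
  have hS : MeasurableSet {ω : ℕ → E | ∀ i ≤ n, ω i ∈ S} := by
    simp only [Set.ofPred_forall]
    exact .iInter fun i => .iInter fun _ =>
      measurableSet_preimage (measurable_pi_apply i) S.to_countable.measurableSet
  rw [survival, ← h.lintegral_eq_killedSemigroup, ← lintegral_indicator_one hS]
  exact lintegral_congr fun ω => Set.indicator_apply _ _ _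

lemma tsum_eq_one (h : IsChainLaw κ p P) : ∑' q, κ p q = 1 := by
  have huniv (n : ℕ) : P Set.univ = survival κ Set.univ n p := by
    simpa using h.measure_forall_mem_eq_survival Set.univ n
  have hrow := (huniv 1).symm.trans (huniv 0)
  rw [survival_succ_of_mem (Set.mem_univ p), survival_zero_of_mem (Set.mem_univ p)] at hrow
  simpa only [survival_zero_of_mem (Set.mem_univ _), mul_one] using hrow

end IsChainLaw

end ChainLaw

section RandomWalk

variable {G : Type*} [AddCommGroup G]

/-- The random walk with steps `ω`, started from `0`. -/
def walk (ω : ℕ → G) (n : ℕ) : G := ∑ i ∈ Finset.range n, ω i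

lemma walk_zero (ω : ℕ → G) : walk ω 0 = 0 := Finset.sum_range_zero _

lemma walk_succ (ω : ℕ → G) (n : ℕ) : walk ω (n + 1) = walk ω n + ω n := Finset.sum_range_succ _ _

lemma forall_add_walk_eq_iff {p : G} {s : ℕ → G} (hs : s 0 = p) (ω : ℕ → G) (n : ℕ) :
    (∀ i ≤ n, p + walk ω i = s i) ↔ ∀ i < n, ω i = s (i + 1) - s i := by
  constructor
  · intro h i hi
    rw [← h (i + 1) hi, ← h i hi.le, walk_succ]
    abel
  · intro h i hi
    induction i with
    | zero => rw [walk_zero, add_zero, hs]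
    | succ i ih => rw [walk_succ, ← add_assoc, ih (by omega), h i hi, add_sub_cancel]

variable [MeasurableSpace G] [MeasurableAdd₂ G]

@[fun_prop]
lemma measurable_walk (n : ℕ) : Measurable fun ω : ℕ → G => walk ω n := by
  unfold walk; fun_prop

lemma isChainLaw_map_add_walk [DecidableEq G] [MeasurableSingletonClass G] (η : Measure G)
    [IsProbabilityMeasure η] (p : G) :
    IsChainLaw (fun x y => η {y - x}) p
      ((Measure.infinitePi fun _ : ℕ => η).map fun ω n => p + walk ω n) := by
  intro n s
  have hmeas : MeasurableSet {ω : ℕ → G | ∀ i ≤ n, ω i = s i} := by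
    simp only [Set.ofPred_forall]
    exact .iInter fun i => .iInter fun _ =>
      measurableSet_preimage (measurable_pi_apply (X := fun _ => G) i)
        (measurableSet_singleton (s i))
  rw [Measure.map_apply (by fun_prop) hmeas]
  simp only [Set.preimage_ofPred_eq]
  split_ifs with hs
  · have hbox : {ω : ℕ → G | ∀ i ≤ n, p + walk ω i = s i}
        = Set.pi (Finset.range n) fun i => {s (i + 1) - s i} := by
      ext ω
      simp only [Set.mem_ofPred_eq, forall_add_walk_eq_iff hs, Set.mem_pi, Finset.mem_coe,
        Finset.mem_range, Set.mem_singleton_iff]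
    rw [hbox, Measure.infinitePi_pi _ fun i _ => measurableSet_singleton _]
  · have hempty : {ω : ℕ → G | ∀ i ≤ n, p + walk ω i = s i} = ∅ :=
      Set.eq_empty_of_forall_notMem fun ω hω => hs <| by
        simpa [walk_zero] using (hω 0 n.zero_le).symm
    rw [hempty, measure_empty]

open Classical in
lemma lintegral_walk_eq_killedSemigroup [MeasurableSingletonClass G] [Countable G] (η : Measure G)
    [IsProbabilityMeasure η] (S : Set G) (f : G → ℝ≥0∞) (n : ℕ) (p : G) :
    ∫⁻ ω, (if ∀ i ≤ n, p + walk ω i ∈ S then f (p + walk ω n) else 0)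
        ∂(Measure.infinitePi fun _ : ℕ => η)
      = killedSemigroup (fun x y => η {y - x}) S f n p := by
  have hmeas : Measurable fun ω : ℕ → G => if ∀ i ≤ n, ω i ∈ S then f (ω n) else 0 := by
    refine Measurable.ite ?_ ((measurable_of_countable f).comp (measurable_pi_apply n))
      measurable_const
    simp only [Set.ofPred_forall]
    exact .iInter fun i => .iInter fun _ =>
      measurableSet_preimage (measurable_pi_apply i) S.to_countable.measurableSet
  rw [← (isChainLaw_map_add_walk η p).lintegral_eq_killedSemigroup,
    lintegral_map hmeas (by fun_prop)]

lemma ae_tendsto_walk_div (η : Measure ℤ) [IsProbabilityMeasure η]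
    (hint : Integrable (fun x : ℤ => (x : ℝ)) η) :
    ∀ᵐ ω ∂(Measure.infinitePi fun _ : ℕ => η),
      Tendsto (fun n : ℕ => ((walk ω n : ℤ) : ℝ) / n) atTop (𝓝 (∫ x : ℤ, (x : ℝ) ∂η)) := by
  have hcast : Measurable fun x : ℤ => (x : ℝ) := measurable_of_countable _
  have heval (n : ℕ) := measurePreserving_eval_infinitePi (fun _ : ℕ => η) n
  let X (n : ℕ) (ω : ℕ → ℤ) : ℝ := ω n
  have hident (n : ℕ) : IdentDistrib (X n) (fun x : ℤ => (x : ℝ))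
      (Measure.infinitePi fun _ : ℕ => η) η :=
    ⟨(hcast.comp (measurable_pi_apply n)).aemeasurable, hcast.aemeasurable, by
      rw [← (heval n).map_eq, Measure.map_map hcast (measurable_pi_apply n), (heval n).map_eq]
      rfl⟩
  have hindep : iIndepFun X (Measure.infinitePi fun _ : ℕ => η) :=
    iIndepFun_infinitePi (X := fun _ (x : ℤ) => (x : ℝ)) fun _ => hcast
  have hslln := strong_law_ae_real X ((hident 0).integrable_iff.2 hint)
    (fun i j hij => hindep.indepFun hij) fun i => (hident i).trans (hident 0).symm
  rw [(hident 0).integral_eq] at hslln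
  filter_upwards [hslln] with ω hω
  simpa only [X, walk, Int.cast_sum] using hω

end RandomWalk

section SmoothlyVarying

variable {α : ℕ → ℝ} {θ b ε : ℝ} {j : ℕ → ℕ} {s : ℝ}

/-- Regular variation of a positive sequence with index `-θ` together with that of its increments:
`α p ~ b * p ^ (-θ)` and `α p - α (p + 1) ~ θ * b * p ^ (-(θ + 1))`. -/
structure SmoothlyVarying (α : ℕ → ℝ) (θ b : ℝ) : Prop where
  pos : ∀ p, 0 < α p
  const_pos : 0 < b
  tendsto_rpow_mul : Tendsto (fun p : ℕ => (p : ℝ) ^ θ * α p) atTop (𝓝 b)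
  tendsto_rpow_mul_sub :
    Tendsto (fun p : ℕ => (p : ℝ) ^ (θ + 1) * (α p - α (p + 1))) atTop (𝓝 (θ * b))

lemma tendsto_atTop_of_tendsto_natCast_div (hs : 0 < s)
    (hj : Tendsto (fun p : ℕ => (j p : ℝ) / p) atTop (𝓝 s)) : Tendsto j atTop atTop := by
  refine tendsto_natCast_atTop_iff.1 <|
    (hj.pos_mul_atTop hs tendsto_natCast_atTop_atTop).congr' ?_
  filter_upwards [eventually_ne_atTop 0] with p hp
  exact div_mul_cancel₀ _ (Nat.cast_ne_zero.2 hp)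

lemma natCast_toNat_add {p : ℕ} {x : ℤ} (h : (0 : ℝ) ≤ p + x) :
    ((((p : ℤ) + x).toNat : ℕ) : ℝ) = p + x := by
  have hnonneg : (0 : ℤ) ≤ p + x := by exact_mod_cast h
  exact_mod_cast congrArg (Int.cast : ℤ → ℝ) (Int.toNat_of_nonneg hnonneg)

lemma tendsto_toNat_add (x : ℤ) : Tendsto (fun p : ℕ => ((p : ℤ) + x).toNat) atTop atTop :=
  tendsto_atTop.2 fun b => by
    filter_upwards [eventually_ge_atTop (b + x.natAbs)] with p hp
    omega

lemma tendsto_toNat_add_div {x : ℕ → ℤ} {c : ℝ} (hc : -1 < c)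
    (hx : Tendsto (fun p : ℕ => (x p : ℝ) / p) atTop (𝓝 c)) :
    Tendsto (fun p : ℕ => ((((p : ℤ) + x p).toNat : ℕ) : ℝ) / p) atTop (𝓝 (1 + c)) := by
  refine (hx.const_add 1).congr' ?_
  filter_upwards [eventually_gt_atTop 0, hx.eventually (lt_mem_nhds hc)] with p hp hxp
  have hp' : (0 : ℝ) < p := Nat.cast_pos.2 hp
  rw [lt_div_iff₀ hp'] at hxp
  rw [natCast_toNat_add (by linarith), add_div, div_self hp'.ne']

lemma abs_sub_le_of_abs_sub_succ_le {D : ℝ} {N i k : ℕ}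
    (hD : ∀ l, N ≤ l → |α l - α (l + 1)| ≤ D) (hi : N ≤ i) (hk : N ≤ k) :
    |α i - α k| ≤ D * |(i : ℝ) - k| := by
  wlog hik : i ≤ k generalizing i k
  · rw [abs_sub_comm, abs_sub_comm (i : ℝ)]
    exact this hk hi (not_le.1 hik).le
  calc |α i - α k| = dist (α i) (α k) := (Real.dist_eq _ _).symm
    _ ≤ ∑ _l ∈ Finset.Ico i k, D :=
        dist_le_Ico_sum_of_dist_le hik fun hl _ => hD _ (hi.trans hl)
    _ = D * |(i : ℝ) - k| := by
        rw [Finset.sum_const, Nat.card_Ico, nsmul_eq_mul, Nat.cast_sub hik, abs_sub_comm,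
          abs_of_nonneg (sub_nonneg.2 (Nat.cast_le.2 hik)), mul_comm]

namespace SmoothlyVarying

variable (hα : SmoothlyVarying α θ b)
include hα

lemma exists_bounds : ∃ c C : ℝ, 0 < c ∧ 0 < C ∧ ∀ p : ℕ, 0 < p →
    c ≤ (p : ℝ) ^ θ * α p ∧ (p : ℝ) ^ θ * α p ≤ C := by
  have hpos : ∀ p : ℕ, 0 < p → 0 < (p : ℝ) ^ θ * α p := fun p hp =>
    mul_pos (Real.rpow_pos_of_pos (Nat.cast_pos.2 hp) _) (hα.pos p)
  obtain ⟨C, hC⟩ := hα.tendsto_rpow_mul.bddAbove_range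
  obtain ⟨D, hD⟩ := (hα.tendsto_rpow_mul.inv₀ hα.const_pos.ne').bddAbove_range
  have hD_pos : 0 < D := (inv_pos.2 (hpos 1 one_pos)).trans_le (hD ⟨1, rfl⟩)
  exact ⟨D⁻¹, C, inv_pos.2 hD_pos, (hpos 1 one_pos).trans_le (hC ⟨1, rfl⟩), fun p hp =>
    ⟨inv_le_of_inv_le₀ (hpos p hp) (hD ⟨p, rfl⟩), hC ⟨p, rfl⟩⟩⟩

lemma exists_ratio_le (hθ : 0 ≤ θ) (hε : 0 < ε) :
    ∃ C : ℝ, 0 < C ∧ ∀ p i : ℕ, 0 < p → ε * p ≤ i → α i / α p ≤ C := by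
  obtain ⟨c, C, hc, hC, hbounds⟩ := hα.exists_bounds
  refine ⟨C / c / ε ^ θ, by positivity, fun p i hp hi => ?_⟩
  have hp' : (0 : ℝ) < p := Nat.cast_pos.2 hp
  have hi' : (0 : ℝ) < i := (mul_pos hε hp').trans_le hi
  have hlow := (hbounds p hp).1
  have hup := (hbounds i (Nat.cast_pos.1 hi')).2
  have hrpow : ε ^ θ * (p : ℝ) ^ θ ≤ (i : ℝ) ^ θ := by
    rw [← Real.mul_rpow hε.le hp'.le]
    exact Real.rpow_le_rpow (by positivity) hi hθ
  have hαi := (hα.pos i).le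
  have hαp := (hα.pos p).le
  rw [div_div, div_le_div_iff₀ (hα.pos p) (by positivity)]
  calc α i * (c * ε ^ θ) ≤ α i * (((p : ℝ) ^ θ * α p) * ε ^ θ) := by gcongr
    _ = α i * (ε ^ θ * (p : ℝ) ^ θ) * α p := by ring
    _ ≤ α i * (i : ℝ) ^ θ * α p := by gcongr
    _ ≤ C * α p := by rw [mul_comm (α i)]; gcongr

lemma tendsto_ratio (hs : 0 < s) (hj : Tendsto (fun p : ℕ => (j p : ℝ) / p) atTop (𝓝 s)) :
    Tendsto (fun p : ℕ => α (j p) / α p) atTop (𝓝 (s ^ (-θ))) := by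
  have hj_atTop := tendsto_atTop_of_tendsto_natCast_div hs hj
  have h := ((hα.tendsto_rpow_mul.comp hj_atTop).div hα.tendsto_rpow_mul hα.const_pos.ne').mul
    (hj.rpow_const (p := -θ) (.inl hs.ne'))
  rw [div_self hα.const_pos.ne', one_mul] at h
  refine h.congr' ?_
  filter_upwards [eventually_gt_atTop 0, hj_atTop.eventually_gt_atTop 0] with p hp hjp
  have hp' : (0 : ℝ) < p := Nat.cast_pos.2 hp
  have hj' : (0 : ℝ) < j p := Nat.cast_pos.2 hjp
  simp only [Function.comp_apply, Pi.div_apply]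
  rw [Real.rpow_neg (by positivity), Real.div_rpow hj'.le hp'.le, inv_div]
  field_simp [(hα.pos p).ne']

lemma tendsto_ratio_add (x : ℤ) :
    Tendsto (fun p : ℕ => α ((p : ℤ) + x).toNat / α p) atTop (𝓝 1) := by
  simpa using hα.tendsto_ratio (by norm_num) (tendsto_toNat_add_div (by norm_num)
    (tendsto_const_div_atTop_nhds_zero_nat (x : ℝ)))

lemma tendsto_mul_sub_div :
    Tendsto (fun p : ℕ => p * ((α p - α (p + 1)) / α p)) atTop (𝓝 θ) := by
  have h := hα.tendsto_rpow_mul_sub.div hα.tendsto_rpow_mul hα.const_pos.ne'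
  rw [mul_div_cancel_right₀ _ hα.const_pos.ne'] at h
  refine h.congr' ?_
  filter_upwards [eventually_gt_atTop 0] with p hp
  have hp' : (0 : ℝ) < p := Nat.cast_pos.2 hp
  rw [Pi.div_apply, Real.rpow_add_one hp'.ne']
  field_simp [(hα.pos p).ne']

lemma tendsto_mul_ratio_sub_ratio_succ (x : ℤ) :
    Tendsto (fun p : ℕ => p * (α ((p : ℤ) + x).toNat / α p - α ((p : ℤ) + (x + 1)).toNat / α p))
      atTop (𝓝 θ) := by
  have hdiv := (tendsto_toNat_add_div (by norm_num)
    (tendsto_const_div_atTop_nhds_zero_nat (x : ℝ))).inv₀ (by norm_num)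
  have h := ((hα.tendsto_ratio_add x).mul hdiv).mul
    (hα.tendsto_mul_sub_div.comp (tendsto_toNat_add x))
  simp only [add_zero, inv_one, one_mul] at h
  refine h.congr' ?_
  filter_upwards [eventually_ne_atTop 0, (tendsto_toNat_add x).eventually_gt_atTop 0] with p hp hpx
  have hsucc : ((p : ℤ) + (x + 1)).toNat = ((p : ℤ) + x).toNat + 1 := by omega
  have hpx' : ((((p : ℤ) + x).toNat : ℕ) : ℝ) ≠ 0 := Nat.cast_ne_zero.2 hpx.ne'
  have hαp := (hα.pos p).ne'
  have hαpx := (hα.pos ((p : ℤ) + x).toNat).ne'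
  simp only [Function.comp_apply, hsucc]
  field_simp

lemma tendsto_mul_one_sub_ratio_add (x : ℤ) :
    Tendsto (fun p : ℕ => p * (1 - α ((p : ℤ) + x).toNat / α p)) atTop (𝓝 (θ * x)) := by
  induction x using Int.induction_on with
  | zero => simp [div_self (hα.pos _).ne']
  | succ i ih =>
    have h := ih.add (hα.tendsto_mul_ratio_sub_ratio_succ i)
    rw [← mul_add_one] at h
    rw [Int.cast_add, Int.cast_one]
    exact h.congr fun p => by ring
  | pred i ih =>
    have h := ih.sub (hα.tendsto_mul_ratio_sub_ratio_succ (-(i : ℤ) - 1))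
    rw [← mul_sub_one] at h
    rw [Int.cast_sub, Int.cast_one]
    exact h.congr fun p => by rw [sub_add_cancel]; ring

lemma exists_abs_mul_one_sub_ratio_le (hθ : 0 ≤ θ) (hε : 0 < ε) (hε1 : ε ≤ 1) :
    ∃ C : ℝ, 0 ≤ C ∧ ∀ p i : ℕ, 0 < p → ε * p ≤ i →
      |p * (1 - α i / α p)| ≤ C * |(p : ℝ) - i| := by
  obtain ⟨C, hC, hratio⟩ := hα.exists_ratio_le hθ hε
  obtain ⟨D, hD⟩ := hα.tendsto_mul_sub_div.abs.bddAbove_range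
  have hD0 : 0 ≤ D := (abs_nonneg _).trans (hD ⟨0, rfl⟩)
  refine ⟨D * C / ε, by positivity, fun p i hp hi => ?_⟩
  have hp' : (0 : ℝ) < p := Nat.cast_pos.2 hp
  have hαp := hα.pos p
  have hincr : ∀ l : ℕ, ⌈ε * p⌉₊ ≤ l → |α l - α (l + 1)| ≤ D * C / ε * (α p / p) := by
    intro l hl
    have hl : ε * p ≤ l := Nat.ceil_le.1 hl
    have hl_pos : (0 : ℝ) < l := (mul_pos hε hp').trans_le hl
    have hαl := hα.pos l
    have hDl : (l : ℝ) * (|α l - α (l + 1)| / α l) ≤ D := by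
      simpa only [abs_mul, abs_div, Nat.abs_cast, abs_of_pos hαl] using hD ⟨l, rfl⟩
    calc |α l - α (l + 1)| = (l : ℝ) * (|α l - α (l + 1)| / α l) * (α l / l) := by field_simp
      _ ≤ D * (C * α p / (ε * p)) := by
          gcongr
          exact (div_le_iff₀ hαp).1 (hratio p l hp hl)
      _ = D * C / ε * (α p / p) := by field_simp
  have hdiff := abs_sub_le_of_abs_sub_succ_le hincr
    (Nat.ceil_le.2 (mul_le_of_le_one_left hp'.le hε1)) (Nat.ceil_le.2 hi)
  calc |p * (1 - α i / α p)| = p / α p * |α p - α i| := by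
        rw [one_sub_div hαp.ne', abs_mul, abs_div, Nat.abs_cast, abs_of_pos hαp]
        ring
    _ ≤ p / α p * (D * C / ε * (α p / p) * |(p : ℝ) - i|) := by gcongr
    _ = D * C / ε * |(p : ℝ) - i| := by field_simp

end SmoothlyVarying

open Classical in
/-- The ratio `α (p + x) / α p`, set to zero unless `p + x > ε * p`. -/
noncomputable def truncRatio (ε : ℝ) (α : ℕ → ℝ) (p : ℕ) (x : ℤ) : ℝ :=
  if ε * p < p + x then α ((p : ℤ) + x).toNat / α p else 0

lemma eventually_truncRatio_eq (α : ℕ → ℝ) (hε1 : ε < 1) (x : ℤ) :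
    (fun p : ℕ => α ((p : ℤ) + x).toNat / α p) =ᶠ[atTop] fun p => truncRatio ε α p x := by
  have h : Tendsto (fun p : ℕ => (1 - ε) * p) atTop atTop :=
    tendsto_natCast_atTop_atTop.const_mul_atTop (sub_pos.2 hε1)
  filter_upwards [h.eventually_gt_atTop (-x : ℝ)] with p hp
  rw [truncRatio, if_pos (by linarith)]

namespace SmoothlyVarying

lemma exists_abs_truncRatio_le (hα : SmoothlyVarying α θ b) (hθ : 0 ≤ θ) (hε : 0 < ε) :
    ∃ C : ℝ, 0 < C ∧ ∀ p : ℕ, 0 < p → ∀ x : ℤ, |truncRatio ε α p x| ≤ C := by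
  obtain ⟨C, hC, hratio⟩ := hα.exists_ratio_le hθ hε
  refine ⟨C, hC, fun p hp x => ?_⟩
  unfold truncRatio
  split_ifs with h
  · rw [abs_of_pos (div_pos (hα.pos _) (hα.pos _))]
    refine hratio p _ hp ?_
    rw [natCast_toNat_add ((by positivity : 0 ≤ ε * p).trans h.le)]
    exact h.le
  · simpa only [abs_zero] using hC.le

lemma exists_abs_mul_one_sub_truncRatio_le (hα : SmoothlyVarying α θ b) (hθ : 0 ≤ θ) (hε : 0 < ε)
    (hε1 : ε < 1) : ∃ C : ℝ, ∀ p : ℕ, 0 < p → ∀ x : ℤ,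
      |p * (1 - truncRatio ε α p x)| ≤ C * |(x : ℝ)| := by
  obtain ⟨C, hC, hbound⟩ := hα.exists_abs_mul_one_sub_ratio_le hθ hε hε1.le
  have hε1' : 0 < 1 - ε := sub_pos.2 hε1
  refine ⟨C + 1 / (1 - ε), fun p hp x => ?_⟩
  rw [add_mul]
  unfold truncRatio
  split_ifs with h
  · have hcast := natCast_toNat_add ((by positivity : 0 ≤ ε * p).trans h.le)
    have hp_le := hbound p ((p : ℤ) + x).toNat hp (by rw [hcast]; exact h.le)
    rw [hcast, sub_add_cancel_left, abs_neg] at hp_le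
    exact hp_le.trans (le_add_of_nonneg_right (by positivity))
  · have hx : (1 - ε) * p ≤ |(x : ℝ)| := by linarith [neg_le_abs (x : ℝ)]
    rw [sub_zero, mul_one, Nat.abs_cast, div_mul_eq_mul_div, one_mul]
    exact ((le_div_iff₀' hε1').2 hx).trans (le_add_of_nonneg_left (by positivity))

variable {w : ℤ → ℝ} {m : ℝ}

lemma summable_mul_truncRatio (hα : SmoothlyVarying α θ b) (hθ : 0 ≤ θ) (hε : 0 < ε)
    (hw : Summable w) {p : ℕ} (hp : 0 < p) : Summable fun x => w x * truncRatio ε α p x := by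
  obtain ⟨C, _, hC⟩ := hα.exists_abs_truncRatio_le hθ hε
  refine .of_norm_bounded (hw.norm.mul_right C) fun x => ?_
  rw [norm_mul]
  gcongr
  exact hC p hp x

lemma tendsto_tsum_mul_truncRatio (hα : SmoothlyVarying α θ b) (hθ : 0 ≤ θ) (hε : 0 < ε)
    (hε1 : ε < 1) (hwm : HasSum (fun x : ℤ => x * w x) m) :
    Tendsto (fun p : ℕ => ∑' x : ℤ, x * w x * truncRatio ε α p x) atTop (𝓝 m) := by
  obtain ⟨C, _, hC⟩ := hα.exists_abs_truncRatio_le hθ hε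
  rw [← hwm.tsum_eq]
  refine tendsto_tsum_of_dominated_convergence (hwm.summable.norm.mul_right C) (fun x => ?_) ?_
  · simpa using ((hα.tendsto_ratio_add x).congr' (eventually_truncRatio_eq α hε1 x)).const_mul _
  · filter_upwards [eventually_gt_atTop 0] with p hp x
    rw [norm_mul]
    gcongr
    exact hC p hp x

lemma tendsto_tsum_mul_one_sub_truncRatio (hα : SmoothlyVarying α θ b) (hθ : 0 ≤ θ) (hε : 0 < ε)
    (hε1 : ε < 1) (hwm : HasSum (fun x : ℤ => x * w x) m) :
    Tendsto (fun p : ℕ => ∑' x : ℤ, w x * (p * (1 - truncRatio ε α p x))) atTop (𝓝 (θ * m)) := by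
  obtain ⟨C, hC⟩ := hα.exists_abs_mul_one_sub_truncRatio_le hθ hε hε1
  rw [← (hwm.mul_left θ).tsum_eq]
  refine tendsto_tsum_of_dominated_convergence (hwm.summable.norm.mul_left C) (fun x => ?_) ?_
  · have h : Tendsto (fun p : ℕ => p * (1 - truncRatio ε α p x)) atTop (𝓝 (θ * x)) := by
      refine (hα.tendsto_mul_one_sub_ratio_add x).congr' ?_
      filter_upwards [eventually_truncRatio_eq α hε1 x] with p hp
      rw [hp]
    exact (h.const_mul (w x)).trans (le_of_eq (by ring_nf))
  · filter_upwards [eventually_gt_atTop 0] with p hp x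
    rw [norm_mul, norm_mul (x : ℝ), ← mul_assoc, mul_comm ‖w x‖]
    exact mul_le_mul_of_nonneg_right (hC p hp x) (abs_nonneg (w x))

end SmoothlyVarying

end SmoothlyVarying

section Lyapunov

variable {E : Type*} {κ : E → E → ℝ≥0∞} {S F : Set E}

lemma tsum_mul_sum_survival_add_one {p : E} (hp : p ∈ S) (N : ℕ) :
    ∑' q, κ p q * ∑ i ∈ Finset.range N, survival κ S i q + 1
      = ∑ i ∈ Finset.range N, survival κ S i p + survival κ S N p := by
  rw [← Finset.sum_range_succ, Finset.sum_range_succ', survival_zero_of_mem hp]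
  simp only [survival_succ_of_mem hp, Finset.mul_sum]
  rw [Summable.tsum_finsetSum fun _ _ => ENNReal.summable]

/-- Adding to `U` a multiple of the truncated expected exit time makes it a Lyapunov function on all
of `S`. -/
lemma exists_mul_survival_le_of_drift (hκ : ∀ p, ∑' q, κ p q = 1) (hF : F.Finite) {U : E → ℝ≥0∞}
    {C : ℝ≥0∞} (hC : C ≠ ⊤) {N : ℕ} (hdrift : ∀ p ∈ S \ F, ∑' q, κ p q * U q + 1 ≤ U p)
    (hUF : ∀ p ∈ F, ∑' q, κ p q * U q ≤ C) (hexit : ∀ p ∈ F, survival κ S N p < 1) :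
    ∃ B ≠ ⊤, ∀ k p, k * survival κ S k p ≤ U p + B := by
  let ρ := hF.toFinset.sup (survival κ S N)
  have hρ : ρ < 1 := (Finset.sup_lt_iff zero_lt_one).2 fun p hp => hexit p (hF.mem_toFinset.1 hp)
  have hρ0 : 1 - ρ ≠ 0 := (tsub_pos_of_lt hρ).ne'
  have hρ_top : 1 - ρ ≠ ⊤ := ENNReal.sub_ne_top ENNReal.one_ne_top
  let L := (C + 1) / (1 - ρ)
  have hL : L * (1 - ρ) = C + 1 := ENNReal.div_mul_cancel hρ0 hρ_top
  let β p := ∑ i ∈ Finset.range N, survival κ S i p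
  have hβ_le p : β p ≤ N := by
    simpa using Finset.sum_le_sum fun i (_ : i ∈ Finset.range N) => survival_le_one hκ S i p
  have hβ_drift {p} (hp : p ∈ S) {x : ℝ≥0∞} (hx : survival κ S N p ≤ x) (hx1 : x ≤ 1) :
      ∑' q, κ p q * β q + (1 - x) ≤ β p := by
    have hx_top : x ≠ ⊤ := ne_top_of_le_ne_top ENNReal.one_ne_top hx1
    refine ENNReal.le_of_add_le_add_right hx_top ?_
    rw [add_assoc, tsub_add_cancel_of_le hx1, tsum_mul_sum_survival_add_one hp]
    gcongr
  have hV : ∀ p ∈ S, ∑' q, κ p q * (U q + L * β q) + 1 ≤ U p + L * β p := fun p hp => by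
    simp only [mul_add, mul_left_comm _ L, ENNReal.tsum_add, ENNReal.tsum_mul_left]
    by_cases hpF : p ∈ F
    · calc ∑' q, κ p q * U q + L * ∑' q, κ p q * β q + 1
          ≤ C + L * ∑' q, κ p q * β q + 1 := by gcongr; exact hUF p hpF
        _ = L * (∑' q, κ p q * β q + (1 - ρ)) := by rw [mul_add, hL]; ring
        _ ≤ U p + L * β p := le_add_left (by
            gcongr
            exact hβ_drift hp (Finset.le_sup (hF.mem_toFinset.2 hpF)) hρ.le)
    · rw [add_right_comm]
      gcongr
      · exact hdrift p ⟨hp, hpF⟩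
      · simpa using hβ_drift hp (survival_le_one hκ S N p) le_rfl
  refine ⟨L * N, ENNReal.mul_ne_top (ENNReal.div_ne_top (ENNReal.add_ne_top.2
    ⟨hC, ENNReal.one_ne_top⟩) hρ0) (ENNReal.natCast_ne_top N), fun k p => ?_⟩
  refine (mul_survival_le_of_lyapunov hκ hV k p).trans ?_
  gcongr
  exact hβ_le p

end Lyapunov

section TransformedWalk

variable {K : ℕ → ℕ → ℝ} {α : ℕ → ℝ} {w : ℤ → ℝ} {ℓ r : ℕ} {θ b ε m : ℝ}

/-- `K` is the transition matrix of a Markov chain on `ℕ` with upward jumps bounded by `r` which,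
above the level `ℓ`, is the Doob transform by `α` of the random walk with step law `w`. -/
structure IsTransformedWalk (K : ℕ → ℕ → ℝ) (α : ℕ → ℝ) (w : ℤ → ℝ) (ℓ r : ℕ) : Prop where
  nonneg : ∀ p q, 0 ≤ K p q
  tsum_ofReal_eq_one : ∀ p, ∑' q, ENNReal.ofReal (K p q) = 1
  eq_zero_of_lt : ∀ p q, p + r < q → K p q = 0
  succ_self_pos : ∀ p, 0 < K (p + 1) p
  eq_ratio_mul : ∀ p q, ℓ < p → ℓ < q → K p q = α q / α p * w (q - p)

namespace IsTransformedWalk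

variable (hK : IsTransformedWalk K α w ℓ r)
include hK

lemma eq_zero_of_notMem_range {p q : ℕ} (hq : q ∉ Finset.range (p + r + 1)) : K p q = 0 :=
  hK.eq_zero_of_lt p q (not_lt.1 (Finset.mem_range.not.1 hq))

lemma tsum_ofReal_mul_eq {f : ℕ → ℝ} (hf : ∀ q, 0 ≤ f q) (p : ℕ) :
    ∑' q, ENNReal.ofReal (K p q) * ENNReal.ofReal (f q)
      = ENNReal.ofReal (∑ q ∈ Finset.range (p + r + 1), f q * K p q) := by
  rw [ENNReal.ofReal_sum_of_nonneg fun q _ => mul_nonneg (hf q) (hK.nonneg p q),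
    tsum_eq_sum fun q hq => by rw [hK.eq_zero_of_notMem_range hq, ENNReal.ofReal_zero, zero_mul]]
  exact Finset.sum_congr rfl fun q _ => by rw [ENNReal.ofReal_mul (hf q), mul_comm]

lemma sum_range_eq_one (p : ℕ) : ∑ q ∈ Finset.range (p + r + 1), K p q = 1 := by
  simpa [hK.tsum_ofReal_eq_one] using (hK.tsum_ofReal_mul_eq (fun _ => zero_le_one) p).symm

lemma sum_range_mul_le (p : ℕ) : ∑ q ∈ Finset.range (p + r + 1), q * K p q ≤ p + r := by
  calc ∑ q ∈ Finset.range (p + r + 1), q * K p q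
      ≤ ∑ q ∈ Finset.range (p + r + 1), ((p : ℝ) + r) * K p q :=
        Finset.sum_le_sum fun q hq => mul_le_mul_of_nonneg_right
          (by exact_mod_cast Nat.lt_succ_iff.1 (Finset.mem_range.1 hq)) (hK.nonneg p q)
    _ = p + r := by rw [← Finset.mul_sum, hK.sum_range_eq_one, mul_one]

lemma survival_self_lt_one (p : ℕ) :
    survival (fun p q => ENNReal.ofReal (K p q)) (Set.Ioi 0) p p < 1 := by
  induction p with
  | zero =>
    rw [survival_of_notMem fun h => (Set.mem_Ioi.1 h).false]
    exact zero_lt_one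
  | succ p ih =>
    exact survival_succ_lt_one hK.tsum_ofReal_eq_one
      (ENNReal.ofReal_pos.2 (hK.succ_self_pos p)).ne' ih

lemma tsum_mul_truncRatio (hε : 0 ≤ ε) {p : ℕ} (hp : ℓ < p) (hεp : ℓ ≤ ε * p) (f : ℤ → ℝ) :
    ∑' x : ℤ, f x * w x * truncRatio ε α p x
      = ∑ q ∈ Finset.range (p + r + 1), if ε * p < q then f (q - p) * K p q else 0 := by
  have hinj : Function.Injective fun q : ℕ => (q : ℤ) - p := fun q q' h => by simpa using h
  rw [← hinj.tsum_eq (Function.support_subset_iff'.2 fun x hx => ?_)]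
  · have hterm (q : ℕ) : f (q - p) * w (q - p) * truncRatio ε α p (q - p)
        = if ε * p < q then f (q - p) * K p q else 0 := by
      simp only [truncRatio, Int.cast_sub, Int.cast_natCast, add_sub_cancel, Int.toNat_natCast]
      split_ifs with hq
      · rw [hK.eq_ratio_mul p q hp (by exact_mod_cast hεp.trans_lt hq)]
        ring
      · rw [mul_zero]
    rw [tsum_congr hterm, tsum_eq_sum fun q hq => by
      rw [hK.eq_zero_of_notMem_range hq, mul_zero, ite_self]]
  · have hx' : ¬ ε * p < p + x := fun h => hx <| by
      have h0 : (0 : ℤ) ≤ p + x := by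
        exact_mod_cast ((by positivity : 0 ≤ ε * (p : ℝ)).trans h.le)
      exact ⟨(p + x).toNat, by simp [Int.toNat_of_nonneg h0]⟩
    rw [truncRatio, if_neg hx', mul_zero]

lemma mul_tsum_sub_tsum_le (hα : SmoothlyVarying α θ b) (hθ : 0 ≤ θ) (hε : 0 < ε)
    (hw1 : HasSum w 1) {p : ℕ} (hp : ℓ < p) (hεp : ℓ ≤ ε * p) :
    (1 - ε) * ∑' x : ℤ, w x * (p * (1 - truncRatio ε α p x))
        - ∑' x : ℤ, x * w x * truncRatio ε α p x
      ≤ p - ∑ q ∈ Finset.range (p + r + 1), q * K p q := by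
  have hmass : ∑' x : ℤ, w x * (p * (1 - truncRatio ε α p x))
      = p * (1 - ∑' x : ℤ, 1 * w x * truncRatio ε α p x) := by
    have hsum := hα.summable_mul_truncRatio hθ hε hw1.summable (by omega : 0 < p)
    have hterm (x : ℤ) : w x * (p * (1 - truncRatio ε α p x))
        = p * (w x - w x * truncRatio ε α p x) := by ring
    simp only [one_mul]
    rw [tsum_congr hterm, tsum_mul_left, hw1.summable.tsum_sub hsum, hw1.tsum_eq]
  rw [hmass, hK.tsum_mul_truncRatio hε.le hp hεp fun _ => 1,
    hK.tsum_mul_truncRatio hε.le hp hεp fun x => x]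
  have hrow := hK.sum_range_eq_one p
  calc (1 - ε) * (p * (1 - ∑ q ∈ Finset.range (p + r + 1), if ε * p < q then 1 * K p q else 0))
        - ∑ q ∈ Finset.range (p + r + 1), (if ε * p < q then ((q - p : ℤ) : ℝ) * K p q else 0)
      = ∑ q ∈ Finset.range (p + r + 1),
          ((1 - ε) * (p * (K p q - if ε * p < q then 1 * K p q else 0))
            - if ε * p < q then ((q - p : ℤ) : ℝ) * K p q else 0) := by
        rw [Finset.sum_sub_distrib, ← Finset.mul_sum, ← Finset.mul_sum, Finset.sum_sub_distrib,
          hrow]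
    _ ≤ ∑ q ∈ Finset.range (p + r + 1), ((p : ℝ) * K p q - q * K p q) := by
        refine Finset.sum_le_sum fun q _ => ?_
        split_ifs with hq
        · push_cast
          linarith
        · have := mul_le_mul_of_nonneg_right (not_lt.1 hq) (hK.nonneg p q)
          linarith
    _ = p - ∑ q ∈ Finset.range (p + r + 1), q * K p q := by
        rw [Finset.sum_sub_distrib, ← Finset.mul_sum, hrow, mul_one]

/-- The transformed walk has drift `(1 - θ) * m`, which is opposite to that of the walk. -/
lemma exists_drift_le (hα : SmoothlyVarying α θ b) (hθ : 1 < θ) (hw1 : HasSum w 1) (hm : 0 < m)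
    (hwm : HasSum (fun x : ℤ => x * w x) m) :
    ∃ δ : ℝ, 0 < δ ∧ ∀ᶠ p : ℕ in atTop,
      ∑ q ∈ Finset.range (p + r + 1), q * K p q ≤ p - δ := by
  have hθ0 : 0 < θ := one_pos.trans hθ
  obtain ⟨ε, hε, hεθ⟩ : ∃ ε, 0 < ε ∧ ε * θ < θ - 1 :=
    ⟨(θ - 1) / (2 * θ), div_pos (sub_pos.2 hθ) (by positivity), by
      rw [div_mul_eq_mul_div, div_lt_iff₀ (by positivity)]
      nlinarith [mul_pos hθ0 (sub_pos.2 hθ)]⟩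
  have hε1 : ε < 1 := by nlinarith
  have hlim := ((hα.tendsto_tsum_mul_one_sub_truncRatio hθ0.le hε hε1 hwm).const_mul (1 - ε)).sub
    (hα.tendsto_tsum_mul_truncRatio hθ0.le hε hε1 hwm)
  have hδ : 0 < (1 - ε) * (θ * m) - m := by nlinarith [mul_pos hm (sub_pos.2 hεθ)]
  have hbig : Tendsto (fun p : ℕ => ε * (p : ℝ)) atTop atTop :=
    tendsto_natCast_atTop_atTop.const_mul_atTop hε
  refine ⟨_, half_pos hδ, ?_⟩
  filter_upwards [hlim.eventually (lt_mem_nhds (half_lt_self hδ)), eventually_gt_atTop ℓ,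
    hbig.eventually_ge_atTop ℓ] with p hp hℓ hεp
  linarith [hK.mul_tsum_sub_tsum_le hα hθ0.le hε hw1 hℓ hεp]

lemma exists_mul_survival_le {δ : ℝ} (hδ : 0 < δ) (hdrift : ∀ᶠ p : ℕ in atTop,
      ∑ q ∈ Finset.range (p + r + 1), q * K p q ≤ p - δ) :
    ∃ c B : ℝ, 0 ≤ c ∧ 0 ≤ B ∧ ∀ k p : ℕ,
      k * (survival (fun p q => ENNReal.ofReal (K p q)) (Set.Ioi 0) k p).toReal ≤ c * p + B := by
  obtain ⟨M, hM⟩ := eventually_atTop.1 hdrift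
  have hmean (p : ℕ) : ∑' q, ENNReal.ofReal (K p q) * ENNReal.ofReal (δ⁻¹ * q)
      = ENNReal.ofReal (δ⁻¹ * ∑ q ∈ Finset.range (p + r + 1), q * K p q) := by
    rw [hK.tsum_ofReal_mul_eq (fun q => by positivity), Finset.mul_sum]
    simp only [mul_assoc]
  have hmean_nonneg (p : ℕ) : 0 ≤ ∑ q ∈ Finset.range (p + r + 1), q * K p q :=
    Finset.sum_nonneg fun q _ => mul_nonneg q.cast_nonneg (hK.nonneg p q)
  have hdrift' : ∀ p ∈ Set.Ioi 0 \ Set.Iio M,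
      ∑' q, ENNReal.ofReal (K p q) * ENNReal.ofReal (δ⁻¹ * q) + 1 ≤ ENNReal.ofReal (δ⁻¹ * p) := by
    intro p hp
    rw [hmean, ← ENNReal.ofReal_one,
      ← ENNReal.ofReal_add (mul_nonneg (by positivity) (hmean_nonneg p)) zero_le_one]
    refine ENNReal.ofReal_le_ofReal ?_
    calc δ⁻¹ * ∑ q ∈ Finset.range (p + r + 1), q * K p q + 1 ≤ δ⁻¹ * (p - δ) + 1 := by
          gcongr
          exact hM p (not_lt.1 hp.2)
      _ = δ⁻¹ * p := by field_simp; ring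
  have hbound : ∀ p ∈ Set.Iio M, ∑' q, ENNReal.ofReal (K p q) * ENNReal.ofReal (δ⁻¹ * q)
      ≤ ENNReal.ofReal (δ⁻¹ * (M + r)) := by
    intro p hp
    rw [hmean]
    have hp : (p : ℝ) ≤ M := Nat.cast_le.2 (le_of_lt hp)
    exact ENNReal.ofReal_le_ofReal (mul_le_mul_of_nonneg_left
      (by linarith [hK.sum_range_mul_le p]) (by positivity))
  obtain ⟨B, hB, hle⟩ := exists_mul_survival_le_of_drift hK.tsum_ofReal_eq_one (Set.finite_Iio M)
    ENNReal.ofReal_ne_top hdrift' hbound fun p hp =>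
      (antitone_survival hK.tsum_ofReal_eq_one _ p (le_of_lt hp)).trans_lt
        (hK.survival_self_lt_one p)
  refine ⟨δ⁻¹, B.toReal, by positivity, B.toReal_nonneg, fun k p => ?_⟩
  have h := ENNReal.toReal_mono (ENNReal.add_ne_top.2 ⟨ENNReal.ofReal_ne_top, hB⟩) (hle k p)
  rwa [ENNReal.toReal_mul, ENNReal.toReal_natCast, ENNReal.toReal_add ENNReal.ofReal_ne_top hB,
    ENNReal.toReal_ofReal (by positivity)] at h

end IsTransformedWalk

end TransformedWalk

section TransformedWalkLimit

variable {K : ℕ → ℕ → ℝ} {α : ℕ → ℝ} {w : ℤ → ℝ} {ℓ r : ℕ} {θ b ε m s t : ℝ}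

lemma exists_probabilityMeasure_int (hw : ∀ x, 0 ≤ w x) (hw1 : HasSum w 1)
    (hwm : HasSum (fun x => x * w x) m) :
    ∃ η : Measure ℤ, IsProbabilityMeasure η ∧ (∀ x, η {x} = ENNReal.ofReal (w x)) ∧
      Integrable (fun x : ℤ => (x : ℝ)) η ∧ ∫ x : ℤ, (x : ℝ) ∂η = m := by
  have hsum : ∑' x, ENNReal.ofReal (w x) = 1 := by
    rw [← ENNReal.ofReal_tsum_of_nonneg hw hw1.summable, hw1.tsum_eq, ENNReal.ofReal_one]
  let P : PMF ℤ := ⟨fun x => ENNReal.ofReal (w x), hsum ▸ ENNReal.summable.hasSum⟩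
  have hP (x : ℤ) : P.toMeasure {x} = ENNReal.ofReal (w x) :=
    P.toMeasure_apply_singleton x (measurableSet_singleton x)
  have hint : Integrable (fun x : ℤ => (x : ℝ)) P.toMeasure := by
    refine ⟨(measurable_of_countable _).aestronglyMeasurable, ?_⟩
    have hterm (x : ℤ) : ‖(x : ℝ)‖ₑ * P.toMeasure {x} = ENNReal.ofReal |x * w x| := by
      rw [hP, Real.enorm_eq_ofReal_abs, ← ENNReal.ofReal_mul (abs_nonneg _), abs_mul,
        abs_of_nonneg (hw x)]
    rw [HasFiniteIntegral, lintegral_countable', tsum_congr hterm,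
      ← ENNReal.ofReal_tsum_of_nonneg (fun _ => abs_nonneg _) hwm.summable.abs]
    exact ENNReal.ofReal_lt_top
  refine ⟨P.toMeasure, inferInstance, hP, hint, ?_⟩
  rw [PMF.integral_eq_tsum P _ hint, ← hwm.tsum_eq]
  refine tsum_congr fun x => ?_
  have hPx : (P x).toReal = w x := ENNReal.toReal_ofReal (hw x)
  rw [hPx, smul_eq_mul, mul_comm]

lemma eventually_forall_floor_lt_add {y : ℕ → ℤ} (hm : 0 < m)
    (hy : Tendsto (fun n : ℕ => (y n : ℝ) / n) atTop (𝓝 m)) (hε : 0 ≤ ε) (hε1 : ε < 1) :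
    ∀ᶠ p : ℕ in atTop, ∀ i, ((⌊ε * p⌋₊ : ℕ) : ℤ) < p + y i := by
  have hy_atTop : Tendsto (fun n => (y n : ℝ)) atTop atTop := by
    refine (hy.pos_mul_atTop hm tendsto_natCast_atTop_atTop).congr' ?_
    filter_upwards [eventually_ne_atTop 0] with n hn
    exact div_mul_cancel₀ _ (Nat.cast_ne_zero.2 hn)
  obtain ⟨B, hB⟩ := Filter.bddBelow_range_of_tendsto_atTop_atTop hy_atTop
  filter_upwards [(tendsto_natCast_atTop_atTop.const_mul_atTop
    (sub_pos.2 hε1)).eventually_gt_atTop (-B)] with p hp i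
  have hfloor : (⌊ε * p⌋₊ : ℝ) ≤ ε * p := Nat.floor_le (by positivity)
  have hlt : (⌊ε * p⌋₊ : ℝ) < p + y i := by linarith [hB ⟨i, rfl⟩]
  exact_mod_cast hlt

lemma SmoothlyVarying.tendsto_ratio_add_of_tendsto_div (hα : SmoothlyVarying α θ b) {y : ℕ → ℤ}
    (hm : 0 < m) (hy : Tendsto (fun n : ℕ => (y n : ℝ) / n) atTop (𝓝 m)) (hs : 0 < s) {n : ℕ → ℕ}
    (hn : Tendsto (fun p : ℕ => (n p : ℝ) / p) atTop (𝓝 s)) :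
    Tendsto (fun p : ℕ => α ((p : ℤ) + y (n p)).toNat / α p) atTop
      (𝓝 ((1 + m * s) ^ (-θ))) := by
  have hn_atTop := tendsto_atTop_of_tendsto_natCast_div hs hn
  have hyn : Tendsto (fun p : ℕ => (y (n p) : ℝ) / p) atTop (𝓝 (m * s)) := by
    refine ((hy.comp hn_atTop).mul hn).congr' ?_
    filter_upwards [hn_atTop.eventually_ne_atTop 0] with p hp
    exact div_mul_div_cancel₀ (Nat.cast_ne_zero.2 hp)
  exact hα.tendsto_ratio (by positivity)
    (tendsto_toNat_add_div (neg_one_lt_zero.trans (by positivity)) hyn)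

open Classical in
lemma SmoothlyVarying.tendsto_lintegral_walk (hα : SmoothlyVarying α θ b) (hθ : 0 ≤ θ)
    (η : Measure ℤ) [IsProbabilityMeasure η] (hint : Integrable (fun x : ℤ => (x : ℝ)) η)
    (hm : 0 < ∫ x : ℤ, (x : ℝ) ∂η) (hε : 0 < ε) (hε1 : ε < 1) (hs : 0 < s) {n : ℕ → ℕ}
    (hn : Tendsto (fun p : ℕ => (n p : ℝ) / p) atTop (𝓝 s)) :
    Tendsto (fun p : ℕ => ∫⁻ ω, (if ∀ i ≤ n p, (p : ℤ) + walk ω i ∈ Set.Ioi (⌊ε * p⌋₊ : ℤ)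
        then ENNReal.ofReal (α ((p : ℤ) + walk ω (n p)).toNat / α p) else 0)
        ∂(Measure.infinitePi fun _ : ℕ => η))
      atTop (𝓝 (ENNReal.ofReal ((1 + (∫ x : ℤ, (x : ℝ) ∂η) * s) ^ (-θ)))) := by
  obtain ⟨C, -, hratio⟩ := hα.exists_ratio_le hθ hε
  suffices h : Tendsto _ atTop (𝓝 (∫⁻ _, ENNReal.ofReal ((1 + (∫ x : ℤ, (x : ℝ) ∂η) * s) ^ (-θ))
      ∂(Measure.infinitePi fun _ : ℕ => η))) by simpa using h
  refine tendsto_lintegral_filter_of_dominated_convergence (fun _ => ENNReal.ofReal C)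
    (.of_forall fun p => ?_) ?_ (by simp) ?_
  · refine Measurable.ite ?_ ((measurable_of_countable fun x : ℤ =>
      ENNReal.ofReal (α ((p : ℤ) + x).toNat / α p)).comp (measurable_walk _)) measurable_const
    simp only [Set.ofPred_forall]
    exact .iInter fun i => .iInter fun _ =>
      ((measurable_walk i).const_add _) measurableSet_Ioi
  · filter_upwards [eventually_gt_atTop 0] with p hp
    refine ae_of_all _ fun ω => ?_
    split_ifs with h
    · refine ENNReal.ofReal_le_ofReal (hratio p _ hp ?_)
      have hfloor : ⌊ε * p⌋₊ < ((p : ℤ) + walk ω (n p)).toNat :=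
        Int.lt_toNat.2 (h (n p) le_rfl)
      exact ((Nat.floor_lt (by positivity)).1 hfloor).le
    · exact zero_le
  · filter_upwards [ae_tendsto_walk_div η hint] with ω hω
    refine (ENNReal.tendsto_ofReal
      (hα.tendsto_ratio_add_of_tendsto_div hm hω hs hn)).congr' ?_
    filter_upwards [eventually_forall_floor_lt_add hm hω hε.le hε1] with p hp
    exact (if_pos fun i _ => hp i).symm

lemma tendsto_mul_add_div_floor (c ε B : ℝ) {u : ℝ} (hu : 0 < u) :
    Tendsto (fun p : ℕ => (c * (ε * p) + B) / ⌊u * p⌋₊) atTop (𝓝 (c * ε / u)) := by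
  have hfloor : Tendsto (fun p : ℕ => (⌊u * p⌋₊ : ℝ) / p) atTop (𝓝 u) :=
    (tendsto_nat_floor_mul_div_atTop hu.le).comp tendsto_natCast_atTop_atTop
  have h := ((tendsto_const_div_atTop_nhds_zero_nat B).const_add (c * ε)).div hfloor hu.ne'
  rw [add_zero] at h
  refine h.congr' ?_
  filter_upwards [eventually_ne_atTop 0] with p hp
  have hp : (p : ℝ) ≠ 0 := Nat.cast_ne_zero.2 hp
  simp only [Pi.div_apply]
  field_simp

namespace IsTransformedWalk

variable (hK : IsTransformedWalk K α w ℓ r)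
include hK

open Classical in
lemma survival_eq_lintegral_walk (hα : ∀ p, 0 < α p) (η : Measure ℤ) [IsProbabilityMeasure η]
    (hη : ∀ x, η {x} = ENNReal.ofReal (w x)) {N : ℕ} (hN : ℓ ≤ N) (n p : ℕ) :
    survival (fun p q => ENNReal.ofReal (K p q)) (Set.Ioi N) n p
      = ∫⁻ ω, (if ∀ i ≤ n, (p : ℤ) + walk ω i ∈ Set.Ioi (N : ℤ)
          then ENNReal.ofReal (α ((p : ℤ) + walk ω n).toNat / α p) else 0)
          ∂(Measure.infinitePi fun _ : ℕ => η) := by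
  let h (x : ℤ) : ℝ≥0∞ := ENNReal.ofReal (α x.toNat / α p)
  have hdoob : ∀ i ∈ Set.Ioi N, ∀ j ∈ Set.Ioi N,
      ENNReal.ofReal (K i j) * h i = η {(j : ℤ) - i} * h j := fun i hi j hj => by
    have hi0 := (hα i).ne'
    rw [hη, ← ENNReal.ofReal_mul (hK.nonneg i j), mul_comm (ENNReal.ofReal _),
      ← ENNReal.ofReal_mul (div_pos (hα _) (hα p)).le,
      hK.eq_ratio_mul i j (hN.trans_lt hi) (hN.trans_lt hj), Int.toNat_natCast, Int.toNat_natCast]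
    congr 1
    field_simp
  have hp : h p = 1 := by simp [h, (hα p).ne']
  have hpre : ((↑) : ℕ → ℤ) ⁻¹' Set.Ioi (N : ℤ) = Set.Ioi N := by ext; simp
  calc survival (fun p q => ENNReal.ofReal (K p q)) (Set.Ioi N) n p
      = survival (fun p q => ENNReal.ofReal (K p q)) (Set.Ioi N) n p * h p := by rw [hp, mul_one]
    _ = killedSemigroup (fun i j : ℕ => η {(j : ℤ) - i}) (Set.Ioi N) (fun q => h q) n p :=
        survival_mul_eq_killedSemigroup hdoob n p
    _ = killedSemigroup (fun x y => η {y - x}) (Set.Ioi (N : ℤ)) h n p := by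
        have hrange : Set.Ioi (N : ℤ) ⊆ Set.range ((↑) : ℕ → ℤ) := fun x hx =>
          ⟨x.toNat, Int.toNat_of_nonneg (N.cast_nonneg.trans (le_of_lt hx))⟩
        rw [← killedSemigroup_comp_of_injective Nat.cast_injective hrange, hpre]
        rfl
    _ = _ := by
        convert (lintegral_walk_eq_killedSemigroup η (Set.Ioi (N : ℤ)) h n p).symm

lemma tendsto_survival_floor (hα : SmoothlyVarying α θ b) (hθ : 0 ≤ θ) (hw : ∀ x, 0 ≤ w x)
    (hw1 : HasSum w 1) (hm : 0 < m) (hwm : HasSum (fun x : ℤ => x * w x) m) (hε : 0 < ε)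
    (hε1 : ε < 1) (hs : 0 < s) :
    Tendsto (fun p : ℕ =>
        (survival (fun p q => ENNReal.ofReal (K p q)) (Set.Ioi ⌊ε * p⌋₊) ⌊s * p⌋₊ p).toReal)
      atTop (𝓝 ((1 + m * s) ^ (-θ))) := by
  obtain ⟨η, _, hη, hint, rfl⟩ := exists_probabilityMeasure_int hw hw1 hwm
  have hfloor : Tendsto (fun p : ℕ => (⌊s * p⌋₊ : ℝ) / p) atTop (𝓝 s) :=
    (tendsto_nat_floor_mul_div_atTop hs.le).comp tendsto_natCast_atTop_atTop
  have h := (ENNReal.tendsto_toReal ENNReal.ofReal_ne_top).comp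
    (hα.tendsto_lintegral_walk hθ η hint hm hε hε1 hs hfloor)
  rw [ENNReal.toReal_ofReal (by positivity)] at h
  refine h.congr' ?_
  filter_upwards [(tendsto_natCast_atTop_atTop.const_mul_atTop hε).eventually_ge_atTop (ℓ : ℝ)]
    with p hp
  rw [Function.comp_apply, hK.survival_eq_lintegral_walk hα.pos η hη (Nat.le_floor hp)]

lemma survival_le_add_of_mul_survival_le {c B : ℝ} (hc : 0 ≤ c) (hB : 0 ≤ B)
    (hdeath : ∀ k p : ℕ,
      k * (survival (fun p q => ENNReal.ofReal (K p q)) (Set.Ioi 0) k p).toReal ≤ c * p + B)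
    (hε : 0 ≤ ε) (hs : 0 ≤ s) {p : ℕ} (hp : 1 ≤ (t - s) * p) (M : ℕ) :
    (survival (fun p q => ENNReal.ofReal (K p q)) (Set.Ioi M) ⌊t * p⌋₊ p).toReal
      ≤ (survival (fun p q => ENNReal.ofReal (K p q)) (Set.Ioi ⌊ε * p⌋₊) ⌊s * p⌋₊ p).toReal
        + (c * (ε * p) + B) / ⌊(t - s) * p⌋₊ := by
  set k := ⌊(t - s) * p⌋₊
  have hk : (0 : ℝ) < k := Nat.cast_pos.2 (Nat.floor_pos.2 hp)
  have hκ := hK.tsum_ofReal_eq_one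
  have herr : 0 ≤ (c * (ε * p) + B) / k := by positivity
  have hlow : ∀ q ∉ Set.Ioi ⌊ε * p⌋₊, survival (fun p q => ENNReal.ofReal (K p q)) (Set.Ioi 0) k q
      ≤ ENNReal.ofReal ((c * (ε * p) + B) / k) := fun q hq => by
    have hq : (q : ℝ) ≤ ε * p := (Nat.le_floor_iff (by positivity)).1 (not_lt.1 hq)
    rw [← ENNReal.ofReal_toReal (survival_ne_top hκ _ _ _)]
    refine ENNReal.ofReal_le_ofReal ((le_div_iff₀' hk).2 ((hdeath k q).trans ?_))
    gcongr
  have htime : ⌊s * p⌋₊ + k ≤ ⌊t * p⌋₊ := Nat.le_floor <| by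
    have h₁ := Nat.floor_le (show 0 ≤ s * p by positivity)
    have h₂ : (k : ℝ) ≤ (t - s) * p := Nat.floor_le (zero_le_one.trans hp)
    push_cast
    linarith
  have h := ((survival_mono_set (Set.Ioi_subset_Ioi M.zero_le) _ p).trans
    (antitone_survival hκ (Set.Ioi 0) p htime)).trans
    (survival_add_le hκ (Set.Ioi_subset_Ioi (Nat.zero_le _)) hlow ⌊s * p⌋₊ p)
  have h' := ENNReal.toReal_mono
    (ENNReal.add_ne_top.2 ⟨survival_ne_top hκ _ _ _, ENNReal.ofReal_ne_top⟩) h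
  rwa [ENNReal.toReal_add (survival_ne_top hκ _ _ _) ENNReal.ofReal_ne_top,
    ENNReal.toReal_ofReal herr] at h'

lemma tendsto_survival (hα : SmoothlyVarying α θ b) (hθ : 1 < θ) (hw : ∀ x, 0 ≤ w x)
    (hw1 : HasSum w 1) (hm : 0 < m) (hwm : HasSum (fun x : ℤ => x * w x) m) (M : ℕ) (ht : 0 < t) :
    Tendsto (fun p : ℕ =>
        (survival (fun p q => ENNReal.ofReal (K p q)) (Set.Ioi M) ⌊t * p⌋₊ p).toReal)
      atTop (𝓝 ((1 + m * t) ^ (-θ))) := by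
  obtain ⟨δ, hδ, hdrift⟩ := hK.exists_drift_le hα hθ hw1 hm hwm
  obtain ⟨c, B, hc, hB, hdeath⟩ := hK.exists_mul_survival_le hδ hdrift
  have hlim {ε s : ℝ} (hε : 0 < ε) (hε1 : ε < 1) (hs : 0 < s) :=
    hK.tendsto_survival_floor hα (by positivity) hw hw1 hm hwm hε hε1 hs
  have hlarge {x : ℝ} (hx : 0 < x) (y : ℝ) : ∀ᶠ p : ℕ in atTop, y ≤ x * p :=
    (tendsto_natCast_atTop_atTop.const_mul_atTop hx).eventually_ge_atTop y
  refine tendsto_order.2 ⟨fun a ha => ?_, fun a ha => ?_⟩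
  · filter_upwards [(hlim one_half_pos one_half_lt_one ht).eventually (lt_mem_nhds ha),
      hlarge one_half_pos M] with p hp hpM
    exact hp.trans_le <| ENNReal.toReal_mono (survival_ne_top hK.tsum_ofReal_eq_one _ _ _)
      (survival_mono_set (Set.Ioi_subset_Ioi (Nat.le_floor hpM)) _ _)
  · have hcont : ContinuousAt (fun δ => (1 + m * ((1 - δ) * t)) ^ (-θ) + c * δ / t) 0 :=
      .add (.rpow_const (by fun_prop) (.inl (by rw [sub_zero, one_mul]; positivity))) (by fun_prop)
    have hnear : ∀ᶠ δ in 𝓝 (0 : ℝ),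
        (1 + m * ((1 - δ) * t)) ^ (-θ) + c * δ / t < a ∧ δ < 1 :=
      (Tendsto.eventually_lt_const (by simpa using ha) hcont).and (gt_mem_nhds one_pos)
    obtain ⟨δ, ⟨hδa, hδ1⟩, hδ0 : 0 < δ⟩ :=
      ((hnear.filter_mono nhdsWithin_le_nhds).and (self_mem_nhdsWithin (s := Set.Ioi 0))).exists
    have hs : 0 < (1 - δ) * t := mul_pos (sub_pos.2 hδ1) ht
    have hts : t - (1 - δ) * t = δ * t := by ring
    have herr := tendsto_mul_add_div_floor c (δ ^ 2) B (mul_pos hδ0 ht)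
    rw [show c * δ ^ 2 / (δ * t) = c * δ / t by field_simp] at herr
    filter_upwards [((hlim (pow_pos hδ0 2) (pow_lt_one₀ hδ0.le hδ1 two_ne_zero) hs).add
      herr).eventually (gt_mem_nhds hδa), hlarge (mul_pos hδ0 ht) 1] with p hp hp1
    refine (hK.survival_le_add_of_mul_survival_le hc hB hdeath (sq_nonneg δ) hs.le
      (by rwa [hts]) M).trans_lt ?_
    rwa [hts]

end IsTransformedWalk

end TransformedWalkLimit

section DiskParameter

lemma tendsto_tsum_mul_pow_zero {c : ℕ → ℂ} {y : ℂ} (hy : y ≠ 0)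
    (hc : Summable fun k => c k * y ^ k) :
    Tendsto (fun z => ∑' k, c k * z ^ k) (𝓝 0) (𝓝 (c 0)) := by
  have hzero : ∑' k, c k * 0 ^ k = c 0 := by
    rw [tsum_eq_single 0 fun k hk => by rw [zero_pow hk, mul_zero], pow_zero, mul_one]
  rw [← hzero]
  refine tendsto_tsum_of_dominated_convergence hc.norm
    (fun k => (continuous_const.mul (continuous_pow k)).tendsto 0) ?_
  filter_upwards [Metric.ball_mem_nhds 0 (norm_pos_iff.2 hy)] with z hz k
  rw [mem_ball_zero_iff] at hz
  rw [norm_mul, norm_mul, norm_pow, norm_pow]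
  gcongr

/-- A coordinate at the centre of the unit disk: `x` is holomorphic with derivative `d`, its only
zero in the closed disk is a simple one at `0`, and both `x` and `d` extend continuously to the
boundary. -/
structure IsDiskParameter (x d : ℂ → ℂ) : Prop where
  map_zero : x 0 = 0
  ne_zero : ∀ ζ ∈ Metric.closedBall (0 : ℂ) 1, ζ ≠ 0 → x ζ ≠ 0
  deriv_zero_ne : d 0 ≠ 0
  hasDerivAt : ∀ ζ ∈ Metric.ball (0 : ℂ) 1, HasDerivAt x (d ζ) ζ
  continuousOn : ContinuousOn x (Metric.closedBall 0 1)
  continuousOn_deriv : ContinuousOn d (Metric.closedBall 0 1)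

namespace IsDiskParameter

variable {x d g : ℂ → ℂ} {c : ℕ → ℂ} {p : ℕ} (hx : IsDiskParameter x d)
include hx

lemma differentiableAt_deriv {ζ : ℂ} (hζ : ζ ∈ Metric.ball (0 : ℂ) 1) : DifferentiableAt ℂ d ζ := by
  have hdiff : DifferentiableOn ℂ x (Metric.ball 0 1) := fun z hz =>
    (hx.hasDerivAt z hz).differentiableAt.differentiableWithinAt
  exact ((hdiff.deriv Metric.isOpen_ball).congr fun z hz => (hx.hasDerivAt z hz).deriv.symm)
    |>.differentiableAt (Metric.isOpen_ball.mem_nhds hζ)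

lemma hasDerivAt_zero : HasDerivAt x (d 0) 0 := hx.hasDerivAt 0 (Metric.mem_ball_self one_pos)

lemma tendsto_punctured_nhds_zero : Tendsto x (𝓝[≠] 0) (𝓝 0) := by
  simpa [hx.map_zero] using hx.hasDerivAt_zero.continuousAt.tendsto.mono_left nhdsWithin_le_nhds

lemma eventually_ne_zero : ∀ᶠ ζ in 𝓝[≠] 0, x ζ ≠ 0 := by
  filter_upwards [self_mem_nhdsWithin, mem_nhdsWithin_of_mem_nhds
    (Metric.closedBall_mem_nhds 0 one_pos)] with ζ hζ hζ1 using hx.ne_zero ζ hζ1 hζ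

lemma ne_zero_of_mem_sphere {ζ : ℂ} (hζ : ζ ∈ Metric.sphere (0 : ℂ) 1) : x ζ ≠ 0 :=
  hx.ne_zero ζ (Metric.sphere_subset_closedBall hζ) (ne_zero_of_mem_unit_sphere ⟨ζ, hζ⟩)

lemma tendsto_tail_div_pow (hsum : ∀ᶠ ζ in 𝓝[≠] 0, HasSum (fun k => c k * x ζ ^ k) (g ζ)) (p : ℕ) :
    Tendsto (fun ζ => (g ζ - ∑ k ∈ Finset.range p, c k * x ζ ^ k) / x ζ ^ p) (𝓝[≠] 0)
      (𝓝 (c p)) := by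
  have htail : ∀ᶠ ζ in 𝓝[≠] 0, x ζ ≠ 0 ∧ HasSum (fun k => c (k + p) * x ζ ^ k)
      ((g ζ - ∑ k ∈ Finset.range p, c k * x ζ ^ k) / x ζ ^ p) := by
    filter_upwards [hsum, hx.eventually_ne_zero] with ζ hζ hxζ
    refine ⟨hxζ, (((hasSum_nat_add_iff' p).2 hζ).div_const (x ζ ^ p)).congr_fun fun k => ?_⟩
    rw [pow_add, ← mul_assoc, mul_div_cancel_right₀ _ (pow_ne_zero p hxζ)]
  obtain ⟨ζ₀, hxζ₀, hζ₀⟩ := htail.exists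
  have h := (tendsto_tsum_mul_pow_zero hxζ₀ hζ₀.summable).comp hx.tendsto_punctured_nhds_zero
  rw [zero_add] at h
  exact h.congr' (htail.mono fun ζ hζ => hζ.2.tsum_eq)

lemma tendsto_coeff_zero (hsum : ∀ᶠ ζ in 𝓝[≠] 0, HasSum (fun k => c k * x ζ ^ k) (g ζ)) :
    Tendsto g (𝓝[≠] 0) (𝓝 (c 0)) := by
  simpa using hx.tendsto_tail_div_pow hsum 0

lemma tendsto_coeff_one (hsum : ∀ᶠ ζ in 𝓝[≠] 0, HasSum (fun k => c k * x ζ ^ k) (g ζ)) :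
    Tendsto (fun ζ => (g ζ - c 0) / x ζ) (𝓝[≠] 0) (𝓝 (c 1)) := by
  simpa using hx.tendsto_tail_div_pow hsum 1

lemma coeff_one_eq_div {g' : ℂ} (hg : HasDerivAt g g' 0)
    (hsum : ∀ᶠ ζ in 𝓝[≠] 0, HasSum (fun k => c k * x ζ ^ k) (g ζ)) : c 1 = g' / d 0 := by
  have hc0 : c 0 = g 0 := tendsto_nhds_unique (hx.tendsto_coeff_zero hsum)
    (hg.continuousAt.tendsto.mono_left nhdsWithin_le_nhds)
  have hslope := hg.tendsto_slope.div hx.hasDerivAt_zero.tendsto_slope hx.deriv_zero_ne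
  refine tendsto_nhds_unique (hx.tendsto_coeff_one hsum) (hslope.congr' ?_)
  filter_upwards [self_mem_nhdsWithin] with ζ hζ
  simp only [Pi.div_apply, slope_def_field]
  rw [hx.map_zero, sub_zero, sub_zero, hc0, div_div_div_cancel_right₀ hζ]

lemma circleIntegral_div_pow_eq_zero (n : ℕ) : ∮ ζ in C(0, 1), d ζ / x ζ ^ (n + 2) = 0 := by
  have hne {ζ : ℂ} (hζ : ζ ∈ Metric.closedBall (0 : ℂ) 1) (hζ' : ζ ∉ Metric.ball (0 : ℂ) (1 / 2)) :
      x ζ ≠ 0 := hx.ne_zero ζ hζ fun h => hζ' (h ▸ Metric.mem_ball_self one_half_pos)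
  have hcont : ContinuousOn (fun ζ => d ζ / x ζ ^ (n + 2))
      (Metric.closedBall 0 1 \ Metric.ball 0 (1 / 2)) :=
    (hx.continuousOn_deriv.mono Set.sdiff_subset).div
      ((hx.continuousOn.mono Set.sdiff_subset).pow _) fun ζ hζ => pow_ne_zero _ (hne hζ.1 hζ.2)
  -- The integrand is exact off the centre, but a primitive is only available inside the open disk.
  rw [Complex.circleIntegral_eq_of_differentiable_on_annulus_off_countable one_half_pos
    one_half_lt_one.le Set.countable_empty hcont fun ζ hζ =>
      (hx.differentiableAt_deriv hζ.1.1).div ((hx.hasDerivAt ζ hζ.1.1).differentiableAt.pow _)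
        (pow_ne_zero _ (hne (Metric.ball_subset_closedBall hζ.1.1) fun h =>
          hζ.1.2 (Metric.ball_subset_closedBall h)))]
  refine circleIntegral.integral_eq_zero_of_hasDerivWithinAt one_half_pos.le
    (f := fun ζ => -((n : ℂ) + 1)⁻¹ * (x ζ ^ (n + 1))⁻¹) fun ζ hζ => ?_
  rw [mem_sphere_zero_iff_norm] at hζ
  have hζ1 : ζ ∈ Metric.ball (0 : ℂ) 1 := by rw [mem_ball_zero_iff, hζ]; exact one_half_lt_one
  have hxζ : x ζ ≠ 0 := hne (Metric.ball_subset_closedBall hζ1) (by simp [hζ])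
  have h := (((hx.hasDerivAt ζ hζ1).pow (n + 1)).inv (pow_ne_zero _ hxζ)).const_mul
    (-((n : ℂ) + 1)⁻¹)
  refine (h.congr_deriv ?_).hasDerivWithinAt
  have hn : (n : ℂ) + 1 ≠ 0 := n.cast_add_one_ne_zero
  simp only [Pi.pow_apply, Nat.cast_add, Nat.cast_one, add_tsub_cancel_right]
  field_simp
  ring

lemma circleIntegrable_mul_div_pow (hg : ContinuousOn g (Metric.closedBall 0 1)) (n : ℕ) :
    CircleIntegrable (fun ζ => g ζ * d ζ / x ζ ^ n) 0 1 :=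
  have hsub := Metric.sphere_subset_closedBall (x := (0 : ℂ)) (ε := 1)
  ContinuousOn.circleIntegrable zero_le_one <|
    ((hg.mono hsub).mul (hx.continuousOn_deriv.mono hsub)).div ((hx.continuousOn.mono hsub).pow n)
      fun _ hζ => pow_ne_zero _ (hx.ne_zero_of_mem_sphere hζ)

lemma circleIntegral_mul_div_pow_of_tendsto {y : ℂ} (hgc : ContinuousOn g (Metric.closedBall 0 1))
    (hgd : DifferentiableOn ℂ g (Metric.ball 0 1))
    (hlim : Tendsto (fun ζ => g ζ / x ζ ^ p) (𝓝[≠] 0) (𝓝 y)) :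
    ∮ ζ in C(0, 1), g ζ * d ζ / x ζ ^ (p + 1) = 2 * π * Complex.I * y := by
  have hlim' : Tendsto (fun ζ => ζ * (g ζ * d ζ / x ζ ^ (p + 1))) (𝓝[≠] 0) (𝓝 y) := by
    have hslope := hx.hasDerivAt_zero.tendsto_slope.inv₀ hx.deriv_zero_ne
    have hd := (hx.differentiableAt_deriv (Metric.mem_ball_self one_pos)).continuousAt.tendsto
    have h := (hlim.mul (hd.mono_left nhdsWithin_le_nhds)).mul hslope
    rw [mul_assoc, mul_inv_cancel₀ hx.deriv_zero_ne, mul_one] at h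
    refine h.congr fun ζ => ?_
    rw [slope_def_field, hx.map_zero, sub_zero, sub_zero, inv_div, pow_succ]
    ring
  have hcont : ContinuousOn (fun ζ => ζ * (g ζ * d ζ / x ζ ^ (p + 1)))
      (Metric.closedBall 0 1 \ {0}) :=
    continuousOn_id.mul <| ((hgc.mono Set.sdiff_subset).mul
      (hx.continuousOn_deriv.mono Set.sdiff_subset)).div
        ((hx.continuousOn.mono Set.sdiff_subset).pow _)
        fun ζ hζ => pow_ne_zero _ (hx.ne_zero ζ hζ.1 hζ.2)
  rw [← smul_eq_mul (2 * π * Complex.I),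
    ← Complex.circleIntegral_sub_center_inv_smul_of_differentiable_on_off_countable_of_tendsto
      one_pos Set.countable_empty hcont (fun ζ hζ => ?_) hlim']
  · refine circleIntegral.integral_congr zero_le_one fun ζ hζ => ?_
    have hζ0 : ζ ≠ 0 := ne_zero_of_mem_unit_sphere ⟨ζ, hζ⟩
    simp only [sub_zero, smul_eq_mul]
    rw [inv_mul_cancel_left₀ hζ0]
  · obtain ⟨⟨hζ, hζ0⟩, -⟩ := hζ
    exact differentiableAt_id.mul <| ((hgd.differentiableAt (Metric.isOpen_ball.mem_nhds hζ)).mul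
      (hx.differentiableAt_deriv hζ)).div ((hx.hasDerivAt ζ hζ).differentiableAt.pow _)
        (pow_ne_zero _ (hx.ne_zero ζ (Metric.ball_subset_closedBall hζ) hζ0))

lemma circleIntegral_eq_coeff (hgc : ContinuousOn g (Metric.closedBall 0 1))
    (hgd : DifferentiableOn ℂ g (Metric.ball 0 1))
    (hsum : ∀ᶠ ζ in 𝓝[≠] 0, HasSum (fun k => c k * x ζ ^ k) (g ζ)) (p : ℕ) :
    ∮ ζ in C(0, 1), g ζ * d ζ / x ζ ^ (p + 1) = 2 * π * Complex.I * c p := by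
  have hterm_cont (k : ℕ) : ContinuousOn (fun ζ => c k * x ζ ^ k) (Metric.closedBall 0 1) :=
    continuousOn_const.mul (hx.continuousOn.pow k)
  have hhead_cont := continuousOn_finsetSum (Finset.range p) fun k _ => hterm_cont k
  have hhead_diff : DifferentiableOn ℂ (fun ζ => ∑ k ∈ Finset.range p, c k * x ζ ^ k)
      (Metric.ball 0 1) := fun ζ hζ => (DifferentiableAt.fun_sum fun k _ =>
    ((hx.hasDerivAt ζ hζ).differentiableAt.pow k).const_mul (c k)).differentiableWithinAt
  have hterm : ∀ k ∈ Finset.range p,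
      ∮ ζ in C(0, 1), c k * x ζ ^ k * d ζ / x ζ ^ (p + 1) = 0 := fun k hk => by
    obtain ⟨j, rfl⟩ := Nat.exists_eq_add_of_lt (Finset.mem_range.1 hk)
    calc ∮ ζ in C(0, 1), c k * x ζ ^ k * d ζ / x ζ ^ (k + j + 1 + 1)
      _ = ∮ ζ in C(0, 1), c k * (d ζ / x ζ ^ (j + 2)) :=
        circleIntegral.integral_congr zero_le_one fun ζ hζ => by
          have hxζ := hx.ne_zero_of_mem_sphere hζ
          have hpow : x ζ ^ (k + j + 1 + 1) = x ζ ^ k * x ζ ^ (j + 2) := by rw [← pow_add]; rfl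
          simp only [hpow]
          field_simp
      _ = 0 := by
        rw [circleIntegral.integral_const_mul, hx.circleIntegral_div_pow_eq_zero j, mul_zero]
  have hhead : ∮ ζ in C(0, 1), (∑ k ∈ Finset.range p, c k * x ζ ^ k) * d ζ / x ζ ^ (p + 1) = 0 := by
    simp only [Finset.sum_mul, Finset.sum_div]
    rw [circleIntegral.integral_fun_sum, Finset.sum_eq_zero hterm]
    exact fun k _ => hx.circleIntegrable_mul_div_pow (hterm_cont k) _
  have htail := hx.circleIntegral_mul_div_pow_of_tendsto (hgc.sub hhead_cont)
    (hgd.sub hhead_diff) (hx.tendsto_tail_div_pow hsum p)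
  simp only [Pi.sub_apply, sub_mul, sub_div] at htail
  rwa [circleIntegral.integral_sub (hx.circleIntegrable_mul_div_pow hgc _)
    (hx.circleIntegrable_mul_div_pow hhead_cont _), hhead, sub_zero] at htail

end IsDiskParameter

end DiskParameter

section Constants

lemma sq_sqrt_seven : √7 ^ 2 = 7 := Real.sq_sqrt (by norm_num)

lemma tc_pos : 0 < tc := by unfold tc; positivity

lemma uc_pos : 0 < uc := mul_pos (by positivity) tc_pos

lemma nuc_pos : 0 < nuc := by unfold nuc; positivity

lemma nuc_sq_sub_one : nuc ^ 2 - 1 = 4 * (7 + √7) := by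
  unfold nuc
  linear_combination 4 * sq_sqrt_seven

lemma tc_eq : tc = 5 * (7 - √7) / 252 * uc := by
  unfold uc
  linear_combination 6 / 252 * tc * sq_sqrt_seven

lemma nuc_sq_sub_one_mul_tc : (nuc ^ 2 - 1) * tc = 10 / 3 * uc := by
  rw [nuc_sq_sub_one, uc]
  ring

lemma uc_sq : uc ^ 2 = 9 / (40 * (7 + √7)) := by
  have hbase : 0 < 7 + √7 := by positivity
  have htc : tc ^ 2 = 10 / (64 * (7 + √7) ^ 3) := by
    unfold tc
    rw [div_pow, mul_pow, Real.sq_sqrt (by norm_num), ← Real.rpow_natCast (_ ^ _),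
      ← Real.rpow_mul hbase.le]
    norm_num
  unfold uc
  rw [mul_pow, htc]
  field_simp
  norm_num

lemma nuc_sq_sub_one_mul_uc_sq : (nuc ^ 2 - 1) * uc ^ 2 = 9 / 10 := by
  rw [nuc_sq_sub_one, uc_sq]
  field_simp
  norm_num

end Constants

section Parametrization

lemma cube_add_two_ne_zero {w : ℂ} (hw : 1 ≤ w.re) : w ^ 3 + 2 ≠ 0 := by
  intro h
  have hre : w.re ^ 3 - 3 * w.re * w.im ^ 2 + 2 = 0 := by
    have := congrArg Complex.re h
    simp only [pow_succ, pow_zero, one_mul, Complex.add_re, Complex.mul_re, Complex.mul_im,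
      Complex.re_ofNat, Complex.zero_re] at this
    linarith
  have him : w.im * (3 * w.re ^ 2 - w.im ^ 2) = 0 := by
    have := congrArg Complex.im h
    simp only [pow_succ, pow_zero, one_mul, Complex.add_im, Complex.mul_re, Complex.mul_im,
      Complex.im_ofNat, Complex.zero_im] at this
    linarith
  have hcube : 1 ≤ w.re ^ 3 := one_le_pow₀ hw
  rcases mul_eq_zero.1 him with him | him
  · rw [him] at hre
    linarith
  · rw [← sub_eq_zero.1 him] at hre
    linarith

lemma ten_sub_ne_zero_of_re_le_one {H : ℂ} (hH : H.re ≤ 1) :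
    10 - 12 * H + 6 * H ^ 2 - H ^ 3 ≠ 0 := by
  have hcube := cube_add_two_ne_zero (w := 2 - H) (by
    rw [Complex.sub_re, Complex.re_ofNat]; linarith)
  rwa [show 10 - 12 * H + 6 * H ^ 2 - H ^ 3 = (2 - H) ^ 3 + 2 by ring]

lemma ten_sub_ne_zero {H : ℂ} (hH : ‖H‖ ≤ 1) : 10 - 12 * H + 6 * H ^ 2 - H ^ 3 ≠ 0 :=
  ten_sub_ne_zero_of_re_le_one ((Complex.re_le_norm H).trans hH)

lemma three_le_norm_ten_sub {H : ℂ} (hH : ‖H‖ = 1) :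
    3 ≤ ‖10 - 12 * H + 6 * H ^ 2 - H ^ 3‖ := by
  have hcircle : H.im ^ 2 = 1 - H.re ^ 2 := by
    have := Complex.sq_norm H
    rw [Complex.normSq_apply, hH] at this
    linarith
  have hre1 : H.re ≤ 1 := hH ▸ Complex.re_le_norm H
  have hre : (10 - 12 * H + 6 * H ^ 2 - H ^ 3).re
      = 4 - 9 * H.re + 12 * H.re ^ 2 - 4 * H.re ^ 3 := by
    simp only [pow_succ, pow_zero, one_mul, Complex.sub_re, Complex.add_re, Complex.mul_re,
      Complex.mul_im, Complex.re_ofNat, Complex.im_ofNat]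
    linear_combination (-6 + 3 * H.re) * hcircle
  have him : (10 - 12 * H + 6 * H ^ 2 - H ^ 3).im
      = H.im * (-11 + 12 * H.re - 4 * H.re ^ 2) := by
    simp only [pow_succ, pow_zero, one_mul, Complex.sub_im, Complex.add_im, Complex.mul_re,
      Complex.mul_im, Complex.re_ofNat, Complex.im_ofNat]
    linear_combination H.im * hcircle
  have hexcess : 0 ≤ 16 * (1 - H.re) ^ 2 * (8 - 5 * H.re) :=
    mul_nonneg (by positivity) (by linarith)
  refine le_of_sq_le_sq ?_ (norm_nonneg _)
  rw [Complex.sq_norm, Complex.normSq_apply, hre, him]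
  linear_combination hexcess - (-11 + 12 * H.re - 4 * H.re ^ 2) ^ 2 * hcircle

lemma uhat_zero : uhat 0 = 0 := by rw [uhat, mul_zero, zero_mul]

lemma uhat_ne_zero {H : ℂ} (hH : ‖H‖ ≤ 1) (hH0 : H ≠ 0) : uhat H ≠ 0 :=
  mul_ne_zero (mul_ne_zero (div_ne_zero (Complex.ofReal_ne_zero.2 uc_pos.ne') three_ne_zero) hH0)
    (ten_sub_ne_zero hH)

lemma uc_le_norm_uhat {H : ℂ} (hH : ‖H‖ = 1) : uc ≤ ‖uhat H‖ := by
  rw [uhat, norm_mul, norm_mul, hH, norm_div, Complex.norm_real, Real.norm_of_nonneg uc_pos.le,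
    Complex.norm_ofNat, mul_one]
  nlinarith [uc_pos, three_le_norm_ten_sub hH]

/-- The derivative of `uhat`. -/
noncomputable def duhat (H : ℂ) : ℂ :=
  ((uc : ℂ) / 3) * (10 - 24 * H + 18 * H ^ 2 - 4 * H ^ 3)

lemma continuous_uhat : Continuous uhat := by unfold uhat; fun_prop

lemma continuous_duhat : Continuous duhat := by unfold duhat; fun_prop

lemma duhat_zero_ne_zero : duhat 0 ≠ 0 := by
  rw [duhat]
  norm_num [uc_pos.ne']

lemma hasDerivAt_uhat (H : ℂ) : HasDerivAt uhat (duhat H) H := by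
  have hcubic : HasDerivAt (fun H : ℂ => 10 - 12 * H + 6 * H ^ 2 - H ^ 3) _ H :=
    ((((hasDerivAt_id H).const_mul 12).const_sub 10).add
      (((hasDerivAt_id H).pow 2).const_mul 6)).sub ((hasDerivAt_id H).pow 3)
  refine (((hasDerivAt_id H).const_mul ((uc : ℂ) / 3)).mul hcubic).congr_deriv ?_
  simp only [duhat, id]
  push_cast
  ring

lemma isDiskParameter_uhat : IsDiskParameter uhat duhat where
  map_zero := uhat_zero
  ne_zero _ hH := uhat_ne_zero (mem_closedBall_zero_iff.1 hH)
  deriv_zero_ne := duhat_zero_ne_zero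
  hasDerivAt _ _ := hasDerivAt_uhat _
  continuousOn := continuous_uhat.continuousOn
  continuousOn_deriv := continuous_duhat.continuousOn

lemma differentiable_Z0hat : Differentiable ℂ Z0hat := by unfold Z0hat; fun_prop

lemma differentiableAt_Z1hat {H : ℂ} (hH : ‖H‖ ≤ 1) : DifferentiableAt ℂ Z1hat H := by
  have := ten_sub_ne_zero hH
  unfold Z1hat
  fun_prop (disch := assumption)

lemma Z0hat_zero : Z0hat 0 = 1 := by norm_num [Z0hat]

lemma Z1hat_zero : Z1hat 0 = 3 / (10 * (uc : ℂ)) * (√7 - 1 - 6 / 5) := by norm_num [Z1hat]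

lemma tendsto_uhat : Tendsto uhat (𝓝[≠] 0) (𝓝 0) := isDiskParameter_uhat.tendsto_punctured_nhds_zero

lemma tendsto_Z0hat : Tendsto Z0hat (𝓝[≠] 0) (𝓝 1) :=
  Z0hat_zero ▸ (differentiable_Z0hat.continuous.tendsto 0).mono_left nhdsWithin_le_nhds

lemma tendsto_Z1hat : Tendsto Z1hat (𝓝[≠] 0) (𝓝 (Z1hat 0)) :=
  (differentiableAt_Z1hat (norm_zero.trans_le zero_le_one)).continuousAt.tendsto.mono_left
    nhdsWithin_le_nhds

/-- The limit `v → 0` of the functional equation for `Z(u, v)`. -/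
lemma uhat_sq_mul_Z1hat {H : ℂ} (hH : ‖H‖ ≤ 1) :
    uhat H ^ 2 * Z1hat H = nuc * uhat H * (Z0hat H - 1)
      - ((nuc : ℂ) ^ 2 - 1) * (tc * (Z0hat H ^ 2 - Z0hat H - uhat H * Z1hat 0) + uhat H ^ 3) := by
  have hden := ten_sub_ne_zero hH
  have huc : (uc : ℂ) ≠ 0 := Complex.ofReal_ne_zero.2 uc_pos.ne'
  have hs : (√7 : ℂ) ^ 2 = 7 := mod_cast sq_sqrt_seven
  have htc : ((nuc : ℂ) ^ 2 - 1) * tc = 10 / 3 * uc := by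
    simpa using congrArg Complex.ofReal nuc_sq_sub_one_mul_tc
  have huc2 : ((nuc : ℂ) ^ 2 - 1) * uc ^ 2 = 9 / 10 := by
    simpa using congrArg Complex.ofReal nuc_sq_sub_one_mul_uc_sq
  have hZ0 : 10 * uc * Z1hat 0 = 3 * (√7 - 11 / 5) := by
    rw [Z1hat_zero]
    field_simp
    ring
  have hZ : 10 * uc * ((10 - 12 * H + 6 * H ^ 2 - H ^ 3) * Z1hat H) =
      3 * ((√7 - 1 + H) * (10 - 12 * H + 6 * H ^ 2 - H ^ 3) - 3 * (4 - 3 * H + H ^ 2)) := by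
    rw [Z1hat]
    generalize 10 - 12 * H + 6 * H ^ 2 - H ^ 3 = P at hden ⊢
    field_simp
  have hnuc : (nuc : ℂ) = 1 + 2 * √7 := by rw [nuc]; push_cast; rfl
  rw [mul_add, ← mul_assoc _ (tc : ℂ), htc]
  simp only [hnuc, uhat, Z0hat] at huc2 ⊢
  generalize hP : 10 - 12 * H + 6 * H ^ 2 - H ^ 3 = P at hZ ⊢
  linear_combination (uc * H ^ 2 * P / 90) * hZ - (uc * H * P / 9) * hZ0
    + uc * H ^ 3 * P ^ 3 / 27 * huc2 - uc * H ^ 2 * P ^ 2 / 30 * hs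
    + uc * P * (3 * H - 1 - H ^ 3 * P) / 30 * hP

end Parametrization

section KernelEquation

/-- The double power series `∑ z_{p,q} x^p y^q`. -/
noncomputable def doubleSeries (z : ℕ → ℕ → ℝ) (x y : ℂ) : ℂ :=
  ∑' pq : ℕ × ℕ, (z pq.1 pq.2 : ℂ) * x ^ pq.1 * y ^ pq.2

section DoubleSeries

variable {z : ℕ → ℕ → ℝ} {x y : ℂ}

lemma summable_row (hx : x ≠ 0)
    (h : Summable fun pq : ℕ × ℕ => (z pq.1 pq.2 : ℂ) * x ^ pq.1 * y ^ pq.2) (p : ℕ) :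
    Summable fun q => (z p q : ℂ) * y ^ q := by
  refine ((h.prod_factor p).mul_left (x ^ p)⁻¹).congr fun q => ?_
  have hxp := pow_ne_zero p hx
  field_simp

lemma hasSum_tsum_row_mul_pow (hx : x ≠ 0)
    (h : Summable fun pq : ℕ × ℕ => (z pq.1 pq.2 : ℂ) * x ^ pq.1 * y ^ pq.2) :
    HasSum (fun p => (∑' q, (z p q : ℂ) * y ^ q) * x ^ p) (doubleSeries z x y) :=
  h.hasSum.prod_fiberwise fun p => ((summable_row hx h p).hasSum.mul_right (x ^ p)).congr_fun
    fun _ => mul_right_comm _ _ _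

lemma summable_swap (h : Summable fun pq : ℕ × ℕ => (z pq.1 pq.2 : ℂ) * x ^ pq.1 * y ^ pq.2) :
    Summable fun qp : ℕ × ℕ => (z qp.2 qp.1 : ℂ) * y ^ qp.1 * x ^ qp.2 :=
  ((Equiv.prodComm ℕ ℕ).summable_iff.2 h).congr fun _ => mul_right_comm _ _ _

lemma doubleSeries_swap : doubleSeries (fun q p => z p q) y x = doubleSeries z x y :=
  ((Equiv.prodComm ℕ ℕ).tsum_eq _).symm.trans (tsum_congr fun _ => mul_right_comm _ _ _)

end DoubleSeries

/-- `z` is the family of coefficients at `(0, 0)` of the solution `Z(u, v)` of the functional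
equation, the variables being parametrized as `u = û(H)` and `v = û(K)`. -/
def SolvesKernelEquation (ρ : ℝ) (z : ℕ → ℕ → ℝ) : Prop :=
  ∀ H K : ℂ, ‖H‖ < ρ → ‖K‖ < ρ → ∃ ZHK : ℂ,
    HasSum (fun pq : ℕ × ℕ => (z pq.1 pq.2 : ℂ) * uhat H ^ pq.1 * uhat K ^ pq.2) ZHK ∧
    ((nuc : ℂ) * uhat K * uhat H - uhat H ^ 2
        - ((nuc : ℂ) ^ 2 - 1) * (tc : ℂ) * uhat K * (Z0hat H + uhat H * Z1hat K))
        * (ZHK - Z0hat K)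
      = uhat H ^ 2 * (Z0hat K - Z0hat H)
        + ((nuc : ℂ) ^ 2 - 1) * uhat H * uhat K * (uhat H ^ 2 - (tc : ℂ) * Z0hat H * Z1hat K)

/-- `c` is the family of coefficients of `g ∘ û⁻¹` at `0`. -/
def HasUhatExpansion (c : ℕ → ℝ) (g : ℂ → ℂ) : Prop :=
  ∀ᶠ H in 𝓝[≠] 0, HasSum (fun k => (c k : ℂ) * uhat H ^ k) (g H)

lemma eventually_norm_lt_norm_le_one_ne_zero {r : ℝ} (hr : 0 < r) :
    ∀ᶠ H : ℂ in 𝓝[≠] 0, ‖H‖ < r ∧ ‖H‖ ≤ 1 ∧ H ≠ 0 := by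
  filter_upwards [self_mem_nhdsWithin,
    mem_nhdsWithin_of_mem_nhds (Metric.ball_mem_nhds 0 (lt_min hr one_pos))] with H hH0 hH
  rw [mem_ball_zero_iff, lt_min_iff] at hH
  exact ⟨hH.1, hH.2.le, hH0⟩

lemma hasUhatExpansion_of_norm_lt {c : ℕ → ℝ} {g : ℂ → ℂ} {ρ : ℝ} (hρ : 0 < ρ)
    (h : ∀ H : ℂ, ‖H‖ < ρ → HasSum (fun k => (c k : ℂ) * uhat H ^ k) (g H)) :
    HasUhatExpansion c g :=
  (eventually_norm_lt_norm_le_one_ne_zero hρ).mono fun H hH => h H hH.1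

namespace SolvesKernelEquation

variable {ρ : ℝ} {z : ℕ → ℕ → ℝ} {H K : ℂ} (h : SolvesKernelEquation ρ z)
include h

lemma summable (hH : ‖H‖ < ρ) (hK : ‖K‖ < ρ) :
    Summable fun pq : ℕ × ℕ => (z pq.1 pq.2 : ℂ) * uhat H ^ pq.1 * uhat K ^ pq.2 :=
  let ⟨_, hsum, _⟩ := h H K hH hK
  hsum.summable

lemma doubleSeries_eq (hH : ‖H‖ < ρ) (hK : ‖K‖ < ρ) :
    (nuc * uhat K * uhat H - uhat H ^ 2
        - ((nuc : ℂ) ^ 2 - 1) * tc * uhat K * (Z0hat H + uhat H * Z1hat K))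
        * (doubleSeries z (uhat H) (uhat K) - Z0hat K)
      = uhat H ^ 2 * (Z0hat K - Z0hat H)
        + ((nuc : ℂ) ^ 2 - 1) * uhat H * uhat K * (uhat H ^ 2 - tc * Z0hat H * Z1hat K) := by
  obtain ⟨_, hsum, heq⟩ := h H K hH hK
  rwa [doubleSeries, hsum.tsum_eq]

lemma eventually_hasSum_row (hρ : 0 < ρ) (hK : ‖K‖ < ρ) :
    ∀ᶠ H in 𝓝[≠] 0, HasSum (fun p => (∑' q, (z p q : ℂ) * uhat K ^ q) * uhat H ^ p)
      (doubleSeries z (uhat H) (uhat K)) := by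
  filter_upwards [eventually_norm_lt_norm_le_one_ne_zero hρ] with H hH
  exact hasSum_tsum_row_mul_pow (uhat_ne_zero hH.2.1 hH.2.2) (h.summable hH.1 hK)

lemma eventually_hasSum_column (hρ : 0 < ρ) (hH : ‖H‖ < ρ) :
    ∀ᶠ K in 𝓝[≠] 0, HasSum (fun q => (∑' p, (z p q : ℂ) * uhat H ^ p) * uhat K ^ q)
      (doubleSeries z (uhat H) (uhat K)) := by
  filter_upwards [eventually_norm_lt_norm_le_one_ne_zero hρ] with K hK
  rw [← doubleSeries_swap]
  exact hasSum_tsum_row_mul_pow (z := fun q p => z p q) (uhat_ne_zero hK.2.1 hK.2.2)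
    (summable_swap (h.summable hH hK.1))

omit h in
lemma tendsto_kernel (K : ℂ) :
    Tendsto (fun H => nuc * uhat K * uhat H - uhat H ^ 2
        - ((nuc : ℂ) ^ 2 - 1) * tc * uhat K * (Z0hat H + uhat H * Z1hat K)) (𝓝[≠] 0)
      (𝓝 (-(((nuc : ℂ) ^ 2 - 1) * tc * uhat K))) := by
  have hlim := ((tendsto_uhat.const_mul (nuc * uhat K)).sub (tendsto_uhat.pow 2)).sub
    ((tendsto_Z0hat.add (tendsto_uhat.mul_const (Z1hat K))).const_mul
      (((nuc : ℂ) ^ 2 - 1) * tc * uhat K))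
  simpa using hlim

omit h in
lemma kernel_zero_ne_zero (hK : uhat K ≠ 0) : ((nuc : ℂ) ^ 2 - 1) * tc * uhat K ≠ 0 := by
  refine mul_ne_zero ?_ hK
  have htc : (nuc ^ 2 - 1) * tc ≠ 0 := by
    rw [nuc_sq_sub_one_mul_tc]
    exact (mul_pos (by norm_num) uc_pos).ne'
  exact_mod_cast htc

/-- The limit `u → 0` of the equation. -/
lemma tsum_row_zero (hρ : 0 < ρ) (hKρ : ‖K‖ < ρ) (hK : uhat K ≠ 0) :
    ∑' q, (z 0 q : ℂ) * uhat K ^ q = Z0hat K := by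
  have hZ := isDiskParameter_uhat.tendsto_coeff_zero (h.eventually_hasSum_row hρ hKρ)
  have hlhs := (tendsto_kernel K).mul (hZ.sub_const (Z0hat K))
  have hrhs : Tendsto (fun H => uhat H ^ 2 * (Z0hat K - Z0hat H)
      + ((nuc : ℂ) ^ 2 - 1) * uhat H * uhat K * (uhat H ^ 2 - tc * Z0hat H * Z1hat K))
      (𝓝[≠] 0) (𝓝 0) := by
    have hlim := ((tendsto_uhat.pow 2).mul (tendsto_Z0hat.const_sub (Z0hat K))).add
      (((tendsto_uhat.const_mul ((nuc : ℂ) ^ 2 - 1)).mul_const (uhat K)).mul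
        ((tendsto_uhat.pow 2).sub ((tendsto_Z0hat.const_mul (tc : ℂ)).mul_const (Z1hat K))))
    simpa using hlim
  have heq := tendsto_nhds_unique_of_eventuallyEq hlhs hrhs <|
    (eventually_norm_lt_norm_le_one_ne_zero hρ).mono fun H hH => h.doubleSeries_eq hH.1 hKρ
  exact sub_eq_zero.1
    ((mul_eq_zero.1 heq).resolve_left (neg_ne_zero.2 (kernel_zero_ne_zero hK)))

/-- The first order in `u` of the equation. -/
lemma tsum_row_one (hρ : 0 < ρ) (hKρ : ‖K‖ < ρ) (hK : uhat K ≠ 0) :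
    ∑' q, (z 1 q : ℂ) * uhat K ^ q = Z1hat K := by
  have hZ := isDiskParameter_uhat.tendsto_coeff_one (h.eventually_hasSum_row hρ hKρ)
  have hlhs := (tendsto_kernel K).mul hZ
  have hrhs : Tendsto (fun H => uhat H * (Z0hat K - Z0hat H)
      + ((nuc : ℂ) ^ 2 - 1) * uhat K * (uhat H ^ 2 - tc * Z0hat H * Z1hat K))
      (𝓝[≠] 0) (𝓝 (-(((nuc : ℂ) ^ 2 - 1) * tc * uhat K) * Z1hat K)) := by
    have hlim := (tendsto_uhat.mul (tendsto_Z0hat.const_sub (Z0hat K))).add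
      (((tendsto_uhat.pow 2).sub ((tendsto_Z0hat.const_mul (tc : ℂ)).mul_const
        (Z1hat K))).const_mul (((nuc : ℂ) ^ 2 - 1) * uhat K))
    convert hlim using 2
    ring
  refine mul_left_cancel₀ (neg_ne_zero.2 (kernel_zero_ne_zero hK)) <|
    tendsto_nhds_unique_of_eventuallyEq hlhs hrhs ?_
  filter_upwards [eventually_norm_lt_norm_le_one_ne_zero hρ] with H hH
  have hH0 := uhat_ne_zero hH.2.1 hH.2.2
  rw [h.tsum_row_zero hρ hKρ hK, ← mul_div_assoc, h.doubleSeries_eq hH.1 hKρ]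
  field_simp

/-- The first order in `v` of the equation. -/
lemma tsum_column_one (hρ : 0 < ρ) (hz0 : ∑' p, (z p 0 : ℂ) * uhat H ^ p = Z0hat H)
    (hHρ : ‖H‖ < ρ) (hH1 : ‖H‖ ≤ 1) (hH : uhat H ≠ 0) :
    ∑' p, (z p 1 : ℂ) * uhat H ^ p = Z1hat H := by
  have hcol := h.eventually_hasSum_column hρ hHρ
  have hZ := isDiskParameter_uhat.tendsto_coeff_zero hcol
  have hdZ := isDiskParameter_uhat.tendsto_coeff_one hcol
  rw [hz0] at hZ
  have hlhs := ((((tendsto_Z1hat.const_mul (uhat H)).const_add (Z0hat H)).const_mul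
    (((nuc : ℂ) ^ 2 - 1) * tc)).const_sub (nuc * uhat H)).mul (hZ.sub tendsto_Z0hat)
  have hrhs := (hdZ.const_mul (uhat H ^ 2)).add (((tendsto_Z1hat.const_mul
    (tc * Z0hat H)).const_sub (uhat H ^ 2)).const_mul (((nuc : ℂ) ^ 2 - 1) * uhat H))
  have heq := tendsto_nhds_unique_of_eventuallyEq hlhs hrhs <| by
    filter_upwards [eventually_norm_lt_norm_le_one_ne_zero hρ] with K hK
    have hK0 := uhat_ne_zero hK.2.1 hK.2.2
    rw [hz0]
    field_simp
    linear_combination h.doubleSeries_eq hHρ hK.1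
  refine mul_left_cancel₀ (pow_ne_zero 2 hH) ?_
  rw [uhat_sq_mul_Z1hat hH1]
  linear_combination -heq

theorem hasUhatExpansion_row_zero (hρ : 0 < ρ) : HasUhatExpansion (z 0) Z0hat := by
  filter_upwards [eventually_norm_lt_norm_le_one_ne_zero hρ] with K hK
  have hK0 := uhat_ne_zero hK.2.1 hK.2.2
  exact h.tsum_row_zero hρ hK.1 hK0 ▸ (summable_row hK0 (h.summable hK.1 hK.1) 0).hasSum

theorem hasUhatExpansion_row_one (hρ : 0 < ρ) : HasUhatExpansion (z 1) Z1hat := by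
  filter_upwards [eventually_norm_lt_norm_le_one_ne_zero hρ] with K hK
  have hK0 := uhat_ne_zero hK.2.1 hK.2.2
  exact h.tsum_row_one hρ hK.1 hK0 ▸ (summable_row hK0 (h.summable hK.1 hK.1) 1).hasSum

theorem hasUhatExpansion_column_one (hρ : 0 < ρ)
    (hz0 : HasUhatExpansion (fun p => z p 0) Z0hat) : HasUhatExpansion (fun p => z p 1) Z1hat := by
  filter_upwards [eventually_norm_lt_norm_le_one_ne_zero hρ, hz0] with H hH hz0H
  have hH0 := uhat_ne_zero hH.2.1 hH.2.2
  rw [← h.tsum_column_one hρ hz0H.tsum_eq hH.1 hH.2.1 hH0]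
  exact (summable_row (z := fun q p => z p q) hH0 (summable_swap (h.summable hH.1 hH.1)) 1).hasSum

end SolvesKernelEquation

end KernelEquation

section Moments

variable {c : ℕ → ℝ} {g : ℂ → ℂ}

namespace HasUhatExpansion

lemma exists_coeff_le (h : HasUhatExpansion c g) (hg : ∀ H, ‖H‖ ≤ 1 → DifferentiableAt ℂ g H) :
    ∃ C, ∀ k, |c k| * uc ^ k ≤ C := by
  have huc := uc_pos
  have hgc : ContinuousOn g (Metric.closedBall 0 1) := fun H hH =>
    (hg H (mem_closedBall_zero_iff.1 hH)).continuousAt.continuousWithinAt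
  have hgd : DifferentiableOn ℂ g (Metric.ball 0 1) := fun H hH =>
    (hg H (mem_ball_zero_iff.1 hH).le).differentiableWithinAt
  obtain ⟨M, hM⟩ := (isCompact_closedBall (0 : ℂ) 1).exists_bound_of_continuousOn
    (hgc.mul continuous_duhat.continuousOn)
  refine ⟨M / uc, fun k => ?_⟩
  have hbound : ∀ ζ ∈ Metric.sphere (0 : ℂ) 1,
      ‖g ζ * duhat ζ / uhat ζ ^ (k + 1)‖ ≤ M / uc ^ (k + 1) := fun ζ hζ => by
    have hMζ : ‖g ζ * duhat ζ‖ ≤ M := hM ζ (Metric.sphere_subset_closedBall hζ)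
    have hM0 := (norm_nonneg _).trans hMζ
    have huhat := uc_le_norm_uhat (mem_sphere_zero_iff_norm.1 hζ)
    rw [norm_div, norm_pow]
    gcongr
  have hcoeff := circleIntegral.norm_integral_le_of_norm_le_const zero_le_one hbound
  rw [isDiskParameter_uhat.circleIntegral_eq_coeff hgc hgd h k] at hcoeff
  simp only [norm_mul, Complex.norm_real, Complex.norm_I, mul_one, Complex.norm_ofNat,
    Real.norm_eq_abs, abs_of_pos Real.pi_pos] at hcoeff
  have hck : |c k| ≤ M / uc ^ (k + 1) := le_of_mul_le_mul_left hcoeff (by positivity)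
  rw [le_div_iff₀ (by positivity)] at hck ⊢
  rwa [mul_assoc, ← pow_succ]

end HasUhatExpansion

lemma summable_mul_pow_of_norm_lt {c : ℕ → ℂ} {u : ℂ} {R C : ℝ} (hR : 0 < R)
    (hc : ∀ k, ‖c k‖ * R ^ k ≤ C) (hu : ‖u‖ < R) : Summable fun k => c k * u ^ k := by
  refine Summable.of_norm_bounded (g := fun k => C * (‖u‖ / R) ^ k)
    ((summable_geometric_of_lt_one (by positivity) ((div_lt_one hR).2 hu)).mul_left _) fun k => ?_
  calc ‖c k * u ^ k‖ = ‖c k‖ * R ^ k * (‖u‖ / R) ^ k := by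
        rw [norm_mul, norm_pow, div_pow]
        field_simp
    _ ≤ C * (‖u‖ / R) ^ k := by gcongr; exact hc k

lemma differentiableOn_tsum_mul_pow {c : ℕ → ℂ} {R C : ℝ} (hR : 0 < R)
    (hc : ∀ k, ‖c k‖ * R ^ k ≤ C) :
    DifferentiableOn ℂ (fun u => ∑' k, c k * u ^ k) (Metric.ball 0 R) := by
  intro u hu
  obtain ⟨R', huR', hR'⟩ := exists_between (mem_ball_zero_iff.1 hu)
  have hR'0 : 0 ≤ R' := (norm_nonneg _).trans huR'.le
  have hdiff : DifferentiableOn ℂ (fun u => ∑' k, c k * u ^ k) (Metric.ball 0 R') := by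
    refine Complex.differentiableOn_tsum_of_summable_norm (u := fun k => ‖c k * (R' : ℂ) ^ k‖)
      (summable_mul_pow_of_norm_lt hR hc ?_).norm (fun k => by fun_prop) Metric.isOpen_ball
      fun k w hw => ?_
    · rwa [Complex.norm_real, Real.norm_of_nonneg hR'0]
    · rw [norm_mul, norm_mul, norm_pow, norm_pow, Complex.norm_real, Real.norm_of_nonneg hR'0]
      gcongr
      exact (mem_ball_zero_iff.1 hw).le
  exact (hdiff.differentiableAt
    (Metric.isOpen_ball.mem_nhds (mem_ball_zero_iff.2 huR'))).differentiableWithinAt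

/-- The ratio `û(1 - δ) / u_c`, for real `δ`. -/
noncomputable def uhatRatio (δ : ℝ) : ℝ := 1 - δ ^ 3 * (2 + δ) / 3

lemma uhat_one_sub (δ : ℝ) : uhat (1 - δ : ℝ) = (uc * uhatRatio δ : ℝ) := by
  simp only [uhat, uhatRatio]
  push_cast
  ring

lemma uhatRatio_mem_Ioo {δ : ℝ} (hδ : δ ∈ Set.Ioo 0 1) : uhatRatio δ ∈ Set.Ioo 0 1 := by
  have hδ0 : 0 < δ := hδ.1
  have hpos : 0 < δ ^ 3 := by positivity
  have hlt : δ ^ 3 < 1 := pow_lt_one₀ hδ.1.le hδ.2 three_ne_zero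
  constructor <;> rw [uhatRatio] <;> nlinarith [hδ.1, hδ.2]

lemma tendsto_uhatRatio : Tendsto uhatRatio (𝓝[>] 0) (𝓝 1) := by
  have hcont : Continuous uhatRatio := by unfold uhatRatio; fun_prop
  exact (hcont.tendsto' 0 1 (by norm_num [uhatRatio])).mono_left nhdsWithin_le_nhds

lemma norm_uhat_lt_uc {s : ℝ} (hs : s ∈ Set.Ico (0 : ℝ) 1) : ‖uhat s‖ < uc := by
  rcases hs.1.eq_or_lt with rfl | hs0
  · rw [Complex.ofReal_zero, uhat_zero, norm_zero]
    exact uc_pos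
  · have hratio := uhatRatio_mem_Ioo (δ := 1 - s) ⟨by linarith [hs.2], by linarith⟩
    rw [← sub_sub_cancel 1 s, uhat_one_sub, Complex.norm_real,
      Real.norm_of_nonneg (mul_pos uc_pos hratio.1).le]
    exact mul_lt_of_lt_one_right uc_pos hratio.2

namespace HasUhatExpansion

/-- Both sides are analytic in `s` along `[0, 1)`, since `|û(s)| < u_c` there. -/
lemma hasSum_of_mem_Ico (h : HasUhatExpansion c g) (hg : ∀ H, ‖H‖ ≤ 1 → DifferentiableAt ℂ g H)
    {s : ℝ} (hs : s ∈ Set.Ico (0 : ℝ) 1) : HasSum (fun k => (c k : ℂ) * uhat s ^ k) (g s) := by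
  obtain ⟨C, hC⟩ := h.exists_coeff_le hg
  have hC' : ∀ k, ‖(c k : ℂ)‖ * uc ^ k ≤ C := fun k => by rw [Complex.norm_real]; exact hC k
  set F : ℂ → ℂ := fun u => ∑' k, (c k : ℂ) * u ^ k
  set U : Set ℂ := (fun s : ℝ => (s : ℂ)) '' Set.Ico 0 1
  have hU : IsPreconnected U := isPreconnected_Ico.image _ Complex.continuous_ofReal.continuousOn
  have hF : AnalyticOnNhd ℂ (F ∘ uhat) U := by
    rintro _ ⟨s, hs, rfl⟩
    have huhat : AnalyticAt ℂ uhat s := by unfold uhat; fun_prop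
    exact ((differentiableOn_tsum_mul_pow uc_pos hC').analyticAt
      (Metric.isOpen_ball.mem_nhds (mem_ball_zero_iff.2 (norm_uhat_lt_uc hs)))).comp huhat
  have hgU : AnalyticOnNhd ℂ g U := by
    rintro _ ⟨s, hs, rfl⟩
    refine DifferentiableOn.analyticAt (s := Metric.ball 0 1) (fun H hH =>
      (hg H (mem_ball_zero_iff.1 hH).le).differentiableWithinAt) (Metric.isOpen_ball.mem_nhds ?_)
    rw [mem_ball_zero_iff, Complex.norm_real, Real.norm_of_nonneg hs.1]
    exact hs.2
  have heq : Set.EqOn (F ∘ uhat) g U :=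
    hF.eqOn_of_preconnected_of_frequently_eq hgU hU (z₀ := 0)
      ⟨0, Set.left_mem_Ico.2 one_pos, Complex.ofReal_zero⟩
      (h.mono fun H hH => hH.tsum_eq).frequently
  exact heq ⟨s, hs, rfl⟩ ▸ (summable_mul_pow_of_norm_lt uc_pos hC' (norm_uhat_lt_uc hs)).hasSum

end HasUhatExpansion

section Abel

variable {ι : Type*} {l : Filter ι} [NeBot l]

lemma hasSum_of_tendsto_of_le {f : ι → ℕ → ℝ} {F : ℕ → ℝ} {G : ι → ℝ} {S : ℝ}
    (hf : ∀ᶠ i in l, (∀ k, 0 ≤ f i k ∧ f i k ≤ F k) ∧ HasSum (f i) (G i))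
    (hlim : ∀ k, Tendsto (fun i => f i k) l (𝓝 (F k))) (hG : Tendsto G l (𝓝 S)) :
    HasSum F S := by
  have hF0 : ∀ k, 0 ≤ F k := fun k =>
    let ⟨_, hi, _⟩ := hf.exists
    (hi k).1.trans (hi k).2
  have hle : ∀ n, ∑ k ∈ Finset.range n, F k ≤ S := fun n =>
    le_of_tendsto_of_tendsto (tendsto_finsetSum _ fun k _ => hlim k) hG <|
      hf.mono fun i hi => sum_le_hasSum _ (fun k _ => (hi.1 k).1) hi.2
  have hsummable : Summable F := summable_of_sum_range_le hF0 hle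
  have hge : S ≤ ∑' k, F k := le_of_tendsto hG <|
    hf.mono fun i hi => hasSum_le (fun k => (hi.1 k).2) hi.2 hsummable.hasSum
  exact (hsummable.tsum_le_of_sum_range_le hle).antisymm hge ▸ hsummable.hasSum

variable {e : ℕ → ℝ} {x E : ι → ℝ} {S D : ℝ}

lemma hasSum_of_tendsto_one (he : ∀ k, 0 ≤ e k) (hx : ∀ᶠ i in l, x i ∈ Set.Ioo 0 1)
    (hx1 : Tendsto x l (𝓝 1)) (hE : ∀ᶠ i in l, HasSum (fun k => e k * x i ^ k) (E i))
    (hS : Tendsto E l (𝓝 S)) : HasSum e S := by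
  refine hasSum_of_tendsto_of_le (f := fun i k => e k * x i ^ k) ?_ (fun k => ?_) hS
  · filter_upwards [hx, hE] with i hxi hEi
    exact ⟨fun k => ⟨mul_nonneg (he k) (pow_nonneg hxi.1.le k),
      mul_le_of_le_one_right (he k) (pow_le_one₀ hxi.1.le hxi.2.le)⟩, hEi⟩
  · simpa using (hx1.pow k).const_mul (e k)

lemma hasSum_natCast_mul_of_tendsto_one (he : ∀ k, 0 ≤ e k) (hx : ∀ᶠ i in l, x i ∈ Set.Ioo 0 1)
    (hx1 : Tendsto x l (𝓝 1)) (hE : ∀ᶠ i in l, HasSum (fun k => e k * x i ^ k) (E i))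
    (hS : HasSum e S) (hD : Tendsto (fun i => (S - E i) / (1 - x i)) l (𝓝 D)) :
    HasSum (fun k => k * e k) D := by
  refine hasSum_of_tendsto_of_le (f := fun i k => e k * ∑ j ∈ Finset.range k, x i ^ j) ?_
    (fun k => ?_) hD
  · filter_upwards [hx, hE] with i hxi hEi
    refine ⟨fun k => ⟨mul_nonneg (he k) (Finset.sum_nonneg fun j _ => pow_nonneg hxi.1.le j), ?_⟩,
      ((hS.sub hEi).div_const (1 - x i)).congr_fun fun k => ?_⟩
    · rw [mul_comm]
      refine mul_le_mul_of_nonneg_right ?_ (he k)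
      calc ∑ j ∈ Finset.range k, x i ^ j ≤ ∑ _j ∈ Finset.range k, (1 : ℝ) :=
            Finset.sum_le_sum fun j _ => pow_le_one₀ hxi.1.le hxi.2.le
        _ = k := by rw [Finset.sum_const, Finset.card_range, nsmul_one]
    · rw [eq_div_iff (sub_pos.2 hxi.2).ne', mul_assoc, geom_sum_mul_neg]
      ring
  · have hlim := (tendsto_finsetSum (Finset.range k) fun j _ => hx1.pow j).const_mul (e k)
    simpa [mul_comm] using hlim

end Abel

namespace HasUhatExpansion

lemma hasSum_moments (h : HasUhatExpansion c g) (hc : ∀ k, 0 ≤ c k)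
    (hg : ∀ H, ‖H‖ ≤ 1 → DifferentiableAt ℂ g H) {S : ℝ} {D : ℝ → ℝ} (hD : ContinuousAt D 0)
    (hgD : ∀ δ ∈ Set.Ioo (0 : ℝ) 1, g (1 - δ : ℝ) = (S - (1 - uhatRatio δ) * D δ : ℝ)) :
    HasSum (fun k => c k * uc ^ k) S ∧ HasSum (fun k => k * (c k * uc ^ k)) (D 0) := by
  have huc := uc_pos
  have hnonneg : ∀ k, 0 ≤ c k * uc ^ k := fun k => mul_nonneg (hc k) (by positivity)
  have hmem : ∀ᶠ δ : ℝ in 𝓝[>] 0, δ ∈ Set.Ioo 0 1 := Ioo_mem_nhdsGT one_pos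
  have hratio : ∀ᶠ δ in 𝓝[>] 0, uhatRatio δ ∈ Set.Ioo 0 1 := hmem.mono fun _ => uhatRatio_mem_Ioo
  have hD' : Tendsto D (𝓝[>] 0) (𝓝 (D 0)) := hD.tendsto.mono_left nhdsWithin_le_nhds
  have hE : ∀ᶠ δ in 𝓝[>] 0, HasSum (fun k => c k * uc ^ k * uhatRatio δ ^ k)
      (S - (1 - uhatRatio δ) * D δ) := by
    filter_upwards [hmem] with δ hδ
    have hsum := h.hasSum_of_mem_Ico hg (s := 1 - δ) ⟨by linarith [hδ.2], by linarith [hδ.1]⟩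
    rw [hgD δ hδ, uhat_one_sub] at hsum
    rw [← Complex.hasSum_ofReal]
    exact hsum.congr_fun fun k => by push_cast; ring
  have hS := hasSum_of_tendsto_one hnonneg hratio tendsto_uhatRatio hE (S := S) <| by
    simpa using ((tendsto_uhatRatio.const_sub 1).mul hD').const_sub S
  refine ⟨hS, hasSum_natCast_mul_of_tendsto_one hnonneg hratio tendsto_uhatRatio hE hS ?_⟩
  refine hD'.congr' (hratio.mono fun δ hδ => ?_)
  beta_reduce
  rw [sub_sub_cancel, mul_div_cancel_left₀ _ (sub_pos.2 hδ.2).ne']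

theorem hasSum_moments_Z0hat (h : HasUhatExpansion c Z0hat) (hc : ∀ k, 0 ≤ c k) :
    HasSum (fun k => c k * uc ^ k) (3 / 10 * (2 + √7)) ∧
      HasSum (fun k => k * (c k * uc ^ k)) (3 * (1 + 2 * √7) / 20) := by
  have hD : ContinuousAt (fun δ : ℝ => 1 / 10 * (3 * (2 + √7)
      - 3 * (3 + 3 * δ + 3 * δ ^ 2 + δ ^ 3) / (2 + δ))) 0 :=
    continuousAt_const.mul (continuousAt_const.sub
      (ContinuousAt.div (by fun_prop) (by fun_prop) (by norm_num)))
  convert h.hasSum_moments hc (fun H _ => differentiable_Z0hat H) hD fun δ hδ => ?_ using 2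
  · ring
  · have hδ2 : (2 + δ : ℂ) ≠ 0 := by exact_mod_cast (add_pos two_pos hδ.1).ne'
    simp only [Z0hat, uhatRatio]
    push_cast
    field_simp
    ring

theorem hasSum_moments_Z1hat (h : HasUhatExpansion c Z1hat) (hc : ∀ k, 0 ≤ c k) :
    HasSum (fun k => c k * uc ^ k) (3 / (10 * uc) * (√7 - 2)) ∧
      HasSum (fun k => k * (c k * uc ^ k)) (3 / (20 * uc)) := by
  have huc := uc_pos.ne'
  have hD : ContinuousAt (fun δ : ℝ => 3 / (10 * uc) *
      (3 * (1 + δ) / ((3 + 3 * δ + 3 * δ ^ 2 + δ ^ 3) * (2 + δ)))) 0 :=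
    continuousAt_const.mul (ContinuousAt.div (by fun_prop) (by fun_prop) (by norm_num))
  convert h.hasSum_moments hc (fun H hH => differentiableAt_Z1hat hH) hD fun δ hδ => ?_ using 2
  · field_simp
    norm_num
  · have hδ0 := hδ.1
    have hδ2 : 2 + δ ≠ 0 := by positivity
    have : 3 + 3 * δ + 3 * δ ^ 2 + δ ^ 3 ≠ 0 := by positivity
    have hden_eq : (10 - 12 * ((1 - δ : ℝ) : ℂ) + 6 * ((1 - δ : ℝ) : ℂ) ^ 2 - ((1 - δ : ℝ) : ℂ) ^ 3)
        = ((3 + 3 * δ + 3 * δ ^ 2 + δ ^ 3 : ℝ) : ℂ) := by push_cast; ring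
    rw [Z1hat, hden_eq, uhatRatio]
    norm_cast
    field_simp
    ring

lemma coeff_zero_eq_one (h : HasUhatExpansion c Z0hat) : c 0 = 1 := by
  have hc0 := tendsto_nhds_unique (isDiskParameter_uhat.tendsto_coeff_zero h)
    ((differentiable_Z0hat 0).continuousAt.tendsto.mono_left nhdsWithin_le_nhds)
  exact_mod_cast hc0.trans Z0hat_zero

theorem coeff_one_pos (h : HasUhatExpansion c Z1hat) : 0 < c 1 := by
  have huc := uc_pos
  have hnum : HasDerivAt (fun H : ℂ => 3 * (4 - 3 * H + H ^ 2)) (-9) 0 := by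
    refine (((((hasDerivAt_id (0 : ℂ)).const_mul 3).const_sub 4).add
      ((hasDerivAt_id (0 : ℂ)).pow 2)).const_mul 3).congr_deriv ?_
    norm_num
  have hden : HasDerivAt (fun H : ℂ => 10 - 12 * H + 6 * H ^ 2 - H ^ 3) (-12) 0 := by
    refine (((((hasDerivAt_id (0 : ℂ)).const_mul 12).const_sub 10).add
      (((hasDerivAt_id (0 : ℂ)).pow 2).const_mul 6)).sub
        ((hasDerivAt_id (0 : ℂ)).pow 3)).congr_deriv ?_
    norm_num
  have hZ1 := (((hasDerivAt_id (0 : ℂ)).const_add ((√7 : ℂ) - 1)).sub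
    (hnum.div hden (by norm_num))).const_mul (3 / (10 * (uc : ℂ)))
  have hc1 := isDiskParameter_uhat.coeff_one_eq_div (g := Z1hat) hZ1 h
  have hval : c 1 = 207 / (5000 * uc ^ 2) := by
    apply Complex.ofReal_injective
    rw [hc1, duhat]
    push_cast
    norm_num
    field_simp
    norm_num
  rw [hval]
  positivity

end HasUhatExpansion

end Moments

section Laplace

/-- The integrand of `p ^ ((k + 1) / 2) * ∫ φ in 0..a, Q φ / X φ ^ (p + 1)` after the substitution
`φ = θ / √p`, extended by `0` to the whole half-line. -/
noncomputable def laplaceIntegrand (Q X : ℝ → ℂ) (k a : ℝ) (p : ℕ) : ℝ → ℂ :=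
  (Set.Ioc 0 (a * √p)).indicator fun θ =>
    ((p : ℝ) ^ (k / 2) : ℝ) * (Q (θ / √p) / X (θ / √p) ^ (p + 1))

variable {Q X : ℝ → ℂ} {k a C c κ θ : ℝ} {Q₀ : ℂ} {p : ℕ}

lemma div_sqrt_mem_Ioc (hp : 0 < p) (hθ : θ ∈ Set.Ioc 0 (a * √p)) : θ / √p ∈ Set.Ioc 0 a := by
  have hs : 0 < √(p : ℝ) := Real.sqrt_pos.2 (by exact_mod_cast hp)
  exact ⟨div_pos hθ.1 hs, (div_le_iff₀ hs).2 hθ.2⟩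

lemma rpow_half_mul_div_sqrt_rpow (hp : 0 < p) (hθ : 0 ≤ θ) :
    (p : ℝ) ^ (k / 2) * (θ / √p) ^ k = θ ^ k := by
  have hp' : (0 : ℝ) < p := by exact_mod_cast hp
  rw [Real.div_rpow hθ (Real.sqrt_nonneg _), Real.sqrt_eq_rpow, ← Real.rpow_mul hp'.le,
    one_div_mul_eq_div, mul_div_cancel₀ _ (Real.rpow_pos_of_pos hp' _).ne']

lemma integral_laplaceIntegrand (ha : 0 ≤ a) (hp : 0 < p) :
    ∫ θ in Set.Ioi 0, laplaceIntegrand Q X k a p θ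
      = ((p : ℝ) ^ ((k + 1) / 2) : ℝ) * ∫ φ in (0 : ℝ)..a, Q φ / X φ ^ (p + 1) := by
  have hp' : (0 : ℝ) < p := by exact_mod_cast hp
  have hs : 0 < √(p : ℝ) := Real.sqrt_pos.2 hp'
  have hpow : (p : ℝ) ^ (k / 2) * √p = (p : ℝ) ^ ((k + 1) / 2) := by
    rw [Real.sqrt_eq_rpow, ← Real.rpow_add hp', add_div]
  unfold laplaceIntegrand
  rw [setIntegral_indicator measurableSet_Ioc, Set.inter_eq_right.2 Set.Ioc_subset_Ioi_self,
    ← intervalIntegral.integral_of_le (by positivity), intervalIntegral.integral_const_mul,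
    intervalIntegral.integral_comp_div (fun φ => Q φ / X φ ^ (p + 1)) hs.ne', zero_div,
    mul_div_assoc, div_self hs.ne', mul_one, Complex.real_smul, ← mul_assoc, ← Complex.ofReal_mul,
    hpow]

lemma aestronglyMeasurable_laplaceIntegrand (hp : 0 < p) (hQc : ContinuousOn Q (Set.Ioc 0 a))
    (hXc : ContinuousOn X (Set.Ioc 0 a)) (hX0 : ∀ φ ∈ Set.Ioc 0 a, X φ ≠ 0) :
    AEStronglyMeasurable (laplaceIntegrand Q X k a p) := by
  have hmem : Set.MapsTo (fun θ : ℝ => θ / √p) (Set.Ioc 0 (a * √p)) (Set.Ioc 0 a) :=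
    fun θ hθ => div_sqrt_mem_Ioc hp hθ
  have hdiv : ContinuousOn (fun θ : ℝ => θ / √p) (Set.Ioc 0 (a * √p)) := by fun_prop
  refine (aestronglyMeasurable_indicator_iff measurableSet_Ioc).2
    (ContinuousOn.aestronglyMeasurable ?_ measurableSet_Ioc)
  exact continuousOn_const.mul ((hQc.comp hdiv hmem).div ((hXc.comp hdiv hmem).pow _)
    fun θ hθ => pow_ne_zero _ (hX0 _ (hmem hθ)))

lemma exp_mul_sq_le_norm_pow (hp : 0 < p) (hc : 0 ≤ c)
    (hX : Real.exp (c * (θ / √p) ^ 2) ≤ ‖X (θ / √p)‖) :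
    Real.exp (c * θ ^ 2) ≤ ‖X (θ / √p)‖ ^ (p + 1) := by
  have hp' : (0 : ℝ) < p := by exact_mod_cast hp
  have hpos : 0 ≤ c * (θ ^ 2 / p) := by positivity
  calc Real.exp (c * θ ^ 2) ≤ Real.exp (c * (θ / √p) ^ 2) ^ (p + 1) := by
        rw [← Real.exp_nat_mul, Real.exp_le_exp, div_pow, Real.sq_sqrt hp'.le]
        push_cast
        linarith [show (p : ℝ) * (c * (θ ^ 2 / p)) = c * θ ^ 2 by field_simp]
    _ ≤ ‖X (θ / √p)‖ ^ (p + 1) := by gcongr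

lemma norm_laplaceIntegrand_le (hp : 0 < p) (ha : 0 < a) (hc : 0 ≤ c)
    (hQ : ∀ φ ∈ Set.Ioc 0 a, ‖Q φ‖ ≤ C * φ ^ k)
    (hX : ∀ φ ∈ Set.Ioc 0 a, Real.exp (c * φ ^ 2) ≤ ‖X φ‖) (hθ : 0 < θ) :
    ‖laplaceIntegrand Q X k a p θ‖ ≤ C * (θ ^ k * Real.exp (-c * θ ^ 2)) := by
  by_cases hmem : θ ∈ Set.Ioc 0 (a * √p)
  · have hφ := div_sqrt_mem_Ioc hp hmem
    rw [laplaceIntegrand, Set.indicator_of_mem hmem, norm_mul, Complex.norm_real,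
      Real.norm_of_nonneg (by positivity), norm_div, norm_pow]
    calc (p : ℝ) ^ (k / 2) * (‖Q (θ / √p)‖ / ‖X (θ / √p)‖ ^ (p + 1))
        ≤ (p : ℝ) ^ (k / 2) * (C * (θ / √p) ^ k / Real.exp (c * θ ^ 2)) := by
          gcongr
          · exact (norm_nonneg _).trans (hQ _ hφ)
          · exact hQ _ hφ
          · exact exp_mul_sq_le_norm_pow hp hc (hX _ hφ)
      _ = C * ((p : ℝ) ^ (k / 2) * (θ / √p) ^ k * Real.exp (-c * θ ^ 2)) := by
          rw [neg_mul, Real.exp_neg]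
          ring
      _ = C * (θ ^ k * Real.exp (-c * θ ^ 2)) := by rw [rpow_half_mul_div_sqrt_rpow hp hθ.le]
  · have hC : 0 ≤ C :=
      nonneg_of_mul_nonneg_left ((norm_nonneg _).trans (hQ a ⟨ha, le_rfl⟩)) (by positivity)
    rw [laplaceIntegrand, Set.indicator_of_notMem hmem, norm_zero]
    positivity

lemma tendsto_div_sqrt_natCast (hθ : 0 < θ) :
    Tendsto (fun p : ℕ => θ / √(p : ℝ)) atTop (𝓝[>] 0) := by
  refine tendsto_nhdsWithin_iff.2
    ⟨(Real.tendsto_sqrt_atTop.comp tendsto_natCast_atTop_atTop).const_div_atTop θ, ?_⟩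
  filter_upwards [eventually_gt_atTop 0] with p hp
  exact div_pos hθ (Real.sqrt_pos.2 (by exact_mod_cast hp))

lemma tendsto_pow_succ_div_sqrt
    (hX : Tendsto (fun φ : ℝ => (X φ - 1) / (φ ^ 2 : ℝ)) (𝓝[>] 0) (𝓝 κ)) (hθ : 0 < θ) :
    Tendsto (fun p : ℕ => X (θ / √p) ^ (p + 1)) atTop (𝓝 (Real.exp (κ * θ ^ 2))) := by
  have hmul : Tendsto (fun p : ℕ => (p : ℂ) * (X (θ / √p) - 1)) atTop
      (𝓝 ((κ : ℂ) * (θ ^ 2 : ℝ))) := by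
    refine ((hX.comp (tendsto_div_sqrt_natCast hθ)).mul_const ((θ ^ 2 : ℝ) : ℂ)).congr' ?_
    filter_upwards [eventually_gt_atTop 0] with p hp
    have : (p : ℂ) ≠ 0 := by exact_mod_cast hp.ne'
    have : (θ : ℂ) ≠ 0 := by exact_mod_cast hθ.ne'
    simp only [Function.comp_apply, div_pow, Real.sq_sqrt (Nat.cast_nonneg p)]
    push_cast
    field_simp
  have hone : Tendsto (fun p : ℕ => X (θ / √p)) atTop (𝓝 1) := by
    have hsub := (hmul.mul (tendsto_inv_atTop_nhds_zero_nat (𝕜 := ℂ))).const_add 1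
    rw [mul_zero, add_zero] at hsub
    refine hsub.congr' ?_
    filter_upwards [eventually_gt_atTop 0] with p hp
    have : (p : ℂ) ≠ 0 := by exact_mod_cast hp.ne'
    field_simp
    ring
  simpa [pow_succ] using (Complex.tendsto_one_add_pow_exp_of_tendsto hmul).mul hone

lemma tendsto_laplaceIntegrand (ha : 0 < a)
    (hQ : Tendsto (fun φ : ℝ => Q φ / (φ ^ k : ℝ)) (𝓝[>] 0) (𝓝 Q₀))
    (hX : Tendsto (fun φ : ℝ => (X φ - 1) / (φ ^ 2 : ℝ)) (𝓝[>] 0) (𝓝 κ)) (hθ : 0 < θ) :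
    Tendsto (fun p => laplaceIntegrand Q X k a p θ) atTop
      (𝓝 (Q₀ * (θ ^ k * Real.exp (-κ * θ ^ 2) : ℝ))) := by
  have hlim := ((hQ.comp (tendsto_div_sqrt_natCast hθ)).mul_const ((θ ^ k : ℝ) : ℂ)).div
    (tendsto_pow_succ_div_sqrt hX hθ) (Complex.ofReal_ne_zero.2 (Real.exp_pos _).ne')
  rw [neg_mul, Real.exp_neg, ← div_eq_mul_inv, Complex.ofReal_div, ← mul_div_assoc]
  refine hlim.congr' ?_
  have hlarge : ∀ᶠ p : ℕ in atTop, θ / a ≤ √(p : ℝ) :=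
    (Real.tendsto_sqrt_atTop.comp tendsto_natCast_atTop_atTop).eventually_ge_atTop _
  filter_upwards [eventually_gt_atTop 0, hlarge] with p hp hpθ
  have hs : 0 < √(p : ℝ) := Real.sqrt_pos.2 (by exact_mod_cast hp)
  have hφk : (((θ / √(p : ℝ)) ^ k : ℝ) : ℂ) ≠ 0 :=
    Complex.ofReal_ne_zero.2 (Real.rpow_pos_of_pos (div_pos hθ hs) k).ne'
  have hmem : θ ∈ Set.Ioc 0 (a * √p) := ⟨hθ, (div_le_iff₀' ha).1 hpθ⟩
  rw [laplaceIntegrand, Set.indicator_of_mem hmem]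
  simp only [Pi.div_apply, Function.comp_apply]
  rw [← rpow_half_mul_div_sqrt_rpow hp hθ.le, Complex.ofReal_mul, mul_left_comm,
    div_mul_cancel₀ _ hφk, mul_div_assoc]

theorem tendsto_integral_div_pow (hk : -1 < k) (ha : 0 < a) (hc : 0 < c)
    (hQc : ContinuousOn Q (Set.Ioc 0 a)) (hXc : ContinuousOn X (Set.Ioc 0 a))
    (hQ : ∀ φ ∈ Set.Ioc 0 a, ‖Q φ‖ ≤ C * φ ^ k)
    (hX : ∀ φ ∈ Set.Ioc 0 a, Real.exp (c * φ ^ 2) ≤ ‖X φ‖)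
    (hQ0 : Tendsto (fun φ : ℝ => Q φ / (φ ^ k : ℝ)) (𝓝[>] 0) (𝓝 Q₀))
    (hX0 : Tendsto (fun φ : ℝ => (X φ - 1) / (φ ^ 2 : ℝ)) (𝓝[>] 0) (𝓝 κ)) :
    Tendsto (fun p : ℕ => (((p : ℝ) ^ ((k + 1) / 2) : ℝ) : ℂ) *
        ∫ φ in (0 : ℝ)..a, Q φ / X φ ^ (p + 1)) atTop
      (𝓝 (Q₀ * (∫ θ in Set.Ioi (0 : ℝ), θ ^ k * Real.exp (-κ * θ ^ 2) : ℝ))) := by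
  have hXne : ∀ φ ∈ Set.Ioc 0 a, X φ ≠ 0 := fun φ hφ =>
    norm_pos_iff.1 ((Real.exp_pos _).trans_le (hX φ hφ))
  rw [← integral_complex_ofReal, ← integral_const_mul]
  have hlim := tendsto_integral_filter_of_dominated_convergence (l := atTop)
    (F := laplaceIntegrand Q X k a) (μ := volume.restrict (Set.Ioi 0))
    (f := fun θ => Q₀ * (θ ^ k * Real.exp (-κ * θ ^ 2) : ℝ))
    (fun θ => C * (θ ^ k * Real.exp (-c * θ ^ 2)))
    ((eventually_gt_atTop 0).mono fun p hp =>
      (aestronglyMeasurable_laplaceIntegrand hp hQc hXc hXne).mono_measure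
        Measure.restrict_le_self)
    ((eventually_gt_atTop 0).mono fun p hp => (ae_restrict_mem measurableSet_Ioi).mono
      fun θ hθ => norm_laplaceIntegrand_le hp ha hc.le hQ hX hθ)
    ((integrableOn_rpow_mul_exp_neg_mul_sq hc hk).const_mul C)
    ((ae_restrict_mem measurableSet_Ioi).mono fun θ hθ => tendsto_laplaceIntegrand ha hQ0 hX0 hθ)
  exact hlim.congr' ((eventually_gt_atTop 0).mono fun p hp => integral_laplaceIntegrand ha.le hp)

end Laplace

section SaddlePoint

/-- The power `s ^ (2 / 3)` (principal branch). -/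
noncomputable def cbrtSq (s : ℂ) : ℂ := s ^ ((2 / 3 : ℝ) : ℂ)

lemma cbrtSq_pow_three (s : ℂ) : cbrtSq s ^ 3 = s ^ 2 := by
  rw [cbrtSq, ← Complex.cpow_nat_mul, ← Complex.cpow_natCast s 2]
  norm_num

lemma cbrtSq_zero : cbrtSq 0 = 0 := Complex.zero_cpow (by norm_num)

lemma cbrtSq_one : cbrtSq 1 = 1 := Complex.one_cpow _

lemma norm_cbrtSq (s : ℂ) : ‖cbrtSq s‖ = ‖s‖ ^ (2 / 3 : ℝ) := Complex.norm_cpow_real _ _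

lemma cbrtSq_conj {s : ℂ} (hs : s.arg ≠ π) : cbrtSq (conj s) = conj (cbrtSq s) := by
  rw [cbrtSq, cbrtSq, Complex.conj_cpow _ _ hs, Complex.conj_ofReal]

lemma cbrtSq_ofReal_mul {r : ℝ} (hr : 0 < r) (s : ℂ) :
    cbrtSq (r * s) = (r ^ (2 / 3 : ℝ) : ℝ) * cbrtSq s := by
  rcases eq_or_ne s 0 with rfl | hs
  · rw [mul_zero, cbrtSq_zero, mul_zero]
  · have hr0 : (r : ℂ) ≠ 0 := Complex.ofReal_ne_zero.2 hr.ne'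
    rw [cbrtSq, cbrtSq, Complex.ofReal_cpow hr.le, Complex.cpow_def_of_ne_zero (mul_ne_zero hr0 hs),
      Complex.cpow_def_of_ne_zero hr0, Complex.cpow_def_of_ne_zero hs, ← Complex.exp_add,
      Complex.log_ofReal_mul hr hs, Complex.ofReal_log hr.le, add_mul]

lemma cbrtSq_neg_I : cbrtSq (-Complex.I) = Complex.exp ((-(π / 3) : ℝ) * Complex.I) := by
  rw [cbrtSq, Complex.cpow_def_of_ne_zero (neg_ne_zero.2 Complex.I_ne_zero), Complex.log_neg_I]
  congr 1
  push_cast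
  ring

lemma half_norm_le_cbrtSq_re {s : ℂ} (hs : 0 ≤ s.re) : ‖cbrtSq s‖ / 2 ≤ (cbrtSq s).re := by
  have harg : |s.arg| ≤ π / 2 := Complex.abs_arg_le_pi_div_two_iff.2 hs
  have hcos : 1 / 2 ≤ Real.cos (s.arg * (2 / 3)) := by
    rw [← Real.cos_pi_div_three, ← Real.cos_abs (s.arg * (2 / 3))]
    refine Real.cos_le_cos_of_nonneg_of_le_pi (abs_nonneg _) (by linarith [Real.pi_pos]) ?_
    rw [abs_mul, abs_of_pos (by norm_num : (0 : ℝ) < 2 / 3)]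
    linarith
  rw [norm_cbrtSq, cbrtSq, Complex.cpow_ofReal_re, div_eq_mul_one_div]
  gcongr

lemma cbrtSq_re_nonneg {s : ℂ} (hs : 0 ≤ s.re) : 0 ≤ (cbrtSq s).re :=
  (by positivity : 0 ≤ ‖cbrtSq s‖ / 2).trans (half_norm_le_cbrtSq_re hs)

lemma continuousAt_cbrtSq {s : ℂ} (hs : 0 ≤ s.re) : ContinuousAt cbrtSq s :=
  Complex.continuousAt_cpow_const_of_re_pos (Or.inl hs) (by norm_num)

lemma hasDerivAt_cbrtSq {s : ℂ} (hs : s ∈ Complex.slitPlane) :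
    HasDerivAt cbrtSq (2 / 3 * cbrtSq s / s) s := by
  refine ((hasDerivAt_id s).cpow_const hs).congr_deriv ?_
  simp only [id, mul_one, cbrtSq]
  rw [Complex.cpow_sub _ _ (Complex.slitPlane_ne_zero hs), Complex.cpow_one]
  push_cast
  ring

variable {ζ : ℂ}

lemma one_sub_re_nonneg (hζ : ζ ∈ Metric.closedBall (0 : ℂ) 1) : 0 ≤ (1 - ζ).re := by
  rw [Complex.sub_re, Complex.one_re, sub_nonneg]
  exact (Complex.re_le_norm ζ).trans (mem_closedBall_zero_iff.1 hζ)

lemma one_sub_re_pos (hζ : ζ ∈ Metric.ball (0 : ℂ) 1) : 0 < (1 - ζ).re := by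
  rw [Complex.sub_re, Complex.one_re, sub_pos]
  exact (Complex.re_le_norm ζ).trans_lt (mem_ball_zero_iff.1 hζ)

lemma continuousOn_cbrtSq_one_sub :
    ContinuousOn (fun ζ => cbrtSq (1 - ζ)) (Metric.closedBall 0 1) := fun ζ hζ =>
  (ContinuousAt.comp (f := fun ζ : ℂ => 1 - ζ) (continuousAt_cbrtSq (one_sub_re_nonneg hζ))
    (by fun_prop)).continuousWithinAt

lemma hasDerivAt_cbrtSq_one_sub (hζ : ζ ∈ Metric.ball (0 : ℂ) 1) :
    HasDerivAt (fun ζ => cbrtSq (1 - ζ)) (-(2 / 3 * cbrtSq (1 - ζ) / (1 - ζ))) ζ :=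
  ((hasDerivAt_cbrtSq (Or.inl (one_sub_re_pos hζ))).comp ζ
    ((hasDerivAt_id ζ).const_sub 1)).congr_deriv (by rw [mul_neg_one])

lemma cbrtSq_one_sub_conj (hζ : ζ ∈ Metric.closedBall (0 : ℂ) 1) :
    cbrtSq (1 - conj ζ) = conj (cbrtSq (1 - ζ)) := by
  have harg : |(1 - ζ).arg| ≤ π / 2 := Complex.abs_arg_le_pi_div_two_iff.2 (one_sub_re_nonneg hζ)
  rw [← cbrtSq_conj fun hpi => ?_, map_sub, map_one]
  rw [hpi, abs_of_pos Real.pi_pos] at harg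
  linarith [Real.pi_pos]

/-- The function `û / u_c` in the coordinate `ζ` given by `H = 1 - (1 - ζ) ^ (2 / 3)`. The exponent
turns the triple zero of `û - u_c` at `H = 1` into a double one at `ζ = 1`, across which the unit
circle is a descent path for the reciprocal. -/
noncomputable def uSaddle (ζ : ℂ) : ℂ :=
  1 - 2 / 3 * (1 - ζ) ^ 2 - 1 / 3 * (1 - ζ) ^ 2 * cbrtSq (1 - ζ)

/-- The derivative of `uSaddle`. -/
noncomputable def duSaddle (ζ : ℂ) : ℂ := 4 / 3 * (1 - ζ) + 8 / 9 * (1 - ζ) * cbrtSq (1 - ζ)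

lemma uSaddle_eq_pow_cbrtSq (ζ : ℂ) :
    uSaddle ζ = 1 - 2 / 3 * cbrtSq (1 - ζ) ^ 3 - 1 / 3 * cbrtSq (1 - ζ) ^ 4 := by
  rw [uSaddle, ← cbrtSq_pow_three]
  ring

lemma uhat_one_sub_cbrtSq (ζ : ℂ) : uhat (1 - cbrtSq (1 - ζ)) = uc * uSaddle ζ := by
  rw [uhat, uSaddle_eq_pow_cbrtSq]
  ring

lemma hasDerivAt_uSaddle (hζ : ζ ∈ Metric.ball (0 : ℂ) 1) :
    HasDerivAt uSaddle (duSaddle ζ) ζ := by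
  have hne : 1 - ζ ≠ 0 := fun h => (one_sub_re_pos hζ).ne' (by rw [h, Complex.zero_re])
  have hsq : HasDerivAt (fun ζ : ℂ => (1 - ζ) ^ 2) (-2 * (1 - ζ)) ζ :=
    (((hasDerivAt_id ζ).const_sub 1).pow 2).congr_deriv (by norm_num)
  refine (((hsq.const_mul (2 / 3)).const_sub 1).sub
    ((hsq.const_mul (1 / 3)).mul (hasDerivAt_cbrtSq_one_sub hζ))).congr_deriv ?_
  rw [duSaddle]
  field_simp
  ring

lemma uSaddle_ne_zero (hζ : ζ ∈ Metric.closedBall (0 : ℂ) 1) (hζ0 : ζ ≠ 0) : uSaddle ζ ≠ 0 := by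
  have hre := one_sub_re_nonneg hζ
  have hq : cbrtSq (1 - ζ) ≠ 1 := fun hq => by
    have hcube := cbrtSq_pow_three (1 - ζ)
    rw [hq, one_pow] at hcube
    rcases sq_eq_sq_iff_eq_or_eq_neg.1 (hcube.symm.trans (one_pow 2).symm) with h | h
    · exact hζ0 (by simpa using h)
    · rw [h] at hre
      norm_num at hre
  refine right_ne_zero_of_mul (a := (uc : ℂ)) ?_
  rw [← uhat_one_sub_cbrtSq]
  refine mul_ne_zero (mul_ne_zero (div_ne_zero (Complex.ofReal_ne_zero.2 uc_pos.ne') three_ne_zero)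
    (sub_ne_zero.2 hq.symm)) (ten_sub_ne_zero_of_re_le_one ?_)
  rw [Complex.sub_re, Complex.one_re]
  linarith [cbrtSq_re_nonneg hre]

lemma isDiskParameter_uSaddle : IsDiskParameter uSaddle duSaddle where
  map_zero := by norm_num [uSaddle, cbrtSq_one]
  ne_zero _ := uSaddle_ne_zero
  deriv_zero_ne := by norm_num [duSaddle, cbrtSq_one]
  hasDerivAt _ := hasDerivAt_uSaddle
  continuousOn := by
    have := continuousOn_cbrtSq_one_sub
    unfold uSaddle
    fun_prop
  continuousOn_deriv := by
    have := continuousOn_cbrtSq_one_sub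
    unfold duSaddle
    fun_prop

lemma re_pow_three (q : ℂ) : (q ^ 3).re = 4 * q.re ^ 3 - 3 * ‖q‖ ^ 2 * q.re := by
  rw [Complex.sq_norm, Complex.normSq_apply]
  simp only [pow_succ, pow_zero, one_mul, Complex.mul_re, Complex.mul_im]
  ring

lemma re_pow_four (q : ℂ) : (q ^ 4).re = 8 * q.re ^ 4 - 8 * ‖q‖ ^ 2 * q.re ^ 2 + ‖q‖ ^ 4 := by
  rw [show ‖q‖ ^ 4 = (‖q‖ ^ 2) ^ 2 by ring, Complex.sq_norm, Complex.normSq_apply]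
  simp only [pow_succ, pow_zero, one_mul, Complex.mul_re, Complex.mul_im]
  ring

lemma normSq_one_sub_pow_three_sub_pow_four (q : ℂ) (s t : ℝ) :
    ‖1 - s * q ^ 3 - t * q ^ 4‖ ^ 2 = 1 + s ^ 2 * ‖q‖ ^ 6 + t ^ 2 * ‖q‖ ^ 8 - 2 * s * (q ^ 3).re
      - 2 * t * (q ^ 4).re + 2 * s * t * ‖q‖ ^ 6 * q.re := by
  rw [re_pow_three, re_pow_four, show ‖q‖ ^ 8 = (‖q‖ ^ 2) ^ 4 by ring,
    show ‖q‖ ^ 6 = (‖q‖ ^ 2) ^ 3 by ring, show ‖q‖ ^ 4 = (‖q‖ ^ 2) ^ 2 by ring, Complex.sq_norm,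
    Complex.sq_norm, Complex.normSq_apply, Complex.normSq_apply]
  simp only [Complex.sub_re, Complex.sub_im, Complex.ofReal_re, Complex.ofReal_im, Complex.one_re,
    Complex.one_im, pow_succ, pow_zero, one_mul, Complex.mul_re, Complex.mul_im]
  ring

lemma one_sub_sq_re (hζ : ζ ∈ Metric.sphere (0 : ℂ) 1) :
    ((1 - ζ) ^ 2).re = ‖1 - ζ‖ ^ 2 * (‖1 - ζ‖ ^ 2 / 2 - 1) := by
  have hnorm := Complex.sq_norm ζ
  rw [mem_sphere_zero_iff_norm.1 hζ, Complex.normSq_apply] at hnorm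
  rw [Complex.sq_norm, Complex.normSq_apply, pow_two, Complex.mul_re, Complex.sub_re,
    Complex.sub_im, Complex.one_re, Complex.one_im]
  have hsq : (1 - ζ.re) * (1 - ζ.re) + (0 - ζ.im) * (0 - ζ.im) = 2 * (1 - ζ.re) := by
    linear_combination -hnorm
  rw [hsq]
  linear_combination hnorm

lemma one_add_sq_le_normSq_uSaddle (hζ : ζ ∈ Metric.sphere (0 : ℂ) 1) :
    1 + 4 / 9 * ‖1 - ζ‖ ^ 2 ≤ ‖uSaddle ζ‖ ^ 2 := by
  have hre := half_norm_le_cbrtSq_re (one_sub_re_nonneg (Metric.sphere_subset_closedBall hζ))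
  have hcube := one_sub_sq_re hζ
  rw [← norm_pow, ← cbrtSq_pow_three, norm_pow] at hcube
  rw [uSaddle_eq_pow_cbrtSq, ← norm_pow, ← cbrtSq_pow_three, norm_pow]
  generalize cbrtSq (1 - ζ) = q at hre hcube ⊢
  have hre_le := Complex.re_le_norm q
  have hre_cube_le : (q ^ 3).re ≤ ‖q‖ ^ 3 := (Complex.re_le_norm _).trans (norm_pow q 3).le
  have hquartic : (q ^ 4).re ≤ 4 / 3 * q.re * (‖q‖ ^ 3 + (q ^ 3).re) := by
    rw [re_pow_three, re_pow_four]
    have hsq_le : ‖q‖ ^ 2 ≤ (2 * q.re) ^ 2 := by gcongr; linarith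
    have hle_sq : q.re ^ 2 ≤ ‖q‖ ^ 2 := by gcongr; linarith [norm_nonneg q]
    nlinarith [mul_le_mul_of_nonneg_left hsq_le (sq_nonneg ‖q‖),
      mul_le_mul_of_nonneg_left hle_sq (sq_nonneg q.re),
      mul_le_mul_of_nonneg_left hre (pow_nonneg (norm_nonneg q) 3)]
  have hnormSq := normSq_one_sub_pow_three_sub_pow_four q (2 / 3) (1 / 3)
  push_cast at hnormSq
  rw [hnormSq, show ‖q‖ ^ 6 = 2 * (‖q‖ ^ 3 + (q ^ 3).re) by rw [hcube]; ring]
  have hnonneg : 0 ≤ ‖q‖ ^ 8 := by positivity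
  linarith

end SaddlePoint

section CoefficientIntegral

lemma circleIntegral_eq_two_mul_I_mul_re {f : ℂ → ℂ} {R : ℝ} (hf : CircleIntegrable f 0 R)
    (hconj : ∀ z ∈ Metric.sphere (0 : ℂ) |R|, f (conj z) = conj (f z)) :
    ∮ z in C(0, R), f z =
      2 * Complex.I * (∫ φ in (0 : ℝ)..π, circleMap 0 R φ * f (circleMap 0 R φ)).re := by
  set F : ℝ → ℂ := fun φ => circleMap 0 R φ * f (circleMap 0 R φ) with hF
  have hderiv (φ : ℝ) : deriv (circleMap 0 R) φ • f (circleMap 0 R φ) = Complex.I * F φ := by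
    rw [deriv_circleMap, smul_eq_mul, hF]
    ring
  have hint : IntervalIntegrable F volume 0 (2 * π) := by
    refine (hf.out.const_mul (-Complex.I)).congr fun φ _ => ?_
    rw [hderiv, ← mul_assoc, neg_mul, Complex.I_mul_I, neg_neg, one_mul]
  have hreflect (φ : ℝ) : F (2 * π - φ) = conj (F φ) := by
    simp only [hF, (periodic_circleMap 0 R).sub_eq', ← conj_circleMap_zero,
      hconj _ (circleMap_mem_sphere' 0 R φ), map_mul]
  have hupper : ∫ φ in π..2 * π, F φ = conj (∫ φ in (0 : ℝ)..π, F φ) := by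
    calc ∫ φ in π..2 * π, F φ
      _ = ∫ φ in (0 : ℝ)..π, F (2 * π - φ) := by
        rw [intervalIntegral.integral_comp_sub_left F, sub_zero, two_mul, add_sub_cancel_right]
      _ = conj (∫ φ in (0 : ℝ)..π, F φ) := by
        simp only [hreflect, intervalIntegral.integral_of_le Real.pi_pos.le, integral_conj]
  have hpi : π ∈ Set.uIcc 0 (2 * π) := by
    rw [Set.uIcc_of_le (by positivity)]
    exact ⟨Real.pi_pos.le, by linarith [Real.pi_pos]⟩
  rw [circleIntegral, intervalIntegral.integral_congr fun φ _ => hderiv φ,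
    intervalIntegral.integral_const_mul, ← intervalIntegral.integral_add_adjacent_intervals
      (hint.mono_set (Set.uIcc_subset_uIcc_left hpi))
      (hint.mono_set (Set.uIcc_subset_uIcc_right hpi)), hupper, Complex.add_conj]
  push_cast
  ring

/-- The rational function with `Â(1 - q) = Â(1) + q * ahatFactor q`. -/
noncomputable def ahatFactor (q : ℂ) : ℂ :=
  -((1 / 10) * ((3 / 2 : ℝ) ^ (7 / 3 : ℝ) : ℝ) * (6 + 9 * q + 8 * q ^ 2 + 4 * q ^ 3) /
    (1 + q + q ^ 2) ^ 2)

lemma one_add_add_sq_ne_zero {q : ℂ} (hq : 0 ≤ q.re) : 1 + q + q ^ 2 ≠ 0 := fun h => by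
  have hre := congrArg Complex.re h
  have him := congrArg Complex.im h
  simp only [Complex.add_re, Complex.add_im, Complex.one_re, Complex.one_im, pow_two,
    Complex.mul_re, Complex.mul_im, Complex.zero_re, Complex.zero_im] at hre him
  have him_zero : q.im = 0 :=
    (mul_eq_zero.1 (by linear_combination him : q.im * (1 + 2 * q.re) = 0)).resolve_right
      (by positivity)
  rw [him_zero] at hre
  nlinarith

lemma Ahat_one_sub {q : ℂ} (hq : 1 + q + q ^ 2 ≠ 0) :
    Ahat (1 - q) = Ahat 1 + q * ahatFactor q := by
  rw [Ahat, Ahat, ahatFactor, show 3 - 3 * (1 - q) + (1 - q) ^ 2 = 1 + q + q ^ 2 by ring]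
  field_simp
  ring

lemma continuousAt_ahatFactor {q : ℂ} (hq : 0 ≤ q.re) : ContinuousAt ahatFactor q := by
  unfold ahatFactor
  refine (ContinuousAt.div₀ (by fun_prop) (by fun_prop) ?_).neg
  exact pow_ne_zero 2 (one_add_add_sq_ne_zero hq)

lemma differentiableAt_ahatFactor {q : ℂ} (hq : 0 ≤ q.re) : DifferentiableAt ℂ ahatFactor q := by
  unfold ahatFactor
  refine (DifferentiableAt.fun_div (by fun_prop) (by fun_prop) ?_).fun_neg
  exact pow_ne_zero 2 (one_add_add_sq_ne_zero hq)

lemma ahatFactor_conj (q : ℂ) : ahatFactor (conj q) = conj (ahatFactor q) := by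
  simp only [ahatFactor, map_neg, map_div₀, map_mul, map_add, map_pow, map_one, Complex.conj_ofReal,
    Complex.conj_ofNat]

/-- The function `Â - Â(1)` in the coordinate `ζ` given by `H = 1 - (1 - ζ) ^ (2 / 3)`. -/
noncomputable def ahatSaddle (ζ : ℂ) : ℂ := cbrtSq (1 - ζ) * ahatFactor (cbrtSq (1 - ζ))

variable {ζ : ℂ}

lemma continuousOn_ahatFactor_cbrtSq :
    ContinuousOn (fun ζ => ahatFactor (cbrtSq (1 - ζ))) (Metric.closedBall 0 1) := fun ζ hζ =>
  ContinuousAt.comp_continuousWithinAt (f := fun ζ => cbrtSq (1 - ζ))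
    (continuousAt_ahatFactor (cbrtSq_re_nonneg (one_sub_re_nonneg hζ)))
    (continuousOn_cbrtSq_one_sub ζ hζ)

lemma continuousOn_ahatSaddle : ContinuousOn ahatSaddle (Metric.closedBall 0 1) :=
  continuousOn_cbrtSq_one_sub.mul continuousOn_ahatFactor_cbrtSq

lemma differentiableOn_ahatSaddle : DifferentiableOn ℂ ahatSaddle (Metric.ball 0 1) :=
  fun ζ hζ => by
    have hq := (hasDerivAt_cbrtSq_one_sub hζ).differentiableAt
    exact (hq.mul ((differentiableAt_ahatFactor (cbrtSq_re_nonneg (one_sub_re_pos hζ).le)).comp ζ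
      hq)).differentiableWithinAt

lemma ahatSaddle_conj (hζ : ζ ∈ Metric.closedBall (0 : ℂ) 1) :
    ahatSaddle (conj ζ) = conj (ahatSaddle ζ) := by
  rw [ahatSaddle, ahatSaddle, cbrtSq_one_sub_conj hζ, ahatFactor_conj, map_mul]

lemma uSaddle_conj (hζ : ζ ∈ Metric.closedBall (0 : ℂ) 1) :
    uSaddle (conj ζ) = conj (uSaddle ζ) := by
  simp only [uSaddle, cbrtSq_one_sub_conj hζ, map_sub, map_mul, map_pow, map_div₀, map_one,
    Complex.conj_ofNat]

lemma duSaddle_conj (hζ : ζ ∈ Metric.closedBall (0 : ℂ) 1) :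
    duSaddle (conj ζ) = conj (duSaddle ζ) := by
  simp only [duSaddle, cbrtSq_one_sub_conj hζ, map_add, map_sub, map_mul, map_div₀, map_one,
    Complex.conj_ofNat]

variable {a : ℕ → ℝ}

lemma HasUhatExpansion.eventually_hasSum_ahatSaddle (hA : HasUhatExpansion a Ahat) :
    ∀ᶠ ζ in 𝓝[≠] 0, HasSum (fun k => ((a k : ℂ) * uc ^ k - if k = 0 then Ahat 1 else 0) *
      uSaddle ζ ^ k) (ahatSaddle ζ) := by
  have hcoord : Tendsto (fun ζ => 1 - cbrtSq (1 - ζ)) (𝓝[≠] 0) (𝓝[≠] 0) := by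
    have hlim := ((hasDerivAt_cbrtSq_one_sub (Metric.mem_ball_self one_pos)).const_sub
      1).tendsto_nhdsNE (by norm_num [cbrtSq_one])
    rwa [sub_zero, cbrtSq_one, sub_self] at hlim
  filter_upwards [hcoord.eventually hA,
    mem_nhdsWithin_of_mem_nhds (Metric.closedBall_mem_nhds 0 one_pos)] with ζ hsum hζ
  rw [uhat_one_sub_cbrtSq, Ahat_one_sub
    (one_add_add_sq_ne_zero (cbrtSq_re_nonneg (one_sub_re_nonneg hζ)))] at hsum
  have hdiff := hsum.sub (hasSum_ite_eq 0 (Ahat 1))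
  rw [add_sub_cancel_left] at hdiff
  refine hdiff.congr_fun fun k => ?_
  rcases eq_or_ne k 0 with rfl | hk
  · simp only [pow_zero, mul_one, if_true]
  · simp only [hk, if_false, sub_zero, mul_pow, mul_assoc]

/-- The integrand of the coefficient `a p * u_c ^ p`, at angle `φ` on the unit circle. -/
noncomputable def coeffIntegrand (p : ℕ) (φ : ℝ) : ℂ :=
  circleMap 0 1 φ * (ahatSaddle (circleMap 0 1 φ) * duSaddle (circleMap 0 1 φ) /
    uSaddle (circleMap 0 1 φ) ^ (p + 1))

lemma circleMap_one_mem_sphere (φ : ℝ) : circleMap 0 1 φ ∈ Metric.sphere (0 : ℂ) 1 :=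
  circleMap_mem_sphere 0 zero_le_one φ

lemma continuous_comp_circleMap {f : ℂ → ℂ} (hf : ContinuousOn f (Metric.sphere 0 1)) :
    Continuous fun φ : ℝ => f (circleMap 0 1 φ) :=
  hf.comp_continuous (continuous_circleMap 0 1) circleMap_one_mem_sphere

lemma continuous_coeffIntegrand (p : ℕ) : Continuous (coeffIntegrand p) :=
  have hsphere := Metric.sphere_subset_closedBall (x := (0 : ℂ)) (ε := 1)
  continuous_comp_circleMap (continuousOn_id.mul (((continuousOn_ahatSaddle.mono hsphere).mul
    (isDiskParameter_uSaddle.continuousOn_deriv.mono hsphere)).div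
      ((isDiskParameter_uSaddle.continuousOn.mono hsphere).pow _)
      fun _ hζ => pow_ne_zero _ (isDiskParameter_uSaddle.ne_zero_of_mem_sphere hζ)))

lemma HasUhatExpansion.coeff_mul_pow_eq_integral (hA : HasUhatExpansion a Ahat) {p : ℕ}
    (hp : p ≠ 0) : a p * uc ^ p = 1 / π * (∫ φ in (0 : ℝ)..π, coeffIntegrand p φ).re := by
  have hcoeff := isDiskParameter_uSaddle.circleIntegral_eq_coeff continuousOn_ahatSaddle
    differentiableOn_ahatSaddle hA.eventually_hasSum_ahatSaddle p
  rw [circleIntegral_eq_two_mul_I_mul_re (isDiskParameter_uSaddle.circleIntegrable_mul_div_pow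
    continuousOn_ahatSaddle _), if_neg hp, sub_zero] at hcoeff
  · have hreal : (((∫ φ in (0 : ℝ)..π, coeffIntegrand p φ).re : ℝ) : ℂ) =
        ((π * (a p * uc ^ p) : ℝ) : ℂ) := by
      refine mul_left_cancel₀ (mul_ne_zero two_ne_zero Complex.I_ne_zero) ?_
      simp only [coeffIntegrand]
      rw [hcoeff]
      push_cast
      ring
    rw [Complex.ofReal_injective hreal, one_div_mul_eq_div, mul_div_cancel_left₀ _ Real.pi_ne_zero]
  · intro ζ hζ
    have hζ' := Metric.sphere_subset_closedBall (abs_one (α := ℝ) ▸ hζ)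
    rw [ahatSaddle_conj hζ', uSaddle_conj hζ', duSaddle_conj hζ', map_div₀, map_mul, map_pow]

end CoefficientIntegral

section CoefficientAsymptotics

lemma normSq_one_sub_circleMap (φ : ℝ) : ‖1 - circleMap 0 1 φ‖ ^ 2 = 2 - 2 * Real.cos φ := by
  rw [Complex.sq_norm, Complex.normSq_apply]
  simp only [circleMap_zero, Complex.ofReal_one, one_mul, Complex.sub_re, Complex.sub_im,
    Complex.exp_ofReal_mul_I_re, Complex.exp_ofReal_mul_I_im, Complex.one_re, Complex.one_im]
  linear_combination Real.sin_sq_add_cos_sq φ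

lemma norm_one_sub_circleMap_le {φ : ℝ} (hφ : 0 ≤ φ) : ‖1 - circleMap 0 1 φ‖ ≤ φ := by
  rw [← sq_le_sq₀ (norm_nonneg _) hφ, normSq_one_sub_circleMap]
  linarith [Real.one_sub_sq_div_two_le_cos (x := φ)]

lemma exp_div_three_le_one_add {u : ℝ} (hu : 0 ≤ u) (hu2 : u ≤ 2) :
    Real.exp (u / 3) ≤ 1 + u := by
  refine (Real.exp_bound_div_one_sub_of_interval (by positivity) (by linarith)).trans ?_
  rw [div_le_iff₀ (by linarith)]
  nlinarith

lemma exp_le_norm_uSaddle_circleMap {φ : ℝ} (hφ : φ ∈ Set.Ioc 0 π) :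
    Real.exp (1 / 54 * φ ^ 2) ≤ ‖uSaddle (circleMap 0 1 φ)‖ := by
  have hpi_sq : π ^ 2 < 10 := by nlinarith [Real.pi_lt_d2, Real.pi_pos]
  have hcos := Real.cos_le_one_sub_mul_cos_sq (x := φ) (by rw [abs_of_pos hφ.1]; exact hφ.2)
  have hcoeff : 1 / 5 ≤ 2 / π ^ 2 := by
    rw [div_le_div_iff₀ (by norm_num) (by positivity)]
    linarith
  have hlower := one_add_sq_le_normSq_uSaddle (circleMap_one_mem_sphere φ)
  rw [normSq_one_sub_circleMap] at hlower
  have hφ_sq : φ ^ 2 ≤ π ^ 2 := pow_le_pow_left₀ hφ.1.le hφ.2 2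
  rw [← sq_le_sq₀ (Real.exp_pos _).le (norm_nonneg _), ← Real.exp_nat_mul]
  calc Real.exp ((2 : ℕ) * (1 / 54 * φ ^ 2))
    _ = Real.exp (φ ^ 2 / 9 / 3) := by
      congr 1
      push_cast
      ring
    _ ≤ 1 + φ ^ 2 / 9 := exp_div_three_le_one_add (by positivity) (by linarith)
    _ ≤ ‖uSaddle (circleMap 0 1 φ)‖ ^ 2 := by
      nlinarith [mul_le_mul_of_nonneg_right hcoeff (sq_nonneg φ), sq_nonneg φ]

lemma tendsto_one_sub_circleMap_div :
    Tendsto (fun φ : ℝ => (1 - circleMap 0 1 φ) / φ) (𝓝[>] 0) (𝓝 (-Complex.I)) := by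
  have hslope := (hasDerivAt_circleMap 0 1 0).tendsto_slope_zero_right.neg
  rw [circleMap_zero, Complex.ofReal_zero, zero_mul, Complex.exp_zero, Complex.ofReal_one,
    mul_one, one_mul] at hslope
  refine hslope.congr fun φ => ?_
  rw [zero_add, Complex.real_smul, Complex.ofReal_inv]
  ring

lemma tendsto_cbrtSq_one_sub_circleMap_div :
    Tendsto (fun φ : ℝ => cbrtSq (1 - circleMap 0 1 φ) / (φ ^ (2 / 3 : ℝ) : ℝ)) (𝓝[>] 0)
      (𝓝 (cbrtSq (-Complex.I))) := by
  have hcomp := (continuousAt_cbrtSq (s := -Complex.I) (by simp)).tendsto.comp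
    tendsto_one_sub_circleMap_div
  refine hcomp.congr' ?_
  filter_upwards [self_mem_nhdsWithin] with φ hφ
  have hscale := cbrtSq_ofReal_mul (Set.mem_Ioi.1 hφ) ((1 - circleMap 0 1 φ) / φ)
  rw [mul_div_cancel₀ _ (Complex.ofReal_ne_zero.2 (Set.mem_Ioi.1 hφ).ne')] at hscale
  rw [hscale, mul_div_cancel_left₀ _
    (Complex.ofReal_ne_zero.2 (Real.rpow_pos_of_pos (Set.mem_Ioi.1 hφ) _).ne'), Function.comp_apply]

lemma tendsto_comp_circleMap {f : ℂ → ℂ} (hf : ContinuousOn f (Metric.sphere 0 1)) :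
    Tendsto (fun φ : ℝ => f (circleMap 0 1 φ)) (𝓝[>] 0) (𝓝 (f 1)) := by
  have hlim := ((continuous_comp_circleMap hf).tendsto 0).mono_left
    (nhdsWithin_le_nhds (s := Set.Ioi 0))
  rwa [circleMap_zero, Complex.ofReal_zero, zero_mul, Complex.exp_zero, Complex.ofReal_one,
    mul_one] at hlim

lemma uSaddle_sub_one (ζ : ℂ) :
    uSaddle ζ - 1 = -(2 / 3 + 1 / 3 * cbrtSq (1 - ζ)) * (1 - ζ) ^ 2 := by
  rw [uSaddle]
  ring

lemma continuousOn_sphere_cbrtSq_one_sub :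
    ContinuousOn (fun ζ => cbrtSq (1 - ζ)) (Metric.sphere 0 1) :=
  continuousOn_cbrtSq_one_sub.mono Metric.sphere_subset_closedBall

lemma tendsto_uSaddle_circleMap_sub_one_div :
    Tendsto (fun φ : ℝ => (uSaddle (circleMap 0 1 φ) - 1) / (φ ^ 2 : ℝ)) (𝓝[>] 0)
      (𝓝 ((2 / 3 : ℝ) : ℂ)) := by
  have hq := (tendsto_comp_circleMap continuousOn_sphere_cbrtSq_one_sub).const_mul (1 / 3)
  rw [sub_self, cbrtSq_zero, mul_zero] at hq
  have hlim := (hq.const_add (2 / 3)).neg.mul (tendsto_one_sub_circleMap_div.pow 2)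
  rw [neg_sq, Complex.I_sq, add_zero, neg_mul_neg, mul_one] at hlim
  push_cast
  refine hlim.congr fun φ => ?_
  rw [uSaddle_sub_one, div_pow, mul_div_assoc]

lemma tendsto_integral_saddle {E : ℂ → ℂ} (hE : ContinuousOn E (Metric.sphere 0 1)) (j : ℕ) :
    Tendsto (fun p : ℕ => (((p : ℝ) ^ ((j + 2 / 3 + 1) / 2 : ℝ) : ℝ) : ℂ) * ∫ φ in (0 : ℝ)..π,
      E (circleMap 0 1 φ) * (1 - circleMap 0 1 φ) ^ j * cbrtSq (1 - circleMap 0 1 φ) /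
        uSaddle (circleMap 0 1 φ) ^ (p + 1)) atTop
      (𝓝 (E 1 * (-Complex.I) ^ j * cbrtSq (-Complex.I) *
        (∫ θ in Set.Ioi (0 : ℝ), θ ^ (j + 2 / 3 : ℝ) * Real.exp (-(2 / 3) * θ ^ 2) : ℝ))) := by
  obtain ⟨C, hC⟩ := (isCompact_sphere (0 : ℂ) 1).exists_bound_of_continuousOn hE
  have hEC (φ : ℝ) := hC _ (circleMap_one_mem_sphere φ)
  have hC0 : 0 ≤ C := (norm_nonneg _).trans (hEC 0)
  have hE_circle := continuous_comp_circleMap hE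
  have hq_circle := continuous_comp_circleMap continuousOn_sphere_cbrtSq_one_sub
  have hu_circle := continuous_comp_circleMap
    (isDiskParameter_uSaddle.continuousOn.mono Metric.sphere_subset_closedBall)
  refine tendsto_integral_div_pow (C := C) (c := 1 / 54) (by linarith [j.cast_nonneg (α := ℝ)])
    Real.pi_pos (by norm_num)
    ((hE_circle.mul ((continuous_const.sub (continuous_circleMap 0 1)).pow j)).mul
      hq_circle).continuousOn
    hu_circle.continuousOn (fun φ hφ => ?_)
    (fun φ hφ => exp_le_norm_uSaddle_circleMap hφ) ?_ tendsto_uSaddle_circleMap_sub_one_div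
  · have hle := norm_one_sub_circleMap_le hφ.1.le
    rw [norm_mul, norm_mul, norm_pow, norm_cbrtSq, mul_assoc, Real.rpow_add hφ.1, Real.rpow_natCast]
    gcongr
    · exact hEC φ
    · exact pow_nonneg hφ.1.le j
  · refine ((tendsto_comp_circleMap hE).mul (tendsto_one_sub_circleMap_div.pow j)).mul
      tendsto_cbrtSq_one_sub_circleMap_div |>.congr' ?_
    filter_upwards [self_mem_nhdsWithin] with φ hφ
    rw [Real.rpow_add hφ, Real.rpow_natCast, Complex.ofReal_mul, Complex.ofReal_pow, div_pow]
    ring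

lemma re_I_mul_cbrtSq_neg_I : (Complex.I * cbrtSq (-Complex.I)).re = √3 / 2 := by
  rw [cbrtSq_neg_I, Complex.I_mul_re, Complex.exp_ofReal_mul_I_im, Real.sin_neg,
    Real.sin_pi_div_three, neg_neg]

lemma tendsto_re_integral_saddle {E : ℂ → ℂ} (hE : ContinuousOn E (Metric.sphere 0 1)) {j : ℕ}
    {y : ℝ} (hy : E 1 * (-Complex.I) ^ j = y * Complex.I) :
    Tendsto (fun p : ℕ => (p : ℝ) ^ ((j + 2 / 3 + 1) / 2 : ℝ) * (∫ φ in (0 : ℝ)..π,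
      E (circleMap 0 1 φ) * (1 - circleMap 0 1 φ) ^ j * cbrtSq (1 - circleMap 0 1 φ) /
        uSaddle (circleMap 0 1 φ) ^ (p + 1)).re) atTop
      (𝓝 (y * (√3 / 2) *
        ∫ θ in Set.Ioi (0 : ℝ), θ ^ (j + 2 / 3 : ℝ) * Real.exp (-(2 / 3) * θ ^ 2))) := by
  have hlim := (Complex.continuous_re.tendsto _).comp (tendsto_integral_saddle hE j)
  rw [hy, Complex.re_mul_ofReal, mul_assoc, Complex.re_ofReal_mul, re_I_mul_cbrtSq_neg_I] at hlim
  exact hlim.congr fun p => Complex.re_ofReal_mul _ _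

variable {k κ : ℝ}

lemma integral_rpow_mul_exp_neg_mul_sq (hk : -1 < k) (hκ : 0 < κ) :
    ∫ θ in Set.Ioi (0 : ℝ), θ ^ k * Real.exp (-κ * θ ^ 2) =
      κ ^ (-(k + 1) / 2) * (1 / 2) * Real.Gamma ((k + 1) / 2) := by
  rw [← integral_rpow_mul_exp_neg_mul_rpow two_pos hk hκ]
  simp only [Real.rpow_two]

lemma integral_rpow_mul_exp_neg_mul_sq_pos (hk : -1 < k) (hκ : 0 < κ) :
    0 < ∫ θ in Set.Ioi (0 : ℝ), θ ^ k * Real.exp (-κ * θ ^ 2) := by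
  rw [integral_rpow_mul_exp_neg_mul_sq hk hκ]
  have := Real.Gamma_pos_of_pos (by linarith : 0 < (k + 1) / 2)
  positivity

lemma integral_rpow_add_two_mul_exp_neg_mul_sq (hk : -1 < k) (hκ : 0 < κ) :
    ∫ θ in Set.Ioi (0 : ℝ), θ ^ (k + 2) * Real.exp (-κ * θ ^ 2) =
      (k + 1) / (2 * κ) * ∫ θ in Set.Ioi (0 : ℝ), θ ^ k * Real.exp (-κ * θ ^ 2) := by
  rw [integral_rpow_mul_exp_neg_mul_sq (by linarith) hκ, integral_rpow_mul_exp_neg_mul_sq hk hκ,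
    show (k + 2 + 1) / 2 = (k + 1) / 2 + 1 by ring,
    show -(k + 2 + 1) / 2 = -(k + 1) / 2 - 1 by ring, Real.Gamma_add_one (by linarith),
    Real.rpow_sub_one hκ.ne']
  field_simp

/-- The part of `ζ * ahatSaddle ζ * duSaddle ζ` that does not vanish at `ζ = 1`. -/
noncomputable def saddleAmplitude (ζ : ℂ) : ℂ :=
  ζ * ahatFactor (cbrtSq (1 - ζ)) * (4 / 3 + 8 / 9 * cbrtSq (1 - ζ))

lemma continuousOn_saddleAmplitude : ContinuousOn saddleAmplitude (Metric.sphere 0 1) :=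
  (continuousOn_id.mul (continuousOn_ahatFactor_cbrtSq.mono Metric.sphere_subset_closedBall)).mul
    (continuousOn_const.add (continuousOn_const.mul continuousOn_sphere_cbrtSq_one_sub))

lemma saddleAmplitude_one : saddleAmplitude 1 = -(4 / 5 * (3 / 2) ^ (7 / 3 : ℝ) : ℝ) := by
  rw [saddleAmplitude, sub_self, cbrtSq_zero, ahatFactor]
  push_cast
  ring

/-- The analogue of `saddleAmplitude` for the differences of consecutive coefficient integrands. -/
noncomputable def saddleAmplitudeSub (ζ : ℂ) : ℂ :=
  saddleAmplitude ζ * -(2 / 3 + 1 / 3 * cbrtSq (1 - ζ)) / uSaddle ζ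

lemma continuousOn_saddleAmplitudeSub : ContinuousOn saddleAmplitudeSub (Metric.sphere 0 1) := by
  have hA := continuousOn_saddleAmplitude
  have hq := continuousOn_sphere_cbrtSq_one_sub
  exact ContinuousOn.div (by fun_prop)
    (isDiskParameter_uSaddle.continuousOn.mono Metric.sphere_subset_closedBall)
    fun _ => isDiskParameter_uSaddle.ne_zero_of_mem_sphere

lemma saddleAmplitudeSub_one : saddleAmplitudeSub 1 = (8 / 15 * (3 / 2) ^ (7 / 3 : ℝ) : ℝ) := by
  rw [saddleAmplitudeSub, saddleAmplitude_one, uSaddle, sub_self, cbrtSq_zero]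
  push_cast
  ring

lemma coeffIntegrand_eq (p : ℕ) (φ : ℝ) :
    coeffIntegrand p φ = saddleAmplitude (circleMap 0 1 φ) * (1 - circleMap 0 1 φ) ^ 1 *
      cbrtSq (1 - circleMap 0 1 φ) / uSaddle (circleMap 0 1 φ) ^ (p + 1) := by
  rw [coeffIntegrand, saddleAmplitude, ahatSaddle, duSaddle]
  ring

lemma coeffIntegrand_sub_succ (p : ℕ) (φ : ℝ) :
    coeffIntegrand p φ - coeffIntegrand (p + 1) φ = saddleAmplitudeSub (circleMap 0 1 φ) *
      (1 - circleMap 0 1 φ) ^ 3 * cbrtSq (1 - circleMap 0 1 φ) /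
        uSaddle (circleMap 0 1 φ) ^ (p + 1) := by
  have hne := isDiskParameter_uSaddle.ne_zero_of_mem_sphere (circleMap_one_mem_sphere φ)
  have hsub := uSaddle_sub_one (circleMap 0 1 φ)
  rw [coeffIntegrand_eq, coeffIntegrand_eq, saddleAmplitudeSub, pow_succ _ (p + 1)]
  generalize uSaddle (circleMap 0 1 φ) = u at hne hsub ⊢
  field_simp
  linear_combination 3 * saddleAmplitude (circleMap 0 1 φ) * (1 - circleMap 0 1 φ) *
    cbrtSq (1 - circleMap 0 1 φ) * hsub

/-- The limit of `p ^ (4 / 3) * (a p * u_c ^ p)`. -/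
noncomputable def coeffConst : ℝ :=
  1 / π * (4 / 5 * (3 / 2) ^ (7 / 3 : ℝ) * (√3 / 2) *
    ∫ θ in Set.Ioi (0 : ℝ), θ ^ (5 / 3 : ℝ) * Real.exp (-(2 / 3) * θ ^ 2))

lemma coeffConst_pos : 0 < coeffConst := by
  have := integral_rpow_mul_exp_neg_mul_sq_pos (k := 5 / 3) (κ := 2 / 3) (by norm_num) (by norm_num)
  unfold coeffConst
  positivity

namespace HasUhatExpansion

variable {a : ℕ → ℝ} (hA : HasUhatExpansion a Ahat)
include hA

lemma tendsto_rpow_mul_coeff :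
    Tendsto (fun p : ℕ => (p : ℝ) ^ (4 / 3 : ℝ) * (a p * uc ^ p)) atTop (𝓝 coeffConst) := by
  have hlim := (tendsto_re_integral_saddle (j := 1) (y := 4 / 5 * (3 / 2) ^ (7 / 3 : ℝ))
    continuousOn_saddleAmplitude
    (by rw [saddleAmplitude_one, pow_one, neg_mul_neg])).const_mul (1 / π)
  norm_num only [Nat.cast_one] at hlim
  norm_num only [coeffConst]
  refine hlim.congr' ((eventually_ne_atTop 0).mono fun p hp => ?_)
  simp only [hA.coeff_mul_pow_eq_integral hp, coeffIntegrand_eq]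
  ring

lemma tendsto_rpow_mul_coeff_sub_succ :
    Tendsto (fun p : ℕ => (p : ℝ) ^ (7 / 3 : ℝ) * (a p * uc ^ p - a (p + 1) * uc ^ (p + 1))) atTop
      (𝓝 (4 / 3 * coeffConst)) := by
  have hlim := (tendsto_re_integral_saddle (j := 3) (y := 8 / 15 * (3 / 2) ^ (7 / 3 : ℝ))
    continuousOn_saddleAmplitudeSub (by
      rw [saddleAmplitudeSub_one, pow_succ _ 2, neg_sq, Complex.I_sq, neg_one_mul,
        neg_neg])).const_mul (1 / π)
  have hmoment := integral_rpow_add_two_mul_exp_neg_mul_sq (k := 5 / 3) (κ := 2 / 3)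
    (by norm_num) (by norm_num)
  norm_num only [Nat.cast_ofNat] at hlim hmoment
  rw [hmoment, show 1 / π * _ = 4 / 3 * coeffConst by norm_num only [coeffConst]; ring] at hlim
  refine hlim.congr' ((eventually_ne_atTop 0).mono fun p hp => ?_)
  have hint (n : ℕ) := (continuous_coeffIntegrand n).intervalIntegrable (μ := volume) 0 π
  simp only [hA.coeff_mul_pow_eq_integral hp, hA.coeff_mul_pow_eq_integral p.succ_ne_zero,
    ← coeffIntegrand_sub_succ, intervalIntegral.integral_sub (hint p) (hint (p + 1)),
    Complex.sub_re]
  ring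

theorem smoothlyVarying (hpos : ∀ p, 0 < a p) :
    SmoothlyVarying (fun p => a p * uc ^ p) (4 / 3) coeffConst where
  pos p := mul_pos (hpos p) (pow_pos uc_pos p)
  const_pos := coeffConst_pos
  tendsto_rpow_mul := hA.tendsto_rpow_mul_coeff
  tendsto_rpow_mul_sub := by
    norm_num only
    exact hA.tendsto_rpow_mul_coeff_sub_succ

end HasUhatExpansion

end CoefficientAsymptotics

section StepLaw

/-- The law of `c - X`, where `X` is a natural number with law `f`. -/
def reflect (c : ℤ) (f : ℕ → ℝ) (x : ℤ) : ℝ :=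
  if x ≤ c then f (c - x).toNat else 0

variable {c : ℤ} {f : ℕ → ℝ} {s m : ℝ}

lemma reflect_sub_natCast (c : ℤ) (f : ℕ → ℝ) (j : ℕ) : reflect c f (c - j) = f j := by
  rw [reflect, if_pos (by omega), sub_sub_cancel, Int.toNat_natCast]

lemma reflect_of_lt {x : ℤ} (h : c < x) : reflect c f x = 0 :=
  if_neg h.not_ge

lemma reflect_nonneg (hf : ∀ j, 0 ≤ f j) (x : ℤ) : 0 ≤ reflect c f x := by
  rw [reflect]
  split_ifs
  exacts [hf _, le_rfl]

lemma hasSum_mul_reflect {g : ℤ → ℝ} (h : HasSum (fun j : ℕ => g (c - j) * f j) s) :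
    HasSum (fun x => g x * reflect c f x) s := by
  have hinj : Function.Injective fun j : ℕ => c - j := fun i j hij => by
    simpa only [sub_right_inj, Nat.cast_inj] using hij
  refine (hinj.hasSum_iff fun x hx => ?_).1
    (h.congr_fun fun j => congrArg (g (c - j) * ·) (reflect_sub_natCast c f j))
  rw [reflect_of_lt (not_le.1 fun hxc => hx ⟨(c - x).toNat, by simp only; omega⟩), mul_zero]

lemma hasSum_reflect (hf : HasSum f s) : HasSum (reflect c f) s := by
  simpa only [one_mul] using hasSum_mul_reflect (c := c) (g := fun _ => 1)
    (by simpa only [one_mul] using hf)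

lemma hasSum_id_mul_reflect (hf : HasSum f s) (hm : HasSum (fun j => j * f j) m) :
    HasSum (fun x => x * reflect c f x) (c * s - m) :=
  hasSum_mul_reflect (((hf.mul_left (c : ℝ)).sub hm).congr_fun fun j => by push_cast; ring)

lemma pow_div_pow_mul_reflect {u : ℝ} (hu : u ≠ 0) (c : ℕ) (f : ℕ → ℝ) (p q : ℕ) :
    u ^ q / u ^ p * reflect c (fun j => f j * u ^ j) (q - p)
      = u ^ c * if q ≤ p + c then f (p + c - q) else 0 := by
  rcases le_or_gt q (p + c) with h | h
  · obtain ⟨j, hj⟩ := Nat.exists_eq_add_of_le h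
    rw [show (q : ℤ) - p = c - j by omega, reflect_sub_natCast, if_pos h, hj,
      Nat.add_sub_cancel_left, div_mul_eq_mul_div, div_eq_iff (pow_ne_zero p hu)]
    linear_combination -f j * congrArg (u ^ ·) hj
  · rw [reflect_of_lt (by omega), if_neg h.not_ge, mul_zero, mul_zero]

lemma pow_div_pow_mul_ite {u : ℝ} (hu : u ≠ 0) (c : ℕ) (s : ℝ) (p q : ℕ) :
    u ^ q / u ^ p * (if (q : ℤ) - p = c then s else 0) = u ^ c * if q = p + c then s else 0 := by
  by_cases h : q = p + c
  · rw [if_pos (by omega), if_pos h, h, pow_add, mul_div_cancel_left₀ _ (pow_ne_zero p hu)]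
  · rw [if_neg (by omega), if_neg h, mul_zero, mul_zero]

/-- The step distribution of the random walk on `ℤ` of which the chain is, up to its last steps,
an `h`-transform. -/
noncomputable def stepLaw (z : ℕ → ℕ → ℝ) (x : ℤ) : ℝ :=
  reflect 2 (fun j => tc / uc * z j 0 * uc ^ j) x + reflect 0 (fun j => nuc * tc * z j 1 * uc ^ j) x
    + (if x = 1 then tc * ∑' k, z 1 k * uc ^ k else 0)
    + (if x = 0 then nuc * tc / uc * ∑' k, z 0 k * uc ^ k else 0)

variable {z : ℕ → ℕ → ℝ}

lemma stepLaw_nonneg (hz : ∀ p q, 0 ≤ z p q) (x : ℤ) : 0 ≤ stepLaw z x := by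
  have htc := tc_pos
  have huc := uc_pos
  have hnuc := nuc_pos
  have hrow : ∀ p, 0 ≤ ∑' k, z p k * uc ^ k := fun p =>
    tsum_nonneg fun k => mul_nonneg (hz p k) (by positivity)
  have hdown := reflect_nonneg (c := 2) (f := fun j => tc / uc * z j 0 * uc ^ j)
    (fun j => by have := hz j 0; positivity) x
  have hdown' := reflect_nonneg (c := 0) (f := fun j => nuc * tc * z j 1 * uc ^ j)
    (fun j => by have := hz j 1; positivity) x
  rw [stepLaw]
  have := hrow 0
  have := hrow 1
  positivity

variable (hz : ∀ p q, 0 ≤ z p q) (hc0 : HasUhatExpansion (fun p => z p 0) Z0hat)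
  (hc1 : HasUhatExpansion (fun p => z p 1) Z1hat)
  (hr1 : HasUhatExpansion (z 1) Z1hat)
include hz hc0 hc1 hr1

theorem hasSum_stepLaw (hr0 : HasUhatExpansion (z 0) Z0hat) : HasSum (stepLaw z) 1 := by
  obtain ⟨hc0, -⟩ := hc0.hasSum_moments_Z0hat fun p => hz p 0
  obtain ⟨hc1, -⟩ := hc1.hasSum_moments_Z1hat fun p => hz p 1
  obtain ⟨hr0, -⟩ := hr0.hasSum_moments_Z0hat (hz 0)
  obtain ⟨hr1, -⟩ := hr1.hasSum_moments_Z1hat (hz 1)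
  have hsum := (((hasSum_reflect (c := 2) (hc0.mul_left (tc / uc))).add
    (hasSum_reflect (c := 0) (hc1.mul_left (nuc * tc)))).add
    (hasSum_ite_eq (1 : ℤ) (tc * ∑' k, z 1 k * uc ^ k))).add
    (hasSum_ite_eq (0 : ℤ) (nuc * tc / uc * ∑' k, z 0 k * uc ^ k))
  convert hsum using 1
  · ext x
    simp only [stepLaw, mul_assoc]
  · rw [hr0.tsum_eq, hr1.tsum_eq, tc_eq, nuc]
    have huc := uc_pos.ne'
    trans (1 + √7) * (7 - √7) * √7 / 42
    · linear_combination (√7 - 6) / 42 * sq_sqrt_seven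
    · field_simp
      ring

theorem hasSum_id_mul_stepLaw : HasSum (fun x : ℤ => x * stepLaw z x) (1 / (4 * √7)) := by
  obtain ⟨hc0, hc0'⟩ := hc0.hasSum_moments_Z0hat fun p => hz p 0
  obtain ⟨hc1, hc1'⟩ := hc1.hasSum_moments_Z1hat fun p => hz p 1
  obtain ⟨hr1, -⟩ := hr1.hasSum_moments_Z1hat (hz 1)
  have hsum := ((hasSum_id_mul_reflect (c := 2) (hc0.mul_left (tc / uc))
    ((hc0'.mul_left (tc / uc)).congr_fun fun j => mul_left_comm _ _ _)).add
    (hasSum_id_mul_reflect (c := 0) (hc1.mul_left (nuc * tc))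
      ((hc1'.mul_left (nuc * tc)).congr_fun fun j => mul_left_comm _ _ _))).add
    (hasSum_ite_eq (1 : ℤ) (tc * ∑' k, z 1 k * uc ^ k))
  convert hsum using 1
  · ext x
    by_cases hx1 : x = 1
    · simp [hx1, stepLaw, mul_assoc]
    · by_cases hx0 : x = 0
      · simp [hx0]
      · simp only [stepLaw, if_neg hx0, if_neg hx1, mul_assoc]
        ring
  · rw [hr1.tsum_eq, tc_eq, nuc]
    have huc := uc_pos.ne'
    trans (7 - √7) * (1 + √7) / 168
    · rw [div_eq_div_iff (by positivity) (by norm_num)]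
      linear_combination (-24 + 4 * √7) * sq_sqrt_seven
    · push_cast
      field_simp
      ring

end StepLaw

section Kernel

lemma sum_Icc_ite_eq_sub {M : Type*} [AddCommMonoid M] (p q : ℕ) (g : ℕ → M) :
    (∑ k ∈ Finset.Icc 1 p, if q = p - k then g k else 0) = if q < p then g (p - q) else 0 := by
  split_ifs with h
  · rw [Finset.sum_eq_single_of_mem (p - q) (Finset.mem_Icc.2 ⟨by omega, by omega⟩)
      fun k hk hne => if_neg (by have := Finset.mem_Icc.1 hk; omega), if_pos (by omega)]
  · exact Finset.sum_eq_zero fun k hk => if_neg (by have := Finset.mem_Icc.1 hk; omega)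

variable {z : ℕ → ℕ → ℝ} {a : ℕ → ℝ} {p q : ℕ}

/-- The transition probability of the chain from a state `p ≥ 1` to `q`. -/
noncomputable def stepKernel (z : ℕ → ℕ → ℝ) (a : ℕ → ℝ) (p q : ℕ) : ℝ :=
  (if q = p + 2 then tc * (a (p + 2) / a p) * uc else 0)
  + (if q = p + 1 then
      (∑' k : ℕ, tc * (a (p + 1) / a p) * z 1 k * uc ^ (k + 1))
        + tc * z 1 0 * (a (p + 1) / a p) * uc else 0)
  + (if q = p then
      nuc * tc / uc + (∑' k : ℕ, nuc * tc * z 0 (k + 1) * uc ^ k)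
        + nuc * tc * z 0 1 else 0)
  + (∑ k ∈ Finset.Icc 1 p, if q = p - k + 1 then
      tc * z (k + 1) 0 * (a (p - k + 1) / a p) * uc else 0)
  + (∑ k ∈ Finset.Icc 1 p, if q = p - k then
      nuc * tc * z k 1 * (a (p - k) / a p) else 0)
  + (if q = 1 then ∑' k : ℕ, tc * z (p + 1) (k + 1) * (a 1 / a p) * uc ^ (k + 2) else 0)
  + (if q = 0 then ∑' k : ℕ, nuc * tc * z p (k + 2) * (a 0 / a p) * uc ^ (k + 1) else 0)

lemma stepKernel_of_lt (h : p + 2 < q) : stepKernel z a p q = 0 := by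
  rw [stepKernel, if_neg (by omega), if_neg (by omega), if_neg (by omega),
    Finset.sum_eq_zero fun k hk => if_neg (by have := Finset.mem_Icc.1 hk; omega),
    Finset.sum_eq_zero fun k hk => if_neg (by have := Finset.mem_Icc.1 hk; omega),
    if_neg (by omega), if_neg (by omega)]
  simp only [add_zero]

lemma tsum_mul_pow_eq_add {c : ℕ → ℝ} {u : ℝ} (hc : Summable fun k => c k * u ^ k) :
    ∑' k, c k * u ^ k = c 0 + u * ∑' k, c (k + 1) * u ^ k := by
  rw [hc.tsum_eq_zero_add, pow_zero, mul_one, ← tsum_mul_left]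
  exact congrArg (c 0 + ·) (tsum_congr fun k => by ring)

lemma stepKernel_of_two_le (h00 : z 0 0 = 1) (hsum : Summable fun k => z 0 k * uc ^ k)
    (hp : a p ≠ 0) (hq : 2 ≤ q) :
    stepKernel z a p q = a q / a p *
      (tc * uc * (if q ≤ p + 2 then z (p + 2 - q) 0 else 0)
        + nuc * tc * (if q ≤ p then z (p - q) 1 else 0)
        + (if q = p + 1 then tc * uc * ∑' k, z 1 k * uc ^ k else 0)
        + (if q = p then nuc * tc / uc * ∑' k, z 0 k * uc ^ k else 0)) := by
  obtain ⟨r, rfl⟩ : ∃ r, q = r + 1 := ⟨q - 1, by omega⟩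
  have huc := uc_pos.ne'
  have hrow : ∑' k, tc * (a (p + 1) / a p) * z 1 k * uc ^ (k + 1)
      = a (p + 1) / a p * (tc * uc * ∑' k, z 1 k * uc ^ k) := by
    simp only [← tsum_mul_left]
    exact tsum_congr fun k => by ring
  have hrow' : ∑' k, nuc * tc * z 0 (k + 1) * uc ^ k
      = nuc * tc * ∑' k, z 0 (k + 1) * uc ^ k := by
    simp only [← tsum_mul_left, mul_assoc]
  rw [stepKernel, if_neg (by omega : r + 1 ≠ 1), if_neg (by omega : r + 1 ≠ 0)]
  simp only [sum_Icc_ite_eq_sub, add_left_inj, hrow, hrow', tsum_mul_pow_eq_add hsum, h00]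
  rcases lt_or_ge r p with h | h
  · have hsub : p - (p - r) = r := by omega
    have hshift : p - r + 1 = p + 2 - (r + 1) := by omega
    rcases (Nat.succ_le_of_lt h).eq_or_lt with rfl | h'
    · grind
    · have hsub' : p - (p - (r + 1)) = r + 1 := by omega
      grind
  · obtain ⟨d, rfl⟩ := Nat.exists_eq_add_of_le h
    rcases d with _ | _ | d
    · grind
    · grind
    · grind

theorem stepKernel_eq_ratio_mul_stepLaw (h00 : z 0 0 = 1) (hsum : Summable fun k => z 0 k * uc ^ k)
    (hp : a p ≠ 0) (hq : 2 ≤ q) :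
    stepKernel z a p q = a q * uc ^ q / (a p * uc ^ p) * stepLaw z (q - p) := by
  have huc := uc_pos.ne'
  have hdown := pow_div_pow_mul_reflect huc 2 (fun j => tc / uc * z j 0) p q
  have hdown' := pow_div_pow_mul_reflect huc 0 (fun j => nuc * tc * z j 1) p q
  have hatom := pow_div_pow_mul_ite huc 1 (tc * ∑' k, z 1 k * uc ^ k) p q
  have hatom' := pow_div_pow_mul_ite huc 0 (nuc * tc / uc * ∑' k, z 0 k * uc ^ k) p q
  simp only [Nat.cast_ofNat, Nat.cast_zero, Nat.cast_one, add_zero] at hdown hdown' hatom hatom'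
  calc stepKernel z a p q = a q / a p * (uc ^ q / uc ^ p * stepLaw z (q - p)) := by
        rw [stepKernel_of_two_le h00 hsum hp hq, stepLaw, mul_add (uc ^ q / uc ^ p),
          mul_add (uc ^ q / uc ^ p), mul_add (uc ^ q / uc ^ p), hdown, hdown', hatom, hatom']
        grind
    _ = _ := by ring

section Positivity

variable (hz : ∀ p q, 0 ≤ z p q) (ha : ∀ p, 0 < a p)
include hz ha

lemma stepKernel_nonneg (p q : ℕ) : 0 ≤ stepKernel z a p q := by
  have htc := tc_pos
  have huc := uc_pos
  have hnuc := nuc_pos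
  lift z to ℕ → ℕ → NNReal using hz
  lift a to ℕ → NNReal using fun p => (ha p).le
  rw [stepKernel]
  positivity

lemma stepKernel_succ_self_pos (hz11 : 0 < z 1 1) (p : ℕ) : 0 < stepKernel z a (p + 1) p := by
  have htc := tc_pos
  have huc := uc_pos
  have hnuc := nuc_pos
  have hratio : 0 < a p / a (p + 1) := div_pos (ha _) (ha _)
  lift z to ℕ → ℕ → NNReal using hz
  lift a to ℕ → NNReal using fun p => (ha p).le
  rw [stepKernel, sum_Icc_ite_eq_sub _ _ fun k =>
    nuc * tc * z k 1 * ((a (p + 1 - k) : ℝ) / a (p + 1)), if_pos p.lt_succ_self,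
    Nat.add_sub_cancel_left, Nat.add_sub_cancel]
  positivity

end Positivity

end Kernel

section Chain

variable {z : ℕ → ℕ → ℝ} {a : ℕ → ℝ} {K : ℕ → ℕ → ℝ}

section TransitionMatrix

variable (hz : ∀ p q, 0 ≤ z p q) (ha : ∀ p, 0 < a p)
  (hK0 : ∀ q, K 0 q = if q = 0 then 1 else 0) (hK : ∀ p, 1 ≤ p → ∀ q, K p q = stepKernel z a p q)
include hz ha hK0 hK

lemma transition_nonneg (p q : ℕ) : 0 ≤ K p q := by
  rcases p.eq_zero_or_pos with rfl | hp
  · rw [hK0]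
    positivity
  · rw [hK p hp]
    exact stepKernel_nonneg hz ha p q

lemma isTransformedWalk_transition (h00 : z 0 0 = 1) (h11 : 0 < z 1 1)
    (hsum : Summable fun k => z 0 k * uc ^ k) (hK1 : ∀ p, ∑' q, ENNReal.ofReal (K p q) = 1) :
    IsTransformedWalk K (fun p => a p * uc ^ p) (stepLaw z) 1 2 where
  nonneg := transition_nonneg hz ha hK0 hK
  tsum_ofReal_eq_one := hK1
  eq_zero_of_lt p q hpq := by
    rcases p.eq_zero_or_pos with rfl | hp
    · rw [hK0, if_neg (by omega)]
    · rw [hK p hp, stepKernel_of_lt hpq]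
  succ_self_pos p := by
    rw [hK _ p.succ_pos]
    exact stepKernel_succ_self_pos hz ha h11 p
  eq_ratio_mul p q hp hq := by
    rw [hK p hp.le, stepKernel_eq_ratio_mul_stepLaw h00 hsum (ha p).ne' hq]

end TransitionMatrix

lemma isChainLaw_ofReal {p : ℕ} {P : Measure (ℕ → ℕ)} (hK : ∀ p q, 0 ≤ K p q)
    (h : ∀ n : ℕ, ∀ s : ℕ → ℕ, P {ω | ∀ i ≤ n, ω i = s i} = ENNReal.ofReal
      ((if s 0 = p then 1 else 0) * ∏ i ∈ Finset.range n, K (s i) (s (i + 1)))) :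
    IsChainLaw (fun p q => ENNReal.ofReal (K p q)) p P := fun n s => by
  rw [h, ite_mul, one_mul, zero_mul, apply_ite ENNReal.ofReal, ENNReal.ofReal_zero,
    ENNReal.ofReal_prod_of_nonneg fun i _ => hK _ _]

end Chain

/-- for every `m ≥ 0` and `t > 0`, the hitting time
`T_m = inf{n : P_n ≤ m}` of the chain started from `p` satisfies
`ℙ_p(T_m > t·p) → (1 + μt)^{−4/3}` as `p → ∞`, where `μ = 1/(4√7)`. -/
theorem statement14
    (ρ : ℝ) (hρ : 0 < ρ)
    (z : ℕ → ℕ → ℝ) (hz_nonneg : ∀ p q, 0 ≤ z p q)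
    -- `z p 0` are the Taylor coefficients of `Z₀ = Ẑ₀ ∘ û⁻¹` at `0`
    (hz0 : ∀ H : ℂ, ‖H‖ < ρ →
      HasSum (fun p : ℕ => (z p 0 : ℂ) * uhat H ^ p) (Z0hat H))
    -- `z p q` are the Taylor coefficients at `(0,0)` of the solution `Z(u,v)` of the
    -- algebraic equation, expressed through the parametrization `u = û(H)`, `v = û(K)`
    (hZ : ∀ H K : ℂ, ‖H‖ < ρ → ‖K‖ < ρ → ∃ ZHK : ℂ,
      HasSum (fun pq : ℕ × ℕ => (z pq.1 pq.2 : ℂ) * uhat H ^ pq.1 * uhat K ^ pq.2) ZHK ∧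
      ((nuc : ℂ) * uhat K * uhat H - uhat H ^ 2
          - ((nuc : ℂ) ^ 2 - 1) * (tc : ℂ) * uhat K * (Z0hat H + uhat H * Z1hat K))
          * (ZHK - Z0hat K)
        = uhat H ^ 2 * (Z0hat K - Z0hat H)
          + ((nuc : ℂ) ^ 2 - 1) * uhat H * uhat K * (uhat H ^ 2 - (tc : ℂ) * Z0hat H * Z1hat K))
    (a : ℕ → ℝ) (ha_pos : ∀ p, 0 < a p)
    -- `a p` are the Taylor coefficients of `A = Â ∘ û⁻¹` at `0`
    (hA : ∀ H : ℂ, ‖H‖ < ρ →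
      HasSum (fun p : ℕ => (a p : ℂ) * uhat H ^ p) (Ahat H))
    -- the transition kernel of the Markov chain `(P_n)`; the state `0` is absorbing
    (K : ℕ → ℕ → ℝ)
    (hK0 : ∀ q : ℕ, K 0 q = if q = 0 then 1 else 0)
    (hK : ∀ p : ℕ, 1 ≤ p → ∀ q : ℕ, K p q =
      (if q = p + 2 then tc * (a (p + 2) / a p) * uc else 0)
      + (if q = p + 1 then
          (∑' k : ℕ, tc * (a (p + 1) / a p) * z 1 k * uc ^ (k + 1))
            + tc * z 1 0 * (a (p + 1) / a p) * uc else 0)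
      + (if q = p then
          nuc * tc / uc + (∑' k : ℕ, nuc * tc * z 0 (k + 1) * uc ^ k)
            + nuc * tc * z 0 1 else 0)
      + (∑ k ∈ Finset.Icc 1 p, if q = p - k + 1 then
          tc * z (k + 1) 0 * (a (p - k + 1) / a p) * uc else 0)
      + (∑ k ∈ Finset.Icc 1 p, if q = p - k then
          nuc * tc * z k 1 * (a (p - k) / a p) else 0)
      + (if q = 1 then ∑' k : ℕ, tc * z (p + 1) (k + 1) * (a 1 / a p) * uc ^ (k + 2) else 0)
      + (if q = 0 then ∑' k : ℕ, nuc * tc * z p (k + 2) * (a 0 / a p) * uc ^ (k + 1) else 0))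
    -- `Pm p` is the law of the trajectory of the chain started from `p`,
    -- determined by its finite-dimensional (cylinder) distributions
    (Pm : ℕ → MeasureTheory.Measure (ℕ → ℕ))
    (hprob : ∀ p, MeasureTheory.IsProbabilityMeasure (Pm p))
    (hchain : ∀ p n : ℕ, ∀ s : ℕ → ℕ,
      Pm p {ω : ℕ → ℕ | ∀ i ≤ n, ω i = s i}
        = ENNReal.ofReal ((if s 0 = p then 1 else 0)
            * ∏ i ∈ Finset.range n, K (s i) (s (i + 1))))
    :
    ∀ m : ℕ, ∀ t : ℝ, 0 < t →
      Filter.Tendsto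
        (fun p : ℕ => (Pm p {ω : ℕ → ℕ | ∀ n : ℕ, (n : ℝ) ≤ t * p → m < ω n}).toReal)
        Filter.atTop
        (nhds ((1 + (1 / (4 * Real.sqrt 7)) * t) ^ (-(4:ℝ)/3))) := by
  intro m t ht
  have hc0 : HasUhatExpansion (fun p => z p 0) Z0hat := hasUhatExpansion_of_norm_lt hρ hz0
  have hc1 := SolvesKernelEquation.hasUhatExpansion_column_one hZ hρ hc0
  have hr0 := SolvesKernelEquation.hasUhatExpansion_row_zero hZ hρ
  have hr1 := SolvesKernelEquation.hasUhatExpansion_row_one hZ hρ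
  have hlaw (p : ℕ) : IsChainLaw (fun p q => ENNReal.ofReal (K p q)) p (Pm p) :=
    isChainLaw_ofReal (transition_nonneg hz_nonneg ha_pos hK0 hK) (hchain p)
  have hwalk := isTransformedWalk_transition hz_nonneg ha_pos hK0 hK hc0.coeff_zero_eq_one
    hc1.coeff_one_pos (hr0.hasSum_moments_Z0hat (hz_nonneg 0)).1.summable fun p =>
      (hlaw p).tsum_eq_one
  have hα := (hasUhatExpansion_of_norm_lt hρ hA).smoothlyVarying ha_pos
  have hlim := hwalk.tendsto_survival hα (by norm_num) (stepLaw_nonneg hz_nonneg)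
    (hasSum_stepLaw hz_nonneg hc0 hc1 hr1 hr0) (by positivity)
    (hasSum_id_mul_stepLaw hz_nonneg hc0 hc1 hr1) m ht
  rw [neg_div]
  refine hlim.congr fun p => ?_
  rw [← (hlaw p).measure_forall_mem_eq_survival]
  simp only [Nat.le_floor_iff (by positivity : 0 ≤ t * p), Set.mem_Ioi]
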